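/- arXiv:1303.1917 — 9 statements merged into one kernel-verified Lean document; each statement's English description precedes it below -/
import Mathlib

section
/- Let m ≥ 2, let 1 ≤ k ≤ l with 2l ≤ m, and let M ∈ GL(m, ℂ) be a matrix satisfying A_i M = M A_i, B_i M = M B_i for all i with k ≤ i ≤ l, and C_j M = M C_j for all j with k ≤ j ≤ l − 1. Then there exists λ ∈ ℂ, λ ≠ 0, such that for all indices p, q ∈ {1, …, m}: if p or q lies in the interval [2k−1, 2l], then the (p,q) entry of M equals λ when p = q and equals 0 when p ≠ q. (Equivalently, M has the block form with middle block λ·I_{2(l−k+1)} occupying rows and columns 2k−1 through 2l, and zero off-diagonal blocks in those rows and columns.) -/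
/-- `Amat m i = diag(I_{2i-2}, V, I_{m-2i})` where `V = [[1,1],[0,1]]`
(indices `1 ≤ i`, `2i ≤ m`; the `V`-block occupies rows/columns `2i-2, 2i-1` in
0-based indexing). -/
def Amat (m i : ℕ) : Matrix (Fin m) (Fin m) ℂ :=
  Matrix.of fun p q =>
    if p = q then 1 else if (p : ℕ) = 2 * i - 2 ∧ (q : ℕ) = 2 * i - 1 then 1 else 0

/-- `Bmat m i = diag(I_{2i-2}, V̂, I_{m-2i})` where `V̂ = [[1,0],[-1,1]]`. -/
def Bmat (m i : ℕ) : Matrix (Fin m) (Fin m) ℂ :=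
  Matrix.of fun p q =>
    if p = q then 1 else if (p : ℕ) = 2 * i - 1 ∧ (q : ℕ) = 2 * i - 2 then -1 else 0

/-- `Cmat m j = diag(I_{2j-2}, W, I_{m-2-2j})` where
`W = [[1,1,0,-1],[0,1,0,0],[0,-1,1,1],[0,0,0,1]]` (the `W`-block occupies
rows/columns `2j-2, …, 2j+1` in 0-based indexing). -/
def Cmat (m j : ℕ) : Matrix (Fin m) (Fin m) ℂ :=
  Matrix.of fun p q =>
    if p = q then 1 else
    if (p : ℕ) = 2 * j - 2 ∧ (q : ℕ) = 2 * j - 1 then 1 else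
    if (p : ℕ) = 2 * j - 2 ∧ (q : ℕ) = 2 * j + 1 then -1 else
    if (p : ℕ) = 2 * j ∧ (q : ℕ) = 2 * j - 1 then -1 else
    if (p : ℕ) = 2 * j ∧ (q : ℕ) = 2 * j + 1 then 1 else 0

theorem Amat_eq (m i : ℕ) (hi : 1 ≤ i) (h : 2 * i ≤ m) :
    Amat m i = 1 + Matrix.single (⟨2 * i - 2, by omega⟩ : Fin m) ⟨2 * i - 1, by omega⟩ (1 : ℂ) := by
  ext p q
  simp only [Amat, Matrix.of_apply, Matrix.add_apply, Matrix.one_apply, Matrix.single_apply,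
    Fin.ext_iff]
  grind

theorem Bmat_eq (m i : ℕ) (hi : 1 ≤ i) (h : 2 * i ≤ m) :
    Bmat m i = 1 - Matrix.single (⟨2 * i - 1, by omega⟩ : Fin m) ⟨2 * i - 2, by omega⟩ (1 : ℂ) := by
  ext p q
  simp only [Bmat, Matrix.of_apply, Matrix.sub_apply, Matrix.one_apply, Matrix.single_apply,
    Fin.ext_iff]
  grind

theorem Cmat_eq (m j : ℕ) (hi : 1 ≤ j) (h : 2 * j + 2 ≤ m) :
    Cmat m j = 1 + Matrix.single (⟨2 * j - 2, by omega⟩ : Fin m) ⟨2 * j - 1, by omega⟩ (1 : ℂ)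
      - Matrix.single (⟨2 * j - 2, by omega⟩ : Fin m) ⟨2 * j + 1, by omega⟩ (1 : ℂ)
      - Matrix.single (⟨2 * j, by omega⟩ : Fin m) ⟨2 * j - 1, by omega⟩ (1 : ℂ)
      + Matrix.single (⟨2 * j, by omega⟩ : Fin m) ⟨2 * j + 1, by omega⟩ (1 : ℂ) := by
  ext p q
  simp only [Cmat, Matrix.of_apply, Matrix.sub_apply, Matrix.add_apply, Matrix.one_apply,
    Matrix.single_apply, Fin.ext_iff]
  grind

/-- Lemma 2.1: a matrix commuting with `A_i, B_i` (`k ≤ i ≤ l`) and `C_j`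
(`k ≤ j ≤ l-1`) has the block form with middle block `λ·I` occupying rows and
columns `2k-1, …, 2l` (1-indexed, i.e. `2k-2, …, 2l-1` in 0-based indexing) and
zero off-diagonal entries in those rows and columns. -/
theorem stmt_0 (m k l : ℕ) (hm : 2 ≤ m) (hk : 1 ≤ k) (hkl : k ≤ l) (hlm : 2 * l ≤ m)
    (M : Matrix (Fin m) (Fin m) ℂ) (hM : IsUnit M)
    (hA : ∀ i, k ≤ i → i ≤ l → Amat m i * M = M * Amat m i)
    (hB : ∀ i, k ≤ i → i ≤ l → Bmat m i * M = M * Bmat m i)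
    (hC : ∀ j, k ≤ j → j ≤ l - 1 → Cmat m j * M = M * Cmat m j) :
    ∃ lam : ℂ, lam ≠ 0 ∧ ∀ p q : Fin m,
      ((2 * k - 2 ≤ (p : ℕ) ∧ (p : ℕ) ≤ 2 * l - 1) ∨
        (2 * k - 2 ≤ (q : ℕ) ∧ (q : ℕ) ≤ 2 * l - 1)) →
      M p q = if p = q then lam else 0 := by
  have cA : ∀ i (h1 : k ≤ i) (h2 : i ≤ l),
      Commute (Matrix.single (⟨2 * i - 2, by omega⟩ : Fin m) ⟨2 * i - 1, by omega⟩ (1 : ℂ)) M := by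
    intro i h1 h2
    have h := hA i h1 h2
    rw [Amat_eq m i (by omega) (by omega), add_mul, mul_add, one_mul, mul_one] at h
    exact add_left_cancel h
  have cB : ∀ i (h1 : k ≤ i) (h2 : i ≤ l),
      Commute (Matrix.single (⟨2 * i - 1, by omega⟩ : Fin m) ⟨2 * i - 2, by omega⟩ (1 : ℂ)) M := by
    intro i h1 h2
    have h := hB i h1 h2
    rw [Bmat_eq m i (by omega) (by omega), sub_mul, mul_sub, one_mul, mul_one] at h
    exact sub_right_injective h
  have idx : ∀ p : Fin m, 2 * k - 2 ≤ (p : ℕ) → (p : ℕ) ≤ 2 * l - 1 →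
      ∃ i, ∃ (_ : k ≤ i) (_ : i ≤ l), p = ⟨2 * i - 2, by omega⟩ ∨ p = ⟨2 * i - 1, by omega⟩ := by
    intro p h1 h2
    refine ⟨(p : ℕ) / 2 + 1, by omega, by omega, ?_⟩
    simp only [Fin.ext_iff]
    omega
  have row : ∀ p q : Fin m, 2 * k - 2 ≤ (p : ℕ) → (p : ℕ) ≤ 2 * l - 1 → p ≠ q → M p q = 0 := by
    intro p q h1 h2 hpq
    obtain ⟨i, h3, h4, h | h⟩ := idx p h1 h2
    · subst h
      exact Matrix.row_eq_zero_of_commute_single (cB i h3 h4) hpq.symm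
    · subst h
      exact Matrix.row_eq_zero_of_commute_single (cA i h3 h4) hpq.symm
  have col : ∀ p q : Fin m, 2 * k - 2 ≤ (q : ℕ) → (q : ℕ) ≤ 2 * l - 1 → p ≠ q → M p q = 0 := by
    intro p q h1 h2 hpq
    obtain ⟨i, h3, h4, h | h⟩ := idx q h1 h2
    · subst h
      exact Matrix.col_eq_zero_of_commute_single (cA i h3 h4) hpq
    · subst h
      exact Matrix.col_eq_zero_of_commute_single (cB i h3 h4) hpq
  have dA : ∀ i (h1 : k ≤ i) (h2 : i ≤ l), M (⟨2 * i - 2, by omega⟩ : Fin m) ⟨2 * i - 2, by omega⟩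
      = M ⟨2 * i - 1, by omega⟩ ⟨2 * i - 1, by omega⟩ :=
    fun i h1 h2 => Matrix.diag_eq_of_commute_single (cA i h1 h2)
  have dC : ∀ j (h1 : k ≤ j) (h2 : j + 1 ≤ l),
      M (⟨2 * j - 2, by omega⟩ : Fin m) ⟨2 * j - 2, by omega⟩
      = M ⟨2 * j + 1, by omega⟩ ⟨2 * j + 1, by omega⟩ := by
    intro j h1 h2
    have h := congrFun (congrFun (hC j h1 (by omega)) ⟨2 * j - 2, by omega⟩) ⟨2 * j + 1, by omega⟩
    rw [Cmat_eq m j (by omega) (by omega)] at h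
    have n1 : 2 * j - 2 ≠ 2 * j := by omega
    have n2 : 2 * j + 1 ≠ 2 * j - 1 := by omega
    have r1 := row (⟨2 * j - 1, by omega⟩ : Fin m) ⟨2 * j + 1, by omega⟩ (by simp; omega)
      (by simp; omega) (by simp only [ne_eq, Fin.ext_iff]; omega)
    have r2 := row (⟨2 * j - 2, by omega⟩ : Fin m) ⟨2 * j, by omega⟩ (by simp; omega)
      (by simp; omega) (by simp [Fin.ext_iff]; omega)
    simp [add_mul, mul_add, sub_mul, mul_sub, n1, n2, r1, r2, Fin.ext_iff] at h
    exact h.symm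
  have dAll : ∀ i (h1 : k ≤ i) (h2 : i ≤ l), M (⟨2 * i - 2, by omega⟩ : Fin m) ⟨2 * i - 2, by omega⟩
      = M ⟨2 * k - 2, by omega⟩ ⟨2 * k - 2, by omega⟩ := by
    intro i h1
    induction i, h1 using Nat.le_induction with
    | base => intro _; rfl
    | succ j h1 ih =>
      intro h2
      rw [← ih (by omega), dC j h1 h2, dA (j + 1) (by omega) h2]
      rfl
  refine ⟨M ⟨2 * k - 2, by omega⟩ ⟨2 * k - 2, by omega⟩, ?_, ?_⟩
  · intro h0
    have hz : ∀ q, M ⟨2 * k - 2, by omega⟩ q = 0 := by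
      intro q
      by_cases hq : (⟨2 * k - 2, by omega⟩ : Fin m) = q
      · rw [← hq, h0]
      · exact row _ _ (by simp) (by simp; omega) hq
    have hd := (Matrix.isUnit_iff_isUnit_det M).1 hM
    rw [Matrix.det_eq_zero_of_row_eq_zero _ hz] at hd
    exact not_isUnit_zero hd
  · intro p q hpq
    split_ifs with he
    · subst he
      obtain ⟨h1, h2⟩ : 2 * k - 2 ≤ (p : ℕ) ∧ (p : ℕ) ≤ 2 * l - 1 := by tauto
      obtain ⟨i, h3, h4, h | h⟩ := idx p h1 h2
      · subst h
        exact dAll i h3 h4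
      · subst h
        rw [← dA i h3 h4]
        exact dAll i h3 h4
    · rcases hpq with ⟨h1, h2⟩ | ⟨h1, h2⟩
      · exact row p q h1 h2 he
      · exact col p q h1 h2 he
end

section
/- Let k ≥ 5 and let m be an integer with 1 < m < k − 1. Then the symmetric group S_k has no irreducible complex representation of dimension m; that is, for every m-dimensional complex vector space V and every group homomorphism ρ : S_k → GL(V), there exists a ρ-invariant subspace of V other than 0 and V. -/
set_option linter.unusedSectionVars false

section Helpers

open Equiv

variable {α : Type} [Fintype α] [DecidableEq α] {V : Type*} [AddCommGroup V] [Module ℂ V]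

/-- disjoint transpositions have the same image -/
def SwapsCollapse (ρ : Perm α →* Module.End ℂ V) : Prop :=
  ∀ a b c d : α, a ≠ b → a ≠ c → a ≠ d → b ≠ c → b ≠ d → c ≠ d →
    ρ (swap a b) = ρ (swap c d)

lemma rho_conj (ρ : Perm α →* Module.End ℂ V) (g : Perm α) (a b : α) :
    ρ (swap (g a) (g b)) = ρ g * ρ (swap a b) * ρ g⁻¹ := by
  rw [swap_apply_apply, map_mul, map_mul]

lemma rho_conj_eq (ρ : Perm α →* Module.End ℂ V) (g : Perm α) {a b c d : α}
    (h : ρ (swap a b) = ρ (swap c d)) :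
    ρ (swap (g a) (g b)) = ρ (swap (g c) (g d)) := by
  rw [rho_conj, rho_conj, h]

lemma exists_perm4 {a b c d a' b' c' d' : α}
    (h1 : a ≠ b) (h2 : a ≠ c) (h3 : a ≠ d) (h4 : b ≠ c) (h5 : b ≠ d) (h6 : c ≠ d)
    (h1' : a' ≠ b') (h2' : a' ≠ c') (h3' : a' ≠ d') (h4' : b' ≠ c') (h5' : b' ≠ d')
    (h6' : c' ≠ d') : ∃ g : Perm α, g a = a' ∧ g b = b' ∧ g c = c' ∧ g d = d' := by
  obtain ⟨g, hg⟩ := Equiv.Perm.exists_extending_pair ![a, b, c, d] ![a', b', c', d']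
    (by intro i j hij; fin_cases i <;> fin_cases j <;> simp_all)
    (by intro i j hij; fin_cases i <;> fin_cases j <;> simp_all)
  exact ⟨g, hg 0, hg 1, hg 2, hg 3⟩

lemma exists_perm3 {a b c a' b' c' : α}
    (h1 : a ≠ b) (h2 : a ≠ c) (h4 : b ≠ c)
    (h1' : a' ≠ b') (h2' : a' ≠ c') (h4' : b' ≠ c') :
    ∃ g : Perm α, g a = a' ∧ g b = b' ∧ g c = c' := by
  obtain ⟨g, hg⟩ := Equiv.Perm.exists_extending_pair ![a, b, c] ![a', b', c']
    (by intro i j hij; fin_cases i <;> fin_cases j <;> simp_all)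
    (by intro i j hij; fin_cases i <;> fin_cases j <;> simp_all)
  exact ⟨g, hg 0, hg 1, hg 2⟩

lemma exists_perm2 {a b a' b' : α} (h1 : a ≠ b) (h1' : a' ≠ b') :
    ∃ g : Perm α, g a = a' ∧ g b = b' := by
  obtain ⟨g, hg⟩ := Equiv.Perm.exists_extending_pair ![a, b] ![a', b']
    (by intro i j hij; fin_cases i <;> fin_cases j <;> simp_all)
    (by intro i j hij; fin_cases i <;> fin_cases j <;> simp_all)
  exact ⟨g, hg 0, hg 1⟩

/-- every two `-1`-eigenvectors of `T` are proportional -/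
def AntiLine (T : Module.End ℂ V) : Prop :=
  ∀ u v : V, u ≠ 0 → T u = -u → T v = -v → ∃ c : ℂ, v = c • u

lemma swap_invol (ρ : Perm α →* Module.End ℂ V) (a b : α) (x : V) :
    ρ (swap a b) (ρ (swap a b) x) = x := by
  rw [← Module.End.mul_apply, ← map_mul, swap_mul_self, map_one]; rfl

/-- two reflections with a common root, whose product has finite order, agree -/
lemma common_root (S T : Module.End ℂ V) (hS : AntiLine S) (hT : AntiLine T)
    (hSS : ∀ x, S (S x) = x) (hTT : ∀ x, T (T x) = x)
    (n : ℕ) (hn : n ≠ 0) (hST : (S * T) ^ n = 1) (v : V) (hv : v ≠ 0)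
    (hSv : S v = -v) (hTv : T v = -v) : S = T := by
  ext x
  obtain ⟨c, hc⟩ := hS v (x - S x) hv hSv (by simp [hSS])
  obtain ⟨d, hd⟩ := hT v (x - T x) hv hTv (by simp [hTT])
  have h1 : (S * T) v = v := by simp [hSv, hTv]
  have h2 : (S * T) x = x + (d - c) • v := by
    have : T x = x - d • v := by rw [← hd]; abel
    have h' : S x = x - c • v := by rw [← hc]; abel
    rw [Module.End.mul_apply, this, map_sub, map_smul, hSv, h']; module
  have h3 : ∀ k : ℕ, ((S * T) ^ k) x = x + (k : ℂ) • (d - c) • v := by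
    intro k
    induction k with
    | zero => simp
    | succ k ih =>
      rw [pow_succ', Module.End.mul_apply, ih, map_add, h2, map_smul, map_smul, h1]
      push_cast; module
  have h4 := h3 n
  rw [hST] at h4
  have h5 : (n : ℂ) • (d - c) • v = 0 := by simpa using h4
  rw [smul_smul, smul_eq_zero, or_iff_left hv, mul_eq_zero, or_iff_right (by exact_mod_cast hn),
    sub_eq_zero] at h5
  have : x - S x = x - T x := by rw [hc, hd, h5]
  simpa using this

lemma reflection_case [FiniteDimensional ℂ V] (ρ : Perm α →* Module.End ℂ V)
    (hdim : Module.finrank ℂ V + 2 ≤ Fintype.card α) {a₀ b₀ : α} (hab : a₀ ≠ b₀)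
    (hline : AntiLine (ρ (swap a₀ b₀))) : SwapsCollapse ρ := by
  by_contra hQ
  -- all transpositions are reflections
  have hL : ∀ a b : α, a ≠ b → AntiLine (ρ (swap a b)) := by
    intro a b h u v hu hu1 hv1
    obtain ⟨g, rfl, rfl⟩ := exists_perm2 hab h
    have hinv : ∀ x, ρ g (ρ g⁻¹ x) = x := by
      intro x; rw [← Module.End.mul_apply, ← map_mul, mul_inv_cancel, map_one]; rfl
    have hinv' : ∀ x, ρ g⁻¹ (ρ g x) = x := by
      intro x; rw [← Module.End.mul_apply, ← map_mul, inv_mul_cancel, map_one]; rfl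
    have key : ∀ x, ρ (swap (g a₀) (g b₀)) x = -x → ρ (swap a₀ b₀) (ρ g⁻¹ x) = -(ρ g⁻¹ x) := by
      intro x hx
      rw [rho_conj] at hx
      have := congrArg (ρ g⁻¹) hx
      simpa [hinv'] using this
    obtain ⟨c, hc⟩ := hline _ _ (by
      intro h0; apply hu; rw [← hinv u, h0, map_zero]) (key u hu1) (key v hv1)
    refine ⟨c, ?_⟩
    rw [← hinv v, hc, map_smul, hinv]
  unfold SwapsCollapse at hQ
  push Not at hQ
  obtain ⟨p, q, r, s, k1, k2, k3, k4, k5, k6, hne⟩ := hQ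
  have hdisj : ∀ a b c d : α, a ≠ b → a ≠ c → a ≠ d → b ≠ c → b ≠ d → c ≠ d →
      ρ (swap a b) ≠ ρ (swap c d) := by
    intro a b c d h1 h2 h3 h4 h5 h6 h
    obtain ⟨g, rfl, rfl, rfl, rfl⟩ := exists_perm4 h1 h2 h3 h4 h5 h6 k1 k2 k3 k4 k5 k6
    exact hne (rho_conj_eq ρ g h)
  have hadj : ∀ a b c : α, a ≠ b → a ≠ c → b ≠ c → ρ (swap a c) ≠ ρ (swap b c) := by
    intro a b c h1 h2 h4 h
    have hall : ∀ x y z : α, x ≠ y → x ≠ z → y ≠ z → ρ (swap x z) = ρ (swap y z) := by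
      intro x y z h1' h2' h4'
      obtain ⟨g, rfl, rfl, rfl⟩ := exists_perm3 h1 h2 h4 h1' h2' h4'
      exact rho_conj_eq ρ g h
    apply hne
    rw [hall p r q k2 k1 k4.symm, swap_comm r q, hall q s r k5 k4 k6.symm, swap_comm]
  -- no common roots
  have hnc : ∀ a b c : α, a ≠ b → a ≠ c → b ≠ c → ∀ v, v ≠ 0 → ρ (swap a c) v = -v →
      ρ (swap b c) v ≠ -v := by
    intro a b c h1 h2 h4 v hv h5 h6
    refine hadj a b c h1 h2 h4 (common_root _ _ (hL _ _ h2) (hL _ _ h4) (swap_invol ρ a c)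
      (swap_invol ρ b c) 3 (by norm_num) ?_ v hv h5 h6)
    rw [← map_mul, ← map_pow]
    have : (swap a c * swap b c) ^ 3 = 1 := by
      have h3 := Equiv.Perm.isThreeCycle_swap_mul_swap_same h2.symm h4.symm h1
      rw [swap_comm a c, swap_comm b c, ← h3.orderOf, pow_orderOf_eq_one]
    rw [this, map_one]
  have hcd : ∀ a b c d : α, a ≠ b → a ≠ c → a ≠ d → b ≠ c → b ≠ d → c ≠ d →
      ∀ v, v ≠ 0 → ρ (swap a b) v = -v → ρ (swap c d) v = v := by
    intro a b c d h1 h2 h3 h4 h5 h6 v hv hv1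
    have hcomm : swap a b * swap c d = swap c d * swap a b := by
      apply Equiv.Perm.Disjoint.commute
      intro x
      by_cases hx : x = a ∨ x = b
      · right; rcases hx with rfl | rfl <;> exact swap_apply_of_ne_of_ne ‹_› ‹_›
      · left; push Not at hx; exact swap_apply_of_ne_of_ne hx.1 hx.2
    have hcommρ : ∀ x, ρ (swap a b) (ρ (swap c d) x) = ρ (swap c d) (ρ (swap a b) x) := by
      intro x
      rw [← Module.End.mul_apply, ← map_mul, hcomm, map_mul, Module.End.mul_apply]
    obtain ⟨l, hl⟩ := hL a b h1 v (ρ (swap c d) v) hv hv1 (by rw [hcommρ, hv1, map_neg])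
    have h2' := swap_invol ρ c d v
    rw [hl, map_smul, hl, smul_smul] at h2'
    have hl2 : l * l = 1 := by
      have : (l * l - 1) • v = 0 := by rw [sub_smul, h2', one_smul, sub_self]
      rw [smul_eq_zero, or_iff_left hv] at this
      linear_combination this
    rcases mul_self_eq_one_iff.mp hl2 with rfl | rfl
    · rw [hl, one_smul]
    · exfalso
      refine hdisj a b c d h1 h2 h3 h4 h5 h6 (common_root _ _ (hL _ _ h1) (hL _ _ h6)
        (swap_invol ρ a b) (swap_invol ρ c d) 2 (by norm_num) ?_ v hv hv1 (by simpa using hl))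
      have h8 : (swap a b * swap c d) ^ 2 = 1 := by
        rw [pow_two]
        nth_rewrite 1 [hcomm]
        rw [mul_assoc, swap_mul_self_mul, swap_mul_self]
      rw [← map_mul, ← map_pow, h8, map_one]
  -- the root of (o z)
  obtain ⟨w₀, hw₀, hw₀'⟩ : ∃ w : V, w ≠ 0 ∧ ρ (swap p q) w = -w := by
    by_contra hno
    push Not at hno
    have h1 : ρ (swap p q) = 1 := by
      ext x
      by_contra hx
      refine hno (x - ρ (swap p q) x) ?_ (by simp [swap_invol])
      intro h; exact hx (sub_eq_zero.mp h).symm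
    obtain ⟨g, hg1, hg2⟩ := exists_perm2 k1 k6
    apply hne
    rw [← hg1, ← hg2, rho_conj, h1, mul_one, ← map_mul, mul_inv_cancel, map_one]
  have hinj : ∀ a b x, ρ (swap a b) x = 0 → x = 0 := by
    intro a b x hx
    rw [← swap_invol ρ a b x, hx, map_zero]
  set w : α → V := fun i => ρ (swap p i) w₀ with hw
  have hw0 : ∀ i, w i ≠ 0 := fun i h => hw₀ (hinj _ _ _ h)
  have hwq : ∀ i, i ≠ q → ρ (swap i q) (w i) = -w i := by
    intro i hi
    have h := rho_conj ρ (swap p i) p q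
    rw [swap_apply_left, swap_apply_of_ne_of_ne k1.symm hi.symm] at h
    rw [h, swap_inv]
    simp [hw, swap_invol, hw₀']
  have hwp : w p = w₀ := by
    show ρ (swap p p) w₀ = w₀
    rw [swap_self]; exact congrArg (fun T : Module.End ℂ V => T w₀) (map_one ρ)
  have hwij : ∀ i j, i ≠ q → j ≠ q → i ≠ j → ρ (swap i j) (w i) = w j := by
    intro i j hi hj hij
    by_cases hip : i = p
    · subst hip; rw [hwp]
    by_cases hjp : j = p
    · subst hjp; rw [hwp, swap_comm]; exact swap_invol ρ _ _ _
    have h1 : swap i j * swap p i = swap p j * swap i j := by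
      rw [mul_swap_eq_swap_mul, swap_apply_left, swap_apply_of_ne_of_ne (Ne.symm hip) (Ne.symm hjp)]
    have h2 := hcd p q i j k1 (Ne.symm hip) (Ne.symm hjp) hi.symm hj.symm hij w₀ hw₀ hw₀'
    show ρ (swap i j) (ρ (swap p i) w₀) = ρ (swap p j) w₀
    rw [← Module.End.mul_apply, ← map_mul, h1, map_mul, Module.End.mul_apply, h2]
  have hpar : ∀ i j, i ≠ q → j ≠ q → i ≠ j → ∀ c : ℂ, w j ≠ c • w i := by
    intro i j hi hj hij c hc
    refine hnc i j q hij hi hj (w j) (hw0 j) ?_ (hwq j hj)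
    rw [hc, map_smul, hwq i hi, smul_neg]
  have hact : ∀ i j, i ≠ q → j ≠ q → i ≠ j → ρ (swap i q) (w j) = w j - w i := by
    intro i j hi hj hij
    obtain ⟨a, ha⟩ := hL i q hi (w i) (w j - ρ (swap i q) (w j)) (hw0 i) (hwq i hi)
      (by simp [swap_invol])
    have hne' : w i - w j ≠ 0 := by
      intro h; exact hpar i j hi hj hij 1 (by rw [one_smul]; exact (sub_eq_zero.mp h).symm)
    have h1 : ρ (swap i j) (w i - w j) = -(w i - w j) := by
      rw [map_sub, hwij i j hi hj hij, swap_comm, hwij j i hj hi hij.symm]; abel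
    have h2 : ρ (swap i j) (ρ (swap i q) (w j)) = -(ρ (swap i q) (w j)) := by
      have h := rho_conj ρ (swap i q) q j
      rw [swap_apply_right, swap_apply_of_ne_of_ne hij.symm hj, swap_comm q j] at h
      rw [h, swap_inv]
      simp [swap_invol, hwq j hj]
    obtain ⟨l, hl⟩ := hL i j hij _ _ hne' h1 h2
    have h3 : ρ (swap i q) (w j) = w j - a • w i := by rw [← ha]; abel
    rw [h3] at hl
    have h4 : (1 + l) • w j = (a + l) • w i := by
      have : w j = l • (w i - w j) + a • w i := by rw [← hl]; abel
      calc (1 + l) • w j = w j + l • w j := by module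
        _ = (l • (w i - w j) + a • w i) + l • w j := by rw [← this]
        _ = _ := by module
    have h5 : 1 + l = 0 := by
      by_contra h5
      apply hpar i j hi hj hij ((1 + l)⁻¹ * (a + l))
      rw [mul_smul, ← h4, smul_smul, inv_mul_cancel₀ h5, one_smul]
    rw [h5, zero_smul] at h4
    have h6 := (smul_eq_zero.mp h4.symm).resolve_right (hw0 i)
    have h7 : a = 1 := by linear_combination h6 - h5
    rw [h3, h7, one_smul]
  have hli : LinearIndependent ℂ (fun i : {i : α // i ≠ q} => w i) := by
    rw [Fintype.linearIndependent_iff]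
    intro c hc
    have hrow : ∀ i, c i = - ∑ j, c j := by
      intro i
      have h1 : ∀ j : {i : α // i ≠ q}, ρ (swap (i : α) q) (c j • w j)
          = c j • w j - c j • w i - (if j = i then c i • w i else 0) := by
        intro j
        by_cases hji : j = i
        · subst hji
          simp [hwq j j.2]
        · rw [if_neg hji, map_smul, hact i j i.2 j.2 (fun h => hji (Subtype.ext h.symm))]
          module
      have h2 := congrArg (ρ (swap (i : α) q)) hc
      rw [map_sum, map_zero, Finset.sum_congr rfl (fun j _ => h1 j), Finset.sum_sub_distrib,
        Finset.sum_sub_distrib, hc, ← Finset.sum_smul] at h2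
      simp only [Finset.sum_ite_eq', Finset.mem_univ, if_true] at h2
      have h3 : ((∑ j, c j) + c i) • w i = 0 := by
        rw [add_smul]
        have := congrArg Neg.neg h2
        rw [neg_zero] at this
        rw [← this]; abel
      have h4 := (smul_eq_zero.mp h3).resolve_right (hw0 i)
      linear_combination h4
    have hsum : (∑ j, c j) = - (Fintype.card {i : α // i ≠ q} : ℂ) * ∑ j, c j := by
      conv_lhs => rw [Finset.sum_congr rfl (fun i _ => hrow i)]
      simp
    have hz : (∑ j, c j) = 0 := by
      have : ((Fintype.card {i : α // i ≠ q} : ℂ) + 1) * ∑ j, c j = 0 := by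
        linear_combination hsum
      exact (mul_eq_zero.mp this).resolve_left (Nat.cast_add_one_ne_zero _)
    intro i
    rw [hrow i, hz, neg_zero]
  have hcard := hli.fintype_card_le_finrank
  have : Fintype.card {i : α // i ≠ q} = Fintype.card α - 1 := by
    simp
  omega

/-- twist by the sign -/
def signTwist (ρ : Perm α →* Module.End ℂ V) : Perm α →* Module.End ℂ V where
  toFun g := ((Perm.sign g : ℤ) : ℂ) • ρ g
  map_one' := by simp
  map_mul' g h := by
    simp [smul_smul, mul_comm]

lemma signTwist_swap (ρ : Perm α →* Module.End ℂ V) {a b : α} (h : a ≠ b) :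
    signTwist ρ (swap a b) = - ρ (swap a b) := by
  simp [signTwist, Perm.sign_swap h]

lemma antiLine_of_finrank [FiniteDimensional ℂ V] (T : Module.End ℂ V)
    (h : Module.finrank ℂ (LinearMap.ker (T + 1)) ≤ 1) : AntiLine T := by
  rw [finrank_le_one_iff] at h
  obtain ⟨e, he⟩ := h
  intro u v hu hu1 hv1
  obtain ⟨c, hc⟩ := he ⟨u, by simp [hu1]⟩
  obtain ⟨d, hd⟩ := he ⟨v, by simp [hv1]⟩
  have hc' : c • (e : V) = u := congrArg Subtype.val hc
  have hd' : d • (e : V) = v := congrArg Subtype.val hd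
  have hc0 : c ≠ 0 := by rintro rfl; exact hu (by rw [← hc', zero_smul])
  refine ⟨d * c⁻¹, ?_⟩
  rw [← hc', ← hd', smul_smul, mul_assoc, inv_mul_cancel₀ hc0, mul_one]

/-- restriction to an invariant subspace -/
def restrictRep {G : Type*} [Monoid G] (ρ : G →* Module.End ℂ V) (W : Submodule ℂ V)
    (h : ∀ g, ∀ x ∈ W, ρ g x ∈ W) : G →* Module.End ℂ W where
  toFun g := (ρ g).restrict (h g)
  map_one' := by ext x; simp
  map_mul' g k := by ext x; simp

end Helpers

open Equiv in
lemma swaps_collapse (n : ℕ) : ∀ (α : Type) [Fintype α] [DecidableEq α] (V : Type*)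
    [AddCommGroup V] [Module ℂ V] [FiniteDimensional ℂ V] (ρ : Perm α →* Module.End ℂ V),
    Fintype.card α = n → Module.finrank ℂ V + 2 ≤ n → SwapsCollapse ρ := by
  induction n using Nat.strong_induction_on with
  | _ n ih =>
  intro α _ _ V _ _ _ ρ hn hdim
  by_contra hQ
  have hm : ∀ a b : α, a ≠ b → 2 ≤ Module.finrank ℂ (LinearMap.ker (ρ (swap a b) + 1)) := by
    intro a b hab
    by_contra h
    exact hQ (reflection_case ρ (by omega) hab (antiLine_of_finrank _ (by omega)))
  have hp : ∀ a b : α, a ≠ b → 2 ≤ Module.finrank ℂ (LinearMap.ker (ρ (swap a b) - 1)) := by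
    intro a b hab
    by_contra h
    have hk : LinearMap.ker (signTwist ρ (swap a b) + 1) = LinearMap.ker (ρ (swap a b) - 1) := by
      rw [signTwist_swap ρ hab]
      ext x
      rw [LinearMap.mem_ker, LinearMap.mem_ker]
      simp only [LinearMap.add_apply, LinearMap.sub_apply, LinearMap.neg_apply,
        Module.End.one_apply]
      rw [sub_eq_zero, neg_add_eq_zero]
    rw [← hk] at h
    apply hQ
    intro c d e f h1 h2 h3 h4 h5 h6
    have := reflection_case (signTwist ρ) (by omega) hab (antiLine_of_finrank _ (by omega))
      c d e f h1 h2 h3 h4 h5 h6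
    rw [signTwist_swap ρ h1, signTwist_swap ρ h6] at this
    exact neg_injective this
  have hsum : ∀ a b : α, Module.finrank ℂ (LinearMap.ker (ρ (swap a b) + 1)) +
      Module.finrank ℂ (LinearMap.ker (ρ (swap a b) - 1)) ≤ Module.finrank ℂ V := by
    intro a b
    apply Submodule.finrank_add_finrank_le_of_disjoint
    rw [Submodule.disjoint_def]
    intro x hx hy
    rw [LinearMap.mem_ker] at hx hy
    simp only [LinearMap.add_apply, LinearMap.sub_apply, Module.End.one_apply] at hx hy
    have h2 : (2 : ℂ) • x = 0 := by
      rw [two_smul]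
      calc x + x = (ρ (swap a b) x + x) - (ρ (swap a b) x - x) := by abel
        _ = 0 := by rw [hx, hy, sub_zero]
    exact (smul_eq_zero.mp h2).resolve_left two_ne_zero
  apply hQ
  intro c d e f h1 h2 h3 h4 h5 h6
  have h6n : 6 ≤ n := by
    have := hm c d h1
    have := hp c d h1
    have := hsum c d
    omega
  have hc4 : ({c, d, e, f} : Finset α).card ≤ 4 := Finset.card_le_four
  obtain ⟨a, ha, b, hb, hab⟩ : ∃ a ∈ ({c, d, e, f} : Finset α)ᶜ,
      ∃ b ∈ ({c, d, e, f} : Finset α)ᶜ, a ≠ b := by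
    rw [← Finset.one_lt_card, Finset.card_compl]
    omega
  simp only [Finset.mem_compl, Finset.mem_insert, Finset.mem_singleton, not_or] at ha hb
  -- restriction to the permutations fixing `a` and `b`
  let P : α → Prop := fun x => x ≠ a ∧ x ≠ b
  have hcardP : Fintype.card {x // P x} = n - 2 := by
    have : (Finset.univ.filter P) = ({a, b} : Finset α)ᶜ := by
      ext x; simp [P]
    rw [Fintype.card_subtype, this, Finset.card_compl, Finset.card_pair hab, hn]
  let σ : Perm {x // P x} →* Module.End ℂ V := ρ.comp Perm.ofSubtype
  have hcomm : ∀ (g : Perm {x // P x}) (x : V),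
      ρ (swap a b) (σ g x) = σ g (ρ (swap a b) x) := by
    intro g x
    have h : Perm.ofSubtype g * swap a b = swap a b * Perm.ofSubtype g := by
      rw [mul_swap_eq_swap_mul, Perm.ofSubtype_apply_of_not_mem g (by simp [P]),
        Perm.ofSubtype_apply_of_not_mem g (by simp [P])]
    show ρ (swap a b) (ρ (Perm.ofSubtype g) x) = ρ (Perm.ofSubtype g) (ρ (swap a b) x)
    rw [← Module.End.mul_apply, ← map_mul, ← h, map_mul, Module.End.mul_apply]
  have hsw : ∀ x y : {x // P x}, σ (swap x y) = ρ (swap (x : α) y) := by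
    intro x y
    show ρ (Perm.ofSubtype (swap x y)) = _
    rw [Perm.ofSubtype_swap_eq]
  have hW : ∀ W : Submodule ℂ V, (∀ g, ∀ x ∈ W, σ g x ∈ W) →
      Module.finrank ℂ W + 2 ≤ n - 2 → ∀ x ∈ W, ρ (swap c d) x = ρ (swap e f) x := by
    intro W hinv hfr x hx
    have := ih (n - 2) (by omega) {x // P x} W (restrictRep σ W hinv) hcardP hfr
      ⟨c, Ne.symm ha.1, Ne.symm hb.1⟩ ⟨d, Ne.symm ha.2.1, Ne.symm hb.2.1⟩
      ⟨e, Ne.symm ha.2.2.1, Ne.symm hb.2.2.1⟩ ⟨f, Ne.symm ha.2.2.2, Ne.symm hb.2.2.2⟩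
      (by simpa using h1) (by simpa using h2) (by simpa using h3) (by simpa using h4)
      (by simpa using h5) (by simpa using h6)
    have h := congrArg (fun T : Module.End ℂ W => ((T ⟨x, hx⟩ : W) : V)) this
    have h' : σ (swap _ _) x = σ (swap _ _) x := h
    rw [hsw, hsw] at h'
    exact h'
  have e1 := hm a b hab
  have e2 := hp a b hab
  have e3 := hsum a b
  have hA := hW (LinearMap.ker (ρ (swap a b) + 1)) (by
    intro g x hx
    rw [LinearMap.mem_ker] at hx ⊢
    simp only [LinearMap.add_apply, Module.End.one_apply] at hx ⊢
    rw [hcomm, ← map_add, hx, map_zero]) (by omega)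
  have hB := hW (LinearMap.ker (ρ (swap a b) - 1)) (by
    intro g x hx
    rw [LinearMap.mem_ker] at hx ⊢
    simp only [LinearMap.sub_apply, Module.End.one_apply] at hx ⊢
    rw [hcomm, ← map_sub, hx, map_zero]) (by omega)
  ext x
  have hx : x = (1 / 2 : ℂ) • ((x - ρ (swap a b) x) + (x + ρ (swap a b) x)) := by module
  have hA' := hA (x - ρ (swap a b) x) (by simp [swap_invol])
  have hB' := hB (x + ρ (swap a b) x) (by simp [swap_invol, add_comm])
  rw [hx, map_smul, map_smul, map_add (ρ (swap c d)) (x - ρ (swap a b) x), hA', hB', ← map_add]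

/-- For `k ≥ 5`, the symmetric group `S_k` has no irreducible complex
representation of dimension `m` with `1 < m < k - 1`: every representation of
`S_k` on an `m`-dimensional complex vector space has a nontrivial proper
invariant subspace. -/
theorem stmt_1 (k m : ℕ) (hk : 5 ≤ k) (hm1 : 1 < m) (hm2 : m < k - 1)
    (V : Type*) [AddCommGroup V] [Module ℂ V] (hdim : Module.finrank ℂ V = m)
    (ρ : Equiv.Perm (Fin k) →* LinearMap.GeneralLinearGroup ℂ V) :
    ∃ p : Submodule ℂ V, p ≠ ⊥ ∧ p ≠ ⊤ ∧
      ∀ g : Equiv.Perm (Fin k), ∀ v ∈ p, (ρ g : V →ₗ[ℂ] V) v ∈ p := by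
  classical
  have hfd : FiniteDimensional ℂ V := Module.finite_of_finrank_pos (by omega)
  have hnt : Nontrivial V := Module.nontrivial_of_finrank_pos (R := ℂ) (by omega)
  let τ : Equiv.Perm (Fin k) →* Module.End ℂ V :=
    (Units.coeHom (Module.End ℂ V)).comp ρ
  have hQ : SwapsCollapse τ := swaps_collapse k (Fin k) V τ (by simp) (by omega)
  -- all transpositions have the same image
  have hadj : ∀ a b c : Fin k, a ≠ b → a ≠ c → b ≠ c →
      τ (Equiv.swap a b) = τ (Equiv.swap b c) := by
    intro a b c h1 h2 h3
    have hc3 : ({a, b, c} : Finset (Fin k)).card ≤ 3 := Finset.card_le_three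
    obtain ⟨x, hx, y, hy, hxy⟩ : ∃ x ∈ ({a, b, c} : Finset (Fin k))ᶜ,
        ∃ y ∈ ({a, b, c} : Finset (Fin k))ᶜ, x ≠ y := by
      rw [← Finset.one_lt_card, Finset.card_compl, Fintype.card_fin]
      omega
    simp only [Finset.mem_compl, Finset.mem_insert, Finset.mem_singleton, not_or] at hx hy
    rw [hQ a b x y h1 (Ne.symm hx.1) (Ne.symm hy.1) (Ne.symm hx.2.1) (Ne.symm hy.2.1) hxy,
      hQ b c x y h3 (Ne.symm hx.2.1) (Ne.symm hy.2.1) (Ne.symm hx.2.2) (Ne.symm hy.2.2) hxy]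
  have hall : ∀ a b c d : Fin k, a ≠ b → c ≠ d → τ (Equiv.swap a b) = τ (Equiv.swap c d) := by
    intro a b c d h1 h2
    by_cases hac : a = c
    · subst hac
      by_cases hbd : b = d
      · rw [hbd]
      · rw [Equiv.swap_comm a b]; exact hadj b a d h1.symm hbd h2
    by_cases had : a = d
    · subst had
      by_cases hbc : b = c
      · rw [hbc, Equiv.swap_comm]
      · rw [Equiv.swap_comm a b, Equiv.swap_comm c a]; exact hadj b a c h1.symm hbc (Ne.symm h2)
    by_cases hbc : b = c
    · subst hbc
      exact hadj a b d h1 had h2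
    by_cases hbd : b = d
    · subst hbd
      rw [Equiv.swap_comm c b]; exact hadj a b c h1 hac hbc
    exact hQ a b c d h1 hac had hbc hbd h2
  obtain ⟨x0, y0, hxy0⟩ : ∃ x y : Fin k, x ≠ y :=
    ⟨⟨0, by omega⟩, ⟨1, by omega⟩, by simp⟩
  obtain ⟨μ, hμ⟩ := Module.End.exists_eigenvalue (τ (Equiv.swap x0 y0))
  obtain ⟨v, hv⟩ := hμ.exists_hasEigenvector
  have hg : ∀ g : Equiv.Perm (Fin k), ∀ x ∈ Submodule.span ℂ {v},
      τ g x ∈ Submodule.span ℂ {v} := by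
    intro g
    induction g using Equiv.Perm.swap_induction_on with
    | one => intro x hx; rw [map_one]; exact hx
    | swap_mul f a b hab ih =>
      intro x hx
      rw [map_mul, Module.End.mul_apply, hall a b x0 y0 hab hxy0]
      obtain ⟨c, hc⟩ := Submodule.mem_span_singleton.mp (ih x hx)
      rw [← hc, map_smul, hv.apply_eq_smul]
      exact Submodule.smul_mem _ _ (Submodule.smul_mem _ _ (Submodule.mem_span_singleton_self v))
  refine ⟨Submodule.span ℂ {v}, ?_, ?_, hg⟩
  · rw [Ne, Submodule.span_singleton_eq_bot]; exact hv.2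
  · intro htop
    have := finrank_span_singleton (K := ℂ) hv.2
    rw [htop, finrank_top] at this
    omega
end

section
/- Let k ≥ 7 and let ρ : S_k → GL(V) and σ : S_k → GL(W) be two irreducible complex representations of S_k on complex vector spaces V and W, each of dimension k − 1. Then either ρ is isomorphic to σ, or ρ is isomorphic to the twist of σ by the sign character; that is, there exists a linear isomorphism T : V → W such that either T ∘ ρ(g) = σ(g) ∘ T for all g ∈ S_k, or T ∘ ρ(g) = sgn(g) · σ(g) ∘ T for all g ∈ S_k. -/
open Equiv

namespace SymSmall

universe u

set_option linter.unusedSectionVars false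

/-- Four pairwise distinct points. -/
def Dist {α : Type} (a b c d : α) : Prop :=
  a ≠ b ∧ a ≠ c ∧ a ≠ d ∧ b ≠ c ∧ b ≠ d ∧ c ≠ d

section
variable {α : Type} [Fintype α] [DecidableEq α]

theorem fresh (s : Finset α) (h : s.card < Fintype.card α) : ∃ x, x ∉ s := by
  by_contra hc
  push Not at hc
  have : s = Finset.univ := Finset.eq_univ_iff_forall.2 hc
  rw [this, Finset.card_univ] at h
  exact lt_irrefl _ h

theorem exists_perm4 {a b c d a' b' c' d' : α} (h : Dist a b c d) (h' : Dist a' b' c' d') :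
    ∃ g : Perm α, g a = a' ∧ g b = b' ∧ g c = c' ∧ g d = d' := by
  obtain ⟨h1, h2, h3, h4, h5, h6⟩ := h
  obtain ⟨k1, k2, k3, k4, k5, k6⟩ := h'
  have inj : Function.Injective ![a, b, c, d] := by
    intro i j hij
    fin_cases i <;> fin_cases j <;> simp_all
  have inj' : Function.Injective ![a', b', c', d'] := by
    intro i j hij
    fin_cases i <;> fin_cases j <;> simp_all
  have := Equiv.Perm.isMultiplyPretransitive α 4
  obtain ⟨g, hg⟩ := this.exists_smul_eq ⟨_, inj⟩ ⟨_, inj'⟩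
  have e : ∀ i, g (![a, b, c, d] i) = ![a', b', c', d'] i := fun i => by
    have := DFunLike.congr_fun hg i
    simpa using this
  exact ⟨g, e 0, e 1, e 2, e 3⟩

theorem exists_perm2 {a b a' b' : α} (h : a ≠ b) (h' : a' ≠ b') :
    ∃ g : Perm α, g a = a' ∧ g b = b' := by
  have inj : Function.Injective ![a, b] := by
    intro i j hij
    fin_cases i <;> fin_cases j <;> simp_all
  have inj' : Function.Injective ![a', b'] := by
    intro i j hij
    fin_cases i <;> fin_cases j <;> simp_all
  have := Equiv.Perm.isMultiplyPretransitive α 2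
  obtain ⟨g, hg⟩ := this.exists_smul_eq ⟨_, inj⟩ ⟨_, inj'⟩
  have e : ∀ i, g (![a, b] i) = ![a', b'] i := fun i => by
    have := DFunLike.congr_fun hg i
    simpa using this
  exact ⟨g, e 0, e 1⟩

variable {V : Type u} [AddCommGroup V] [Module ℂ V] (ρ : Perm α →* Module.End ℂ V)

theorem rho_mul (g h : Perm α) (v : V) : ρ (g * h) v = ρ g (ρ h v) := by
  rw [map_mul]; rfl

theorem rho_swap (g : Perm α) (a b : α) (v : V) :
    ρ g (ρ (swap a b) v) = ρ (swap (g a) (g b)) (ρ g v) := by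
  rw [← rho_mul, ← rho_mul, mul_swap_eq_swap_mul]

theorem rho_ss (a b : α) (v : V) : ρ (swap a b) (ρ (swap a b) v) = v := by
  rw [← rho_mul, swap_mul_self, map_one]; rfl

theorem rho_inv (g : Perm α) (v : V) : ρ g⁻¹ (ρ g v) = v := by
  rw [← rho_mul, inv_mul_cancel, map_one]; rfl

theorem rho_inv' (g : Perm α) (v : V) : ρ g (ρ g⁻¹ v) = v := by
  rw [← rho_mul, mul_inv_cancel, map_one]; rfl

theorem rho_inj (g : Perm α) {v w : V} (h : ρ g v = ρ g w) : v = w := by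
  rw [← rho_inv ρ g v, h, rho_inv]

theorem rho_comm {a b c d : α} (h : Dist a b c d) (v : V) :
    ρ (swap a b) (ρ (swap c d) v) = ρ (swap c d) (ρ (swap a b) v) := by
  obtain ⟨h1, h2, h3, h4, h5, h6⟩ := h
  rw [rho_swap, swap_apply_of_ne_of_ne h2.symm h4.symm, swap_apply_of_ne_of_ne h3.symm h5.symm]

/-- The eigenspace of a transposition. -/
def eig (a b : α) (ε : ℂ) : Submodule ℂ V := LinearMap.ker (ρ (swap a b) - ε • 1)

theorem mem_eig {a b : α} {ε : ℂ} {v : V} : v ∈ eig ρ a b ε ↔ ρ (swap a b) v = ε • v := by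
  simp [eig, sub_eq_zero]

theorem eig_compl (a b : α) : IsCompl (eig ρ a b 1) (eig ρ a b (-1)) := by
  constructor
  · rw [Submodule.disjoint_def]
    intro v h1 h2
    rw [mem_eig] at h1 h2
    rw [h1] at h2
    have : (2 : ℂ) • v = 0 := by
      rw [two_smul]; nth_rewrite 1 [← one_smul ℂ v]; rw [h2]; simp
    simpa using this
  · rw [codisjoint_iff, eq_top_iff]
    intro v _
    have : v = (2⁻¹ : ℂ) • (v + ρ (swap a b) v) + (2⁻¹ : ℂ) • (v - ρ (swap a b) v) := by
      module
    rw [this]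
    apply Submodule.add_mem_sup
    · apply Submodule.smul_mem; rw [mem_eig, map_add, rho_ss]; module
    · apply Submodule.smul_mem; rw [mem_eig, map_sub, rho_ss]; module

theorem eig_finrank [FiniteDimensional ℂ V] (a b : α) :
    Module.finrank ℂ (eig ρ a b 1) + Module.finrank ℂ (eig ρ a b (-1)) = Module.finrank ℂ V :=
  Submodule.finrank_add_eq_of_isCompl (eig_compl ρ a b)

/-- Any vector negated by a transposition is fixed by the disjoint ones. -/
def HH : Prop := ∀ a b c d : α, Dist a b c d → ∀ v : V, ρ (swap a b) v = -v → ρ (swap c d) v = v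

theorem HH_of {a b c d : α} (h : Dist a b c d)
    (H : ∀ v : V, ρ (swap a b) v = -v → ρ (swap c d) v = v) : HH ρ := by
  intro a' b' c' d' h' v hv
  obtain ⟨g, rfl, rfl, rfl, rfl⟩ := exists_perm4 h h'
  have := H (ρ g⁻¹ v) (by
    apply rho_inj ρ g
    rw [rho_swap, rho_inv', map_neg, rho_inv', hv])
  have := congrArg (ρ g) this
  rwa [rho_swap, rho_inv'] at this

theorem swap_conj_all {a b c d : α} (h : Dist a b c d) (H : ρ (swap a b) = ρ (swap c d)) :
    ∀ a' b' c' d' : α, Dist a' b' c' d' → ρ (swap a' b') = ρ (swap c' d') := by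
  intro a' b' c' d' h'
  obtain ⟨g, rfl, rfl, rfl, rfl⟩ := exists_perm4 h h'
  ext v
  have := congrArg (ρ g) (LinearMap.congr_fun H (ρ g⁻¹ v))
  rwa [rho_swap, rho_swap, rho_inv'] at this

/-- vectors fixed by transpositions avoiding `p, q` are fixed by permutations fixing `p, q`. -/
theorem fixed_of {p q : α} {x : V}
    (hx : ∀ c d, c ≠ d → c ≠ p → c ≠ q → d ≠ p → d ≠ q → ρ (swap c d) x = x)
    (g : Perm α) (hp : g p = p) (hq : g q = q) : ρ g x = x := by
  have key : ∀ f : Perm {y : α // y ≠ p ∧ y ≠ q}, ρ (Perm.ofSubtype f) x = x := by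
    intro f
    induction f using Perm.swap_induction_on with
    | one => rw [map_one, map_one]; rfl
    | swap_mul f c d hcd ih =>
      rw [map_mul, rho_mul, ih, Perm.ofSubtype_swap_eq]
      exact hx _ _ (fun h => hcd (Subtype.ext h)) c.2.1 c.2.2 d.2.1 d.2.2
  have h1 : ∀ y : α, (g y ≠ p ∧ g y ≠ q) ↔ (y ≠ p ∧ y ≠ q) := by
    intro y
    have e1 : g y = p ↔ y = p := by
      constructor
      · intro e; exact g.injective (e.trans hp.symm)
      · rintro rfl; exact hp
    have e2 : g y = q ↔ y = q := by
      constructor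
      · intro e; exact g.injective (e.trans hq.symm)
      · rintro rfl; exact hq
    rw [ne_eq, ne_eq, e1, e2]
  have h2 := Perm.ofSubtype_subtypePerm (p := fun y => y ≠ p ∧ y ≠ q) (f := g) h1
    (by rintro y hy; constructor <;> rintro rfl <;> contradiction)
  have h3 := key (g.subtypePerm h1)
  rwa [h2] at h3

/-- The key construction: an equivariant, injective family of vectors. -/
theorem key (h4 : 4 ≤ Fintype.card α) (H : HH ρ) {p q : α} (hpq : p ≠ q) {x : V} (hx0 : x ≠ 0)
    (hx : ρ (swap p q) x = -x) :
    ∃ Y : α → V, (∀ g i, ρ g (Y i) = Y (g i)) ∧ ∀ i j, i ≠ j → Y i ≠ Y j := by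
  have hfix : ∀ g : Perm α, g p = p → g q = q → ρ g x = x := by
    apply fixed_of
    intro c d hcd h1 h2 h3 h5
    exact H p q c d ⟨hpq, h1.symm, h3.symm, h2.symm, h5.symm, hcd⟩ x hx
  have hex : ∀ i j : α, ∃ g : Perm α, i ≠ j → g p = i ∧ g q = j := by
    intro i j
    by_cases h : i = j
    · exact ⟨1, fun h' => absurd h h'⟩
    · obtain ⟨g, hg⟩ := exists_perm2 hpq h
      exact ⟨g, fun _ => hg⟩
  choose G hG using hex
  have hwd : ∀ g h : Perm α, g p = h p → g q = h q → ρ g x = ρ h x := by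
    intro g h e1 e2
    apply rho_inj ρ h⁻¹
    rw [rho_inv, ← rho_mul]
    apply hfix <;> simp [e1, e2]
  let X : α → α → V := fun i j => if i = j then 0 else ρ (G i j) x
  have hX0 : ∀ i, X i i = 0 := by simp [X]
  have hXg : ∀ g i j, ρ g (X i j) = X (g i) (g j) := by
    intro g i j
    by_cases h : i = j
    · simp [X, h]
    · have h' : g i ≠ g j := fun e => h (g.injective e)
      simp only [X, h, h', if_false]
      rw [← rho_mul]
      apply hwd <;> simp [hG i j h, hG _ _ h']
  have hXs : ∀ i j, X j i = - X i j := by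
    intro i j
    by_cases h : i = j
    · simp [X, h]
    · simp only [X, h, Ne.symm h, if_false]
      rw [← map_neg, ← hx, ← rho_mul]
      apply hwd <;> simp [hG i j h, hG _ _ (Ne.symm h)]
  have hc : ∀ i j k, X i j + X j k = X i k := by
    intro i j k
    by_cases hij : i = j
    · subst hij; simp [hX0]
    by_cases hjk : j = k
    · subst hjk; simp [hX0]
    by_cases hik : i = k
    · subst hik; simp [hX0, hXs i j]
    obtain ⟨l, hl⟩ := fresh ({i, j, k} : Finset α) (lt_of_le_of_lt Finset.card_le_three h4)
    simp only [Finset.mem_insert, Finset.mem_singleton, not_or] at hl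
    obtain ⟨l1, l2, l3⟩ := hl
    set z := X i j + X j k + X k i with hz
    have z1 : ρ (swap i j) z = -z := by
      simp only [hz, map_add, hXg, swap_apply_left, swap_apply_right,
        swap_apply_of_ne_of_ne (Ne.symm hik) (Ne.symm hjk)]
      rw [hXs i j, hXs k i, hXs j k]; abel
    have z2 : ρ (swap j k) z = -z := by
      simp only [hz, map_add, hXg, swap_apply_left, swap_apply_right,
        swap_apply_of_ne_of_ne hij hik]
      rw [hXs i j, hXs k i, hXs j k]; abel
    have z3 : ρ (swap k i) z = -z := by
      simp only [hz, map_add, hXg, swap_apply_left, swap_apply_right,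
        swap_apply_of_ne_of_ne hjk (Ne.symm hij)]
      rw [hXs i j, hXs k i, hXs j k]; abel
    have f1 : ρ (swap k l) z = z := H i j k l (by unfold Dist; grind) z z1
    have f2 : ρ (swap i l) z = z := H j k i l (by unfold Dist; grind) z z2
    have f3 : ρ (swap k i) z = z := by
      have := rho_swap ρ (swap k l) i l z
      rw [f2, f1, swap_apply_right, swap_apply_of_ne_of_ne hik (Ne.symm l1), swap_comm] at this
      exact this.symm
    rw [f3] at z3
    have : (2 : ℂ) • z = 0 := by
      rw [two_smul]; nth_rewrite 1 [z3]; simp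
    have z0 : z = 0 := by simpa using this
    rw [hz, hXs i k] at z0
    rw [← sub_eq_zero, sub_eq_add_neg]; exact z0
  have hXne : ∀ i j, i ≠ j → X i j ≠ 0 := by
    intro i j h e
    simp only [X, h, if_false] at e
    apply hx0
    apply rho_inj ρ (G i j)
    rw [e, map_zero]
  refine ⟨fun i => ∑ j, X i j, ?_, ?_⟩
  · intro g i
    simp only [map_sum, hXg]
    exact Equiv.sum_comp g (fun j => X (g i) j)
  · intro i k hik e
    have e2 : ∑ j, X i j - ∑ j, X k j = (Fintype.card α : ℂ) • X i k := by
      rw [← Finset.sum_sub_distrib]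
      have : ∀ j, X i j - X k j = X i k := by
        intro j
        rw [hXs j k, sub_neg_eq_add, hc]
      simp [this, Nat.cast_smul_eq_nsmul]
    simp only at e
    rw [e, sub_self] at e2
    have h0 : (Fintype.card α : ℂ) ≠ 0 := by
      have : Fintype.card α ≠ 0 := by omega
      exact_mod_cast this
    rcases smul_eq_zero.1 e2.symm with h | h
    · exact h0 h
    · exact hXne i k hik h

/-- The linear map attached to a family. -/
noncomputable def fmap (Y : α → V) : (α → ℂ) →ₗ[ℂ] V := Fintype.linearCombination ℂ Y

theorem fmap_apply (Y : α → V) (c : α → ℂ) : fmap Y c = ∑ i, c i • Y i := rfl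

theorem fmap_equiv {Y : α → V} (hY : ∀ g i, ρ g (Y i) = Y (g i)) (g : Perm α) (c : α → ℂ) :
    ρ g (fmap Y c) = fmap Y (fun i => c (g⁻¹ i)) := by
  rw [fmap_apply, fmap_apply, map_sum]
  simp only [map_smul, hY]
  rw [← Equiv.sum_comp g (fun i => c (g⁻¹ i) • Y i)]
  simp

theorem ker_le {Y : α → V} (hY : ∀ g i, ρ g (Y i) = Y (g i)) (hne : ∀ i j, i ≠ j → Y i ≠ Y j) :
    LinearMap.ker (fmap Y) ≤ Submodule.span ℂ {(fun _ => 1 : α → ℂ)} := by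
  intro c hc
  rw [LinearMap.mem_ker] at hc
  have hij : ∀ i j, c i = c j := by
    intro i j
    by_contra h
    have hne' : i ≠ j := fun e => h (by rw [e])
    have h1 := fmap_equiv ρ hY (swap i j) c
    rw [hc, map_zero] at h1
    have h2 : fmap Y (c - fun k => c ((swap i j)⁻¹ k)) = 0 := by
      rw [map_sub, hc, ← h1, sub_zero]
    have h3 : (c - fun k => c ((swap i j)⁻¹ k)) =
        (c i - c j) • (Pi.single i 1 - Pi.single j 1 : α → ℂ) := by
      ext k
      by_cases k1 : k = i
      · subst k1; simp [hne']
      by_cases k2 : k = j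
      · subst k2; simp [Ne.symm hne']
      simp [k1, k2, swap_apply_of_ne_of_ne]
    rw [h3, map_smul, map_sub] at h2
    have hs : ∀ i, fmap Y (Pi.single i 1) = Y i := by
      intro i
      simp [fmap]
    rw [hs, hs] at h2
    rcases smul_eq_zero.1 h2 with h' | h'
    · exact h (sub_eq_zero.1 h')
    · exact hne i j hne' (sub_eq_zero.1 h')
  rw [Submodule.mem_span_singleton]
  by_cases hα : Nonempty α
  · obtain ⟨i⟩ := hα
    exact ⟨c i, by ext j; simp [hij i j]⟩
  · exact ⟨0, by ext j; exact absurd ⟨j⟩ hα⟩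

theorem dim_ge [FiniteDimensional ℂ V] {Y : α → V} (hY : ∀ g i, ρ g (Y i) = Y (g i))
    (hne : ∀ i j, i ≠ j → Y i ≠ Y j) : Fintype.card α ≤ Module.finrank ℂ V + 1 := by
  have h1 := LinearMap.finrank_range_add_finrank_ker (fmap Y)
  have h2 := Submodule.finrank_mono (ker_le ρ hY hne)
  have h3 : Module.finrank ℂ (Submodule.span ℂ {(fun _ => 1 : α → ℂ)}) ≤ 1 := by
    simpa using finrank_span_le_card (R := ℂ) ({(fun _ => 1 : α → ℂ)} : Set (α → ℂ))
  have h4 := Submodule.finrank_le (LinearMap.range (fmap Y))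
  rw [Module.finrank_fintype_fun_eq_card] at h1
  omega

/-- Reflection case. -/
theorem reflection [FiniteDimensional ℂ V] {a b c d : α} (h : Dist a b c d)
    (hdim : Module.finrank ℂ V + 2 ≤ Fintype.card α) (h4 : 4 ≤ Fintype.card α)
    (h1 : Module.finrank ℂ (eig ρ a b (-1)) = 1) : ρ (swap a b) = ρ (swap c d) := by
  obtain ⟨⟨x, hxm⟩, hx0, hx⟩ := finrank_eq_one_iff'.1 h1
  have hx0 : x ≠ 0 := fun e => hx0 (Subtype.ext e)
  have hgen : ∀ v, ρ (swap a b) v = -v → ∃ t : ℂ, t • x = v := by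
    intro v hv
    obtain ⟨t, ht⟩ := hx ⟨v, (mem_eig ρ).2 (by rw [hv]; simp)⟩
    exact ⟨t, congrArg Subtype.val ht⟩
  have hxn : ρ (swap a b) x = -x := by rw [(mem_eig ρ).1 hxm]; simp
  obtain ⟨t, ht⟩ := hgen (ρ (swap c d) x) (by rw [rho_comm ρ h, hxn, map_neg])
  have ht2 : t * t = 1 := by
    have e := rho_ss ρ c d x
    rw [← ht, map_smul, ← ht, smul_smul] at e
    have : (t * t - 1) • x = 0 := by rw [sub_smul, e, one_smul, sub_self]
    rcases smul_eq_zero.1 this with h | h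
    · exact sub_eq_zero.1 h
    · exact absurd h hx0
  rcases mul_self_eq_one_iff.1 ht2 with rfl | rfl
  · exfalso
    have H : HH ρ := HH_of ρ h (by
      intro v hv
      obtain ⟨s, rfl⟩ := hgen v hv
      rw [map_smul, ← ht, one_smul])
    obtain ⟨Y, hY, hne⟩ := key ρ h4 H h.1 hx0 hxn
    have := dim_ge ρ hY hne
    omega
  · have k1 : ∀ v, ρ (swap a b) v = -v → ρ (swap c d) v = -v := by
      intro v hv
      obtain ⟨s, rfl⟩ := hgen v hv
      rw [map_smul, ← ht]; module
    have k2 : ∀ v, ρ (swap c d) v = -v → ρ (swap a b) v = -v := by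
      intro v hv
      obtain ⟨g, g1, g2, g3, g4⟩ := exists_perm4 (α := α) h
        (show Dist c d a b by unfold Dist at *; grind)
      have := k1 (ρ g v) (by rw [← g3, ← g4, ← rho_swap, hv, map_neg])
      apply rho_inj ρ g
      rw [rho_swap, g1, g2, this, map_neg]
    ext v
    have e1 := k1 (v - ρ (swap a b) v) (by rw [map_sub, rho_ss]; abel)
    have e2 := k2 (v - ρ (swap c d) v) (by rw [map_sub, rho_ss]; abel)
    rw [map_sub] at e1 e2
    rw [rho_comm ρ h] at e2
    have : (2 : ℂ) • (ρ (swap a b) v - ρ (swap c d) v) = 0 := by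
      have e3 := congrArg₂ (· - ·) e2 e1
      rw [← sub_eq_zero] at e3
      rw [← e3]; module
    rcases smul_eq_zero.1 this with h | h
    · norm_num at h
    · exact sub_eq_zero.1 h

/-- The sign twist. -/
noncomputable def twist : Perm α →* Module.End ℂ V where
  toFun g := ((Perm.sign g : ℤ) : ℂ) • ρ g
  map_one' := by simp
  map_mul' g h := by
    ext v
    simp [smul_smul, mul_comm]

theorem twist_apply (g : Perm α) (v : V) : twist ρ g v = ((Perm.sign g : ℤ) : ℂ) • ρ g v := rfl

theorem twist_swap {a b : α} (h : a ≠ b) (v : V) : twist ρ (swap a b) v = - ρ (swap a b) v := by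
  simp [twist_apply, Perm.sign_swap h]

theorem twist_eig {a b : α} (h : a ≠ b) : eig (twist ρ) a b (-1) = eig ρ a b 1 := by
  ext v
  rw [mem_eig, mem_eig, twist_swap ρ h]; simp

/-- Restriction to the permutations of the complement of `{a, b}`, acting on an eigenspace. -/
def sub (a b : α) (ε : ℂ) : Perm {y : α // y ≠ a ∧ y ≠ b} →* Module.End ℂ (eig ρ a b ε) where
  toFun g := (ρ (Perm.ofSubtype g)).restrict (fun v hv => by
    rw [mem_eig] at hv ⊢
    have e := rho_swap ρ (Perm.ofSubtype g) a b v
    rw [Perm.ofSubtype_apply_of_not_mem g (by simp), Perm.ofSubtype_apply_of_not_mem g (by simp),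
      hv] at e
    rw [← e, map_smul])
  map_one' := by ext v; simp
  map_mul' g h := by ext v; simp

theorem card_sub {a b : α} (h : a ≠ b) :
    Fintype.card {y : α // y ≠ a ∧ y ≠ b} + 2 = Fintype.card α := by
  have h1 : Fintype.card {y : α // y ≠ a ∧ y ≠ b} = (Finset.univ \ {a, b} : Finset α).card := by
    rw [Fintype.card_subtype]
    congr 1
    ext y; simp
  have h2 := Finset.card_sdiff_add_card_eq_card (Finset.subset_univ ({a, b} : Finset α))
  rw [Finset.card_pair h, Finset.card_univ] at h2
  omega

end

theorem small (n : ℕ) : ∀ (α : Type) [Fintype α] [DecidableEq α] (V : Type u) [AddCommGroup V]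
    [Module ℂ V] [FiniteDimensional ℂ V] (ρ : Perm α →* Module.End ℂ V),
    Fintype.card α = n → 4 ≤ n → Module.finrank ℂ V + 2 ≤ n →
    ∀ a b c d : α, Dist a b c d → ρ (swap a b) = ρ (swap c d) := by
  induction n using Nat.strong_induction_on with
  | _ n ih =>
  intro α _ _ V _ _ _ ρ hn h4 hdim a b c d h
  have hsum := eig_finrank ρ a b
  by_cases c1 : Module.finrank ℂ (eig ρ a b (-1)) = 1
  · exact reflection ρ h (by omega) (by omega) c1
  by_cases c2 : Module.finrank ℂ (eig ρ a b 1) = 1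
  · have := reflection (twist ρ) h (by omega) (by omega) (by rw [twist_eig ρ h.1]; exact c2)
    ext v
    have e := LinearMap.congr_fun this v
    rw [twist_swap ρ h.1, twist_swap ρ h.2.2.2.2.2] at e
    exact neg_injective e
  have scal : ∀ ε : ℂ, eig ρ a b ε = ⊤ → ρ (swap a b) = ρ (swap c d) := by
    intro ε hε
    have hs : ∀ v, ρ (swap a b) v = ε • v := fun v => (mem_eig ρ).1 (by rw [hε]; trivial)
    obtain ⟨g, g1, g2⟩ := exists_perm2 h.1 h.2.2.2.2.2
    ext v
    have e := rho_swap ρ g a b (ρ g⁻¹ v)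
    rw [g1, g2, rho_inv', hs, map_smul, rho_inv'] at e
    rw [hs, e]
  by_cases c3 : Module.finrank ℂ (eig ρ a b (-1)) = 0
  · exact scal 1 (Submodule.eq_top_of_finrank_eq (by omega))
  by_cases c4 : Module.finrank ℂ (eig ρ a b 1) = 0
  · exact scal (-1) (Submodule.eq_top_of_finrank_eq (by omega))
  have hcard := card_sub h.1
  obtain ⟨e, he⟩ := fresh ({a, b, c, d} : Finset α)
    (lt_of_le_of_lt Finset.card_le_four (by omega))
  obtain ⟨f, hf⟩ := fresh ({a, b, c, d, e} : Finset α)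
    (lt_of_le_of_lt Finset.card_le_five (by omega))
  simp only [Finset.mem_insert, Finset.mem_singleton, not_or] at he hf
  obtain ⟨h1, h2, h3, h5, h6, h7⟩ := h
  have hsub : ∀ ε : ℂ, Module.finrank ℂ (eig ρ a b ε) + 2 ≤ n - 2 →
      ∀ v ∈ eig ρ a b ε, ρ (swap c d) v = ρ (swap e f) v := by
    intro ε hε v hv
    have := ih (n - 2) (by omega) {y : α // y ≠ a ∧ y ≠ b} (eig ρ a b ε) (sub ρ a b ε) (by omega)
      (by omega) hε ⟨c, by grind⟩ ⟨d, by grind⟩ ⟨e, by grind⟩ ⟨f, by grind⟩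
      (by unfold Dist; grind)
    have := congrArg Subtype.val (LinearMap.congr_fun this ⟨v, hv⟩)
    simpa [sub, Perm.ofSubtype_swap_eq] using this
  refine swap_conj_all ρ (a := c) (b := d) (c := e) (d := f) (by unfold Dist; grind) ?_ a b c d
    ⟨h1, h2, h3, h5, h6, h7⟩
  ext v
  have hv : v ∈ eig ρ a b 1 ⊔ eig ρ a b (-1) := by
    rw [(eig_compl ρ a b).sup_eq_top]; trivial
  obtain ⟨v1, hv1, v2, hv2, rfl⟩ := Submodule.mem_sup.1 hv
  rw [map_add, map_add, hsub 1 (by omega) v1 hv1, hsub (-1) (by omega) v2 hv2]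

section
variable {α : Type} [Fintype α] [DecidableEq α]
variable {V : Type u} [AddCommGroup V] [Module ℂ V] (ρ : Perm α →* Module.End ℂ V)

/-- Irreducibility. -/
def Irr : Prop := ∀ p : Submodule ℂ V, (∀ g, ∀ v ∈ p, ρ g v ∈ p) → p = ⊥ ∨ p = ⊤

theorem twist_irr (h : Irr ρ) : Irr (twist ρ) := by
  intro p hp
  apply h
  intro g v hv
  have := p.smul_mem ((Perm.sign g : ℤ) : ℂ) (hp g v hv)
  rw [twist_apply, smul_smul] at this
  have e : (((Perm.sign g : ℤ) : ℂ)) * ((Perm.sign g : ℤ) : ℂ) = 1 := by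
    rw [← Int.cast_mul, Int.units_coe_mul_self]; simp
  rwa [e, one_smul] at this

theorem no_common (h : Irr ρ) (hd : 2 ≤ Module.finrank ℂ V) {v : V} (hv : v ≠ 0) (ε : ℂ)
    (hs : ∀ a b : α, a ≠ b → ρ (swap a b) v = ε • v) : False := by
  have hm : ∀ g : Perm α, ρ g v ∈ Submodule.span ℂ {v} := by
    intro g
    induction g using Perm.swap_induction_on with
    | one => rw [map_one]; exact Submodule.mem_span_singleton_self v
    | swap_mul f a b hab ih =>
      obtain ⟨t, ht⟩ := Submodule.mem_span_singleton.1 ih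
      rw [rho_mul, ← ht, map_smul, hs a b hab]
      exact Submodule.smul_mem _ _ (Submodule.smul_mem _ _ (Submodule.mem_span_singleton_self v))
  rcases h (Submodule.span ℂ {v}) (by
    intro g w hw
    obtain ⟨t, rfl⟩ := Submodule.mem_span_singleton.1 hw
    rw [map_smul]
    exact Submodule.smul_mem _ _ (hm g)) with h | h
  · exact hv (by simpa using h)
  · have := finrank_span_singleton (K := ℂ) hv
    rw [h, finrank_top] at this
    omega

theorem half [FiniteDimensional ℂ V] (hk : 7 ≤ Fintype.card α) (h : Irr ρ)
    (hd : 2 ≤ Module.finrank ℂ V) {a b : α} (hab : a ≠ b)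
    (hU : Module.finrank ℂ (eig ρ a b (-1)) + 4 ≤ Fintype.card α) :
    ∃ Y : α → V, (∀ g i, ρ g (Y i) = Y (g i)) ∧ ∀ i j, i ≠ j → Y i ≠ Y j := by
  have hcard := card_sub hab
  -- on the negated space of `a b`, disjoint transpositions agree
  have R0 : ∀ c d e f, Dist c d e f → a ≠ c → a ≠ d → a ≠ e → a ≠ f → b ≠ c → b ≠ d → b ≠ e →
      b ≠ f → ∀ v, ρ (swap a b) v = -v → ρ (swap c d) v = ρ (swap e f) v := by
    intro c d e f hD h1 h2 h3 h4 h5 h6 h7 h8 v hv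
    have := small (Fintype.card {y : α // y ≠ a ∧ y ≠ b}) {y : α // y ≠ a ∧ y ≠ b}
      (eig ρ a b (-1)) (sub ρ a b (-1)) rfl (by omega) (by omega)
      ⟨c, by grind⟩ ⟨d, by grind⟩ ⟨e, by grind⟩ ⟨f, by grind⟩ (by unfold Dist at *; grind)
    have := congrArg Subtype.val (LinearMap.congr_fun this ⟨v, (mem_eig ρ).2 (by rw [hv]; simp)⟩)
    simpa [sub, Perm.ofSubtype_swap_eq] using this
  have R : ∀ a' b' c d e f, a' ≠ b' → Dist c d e f → a' ≠ c → a' ≠ d → a' ≠ e → a' ≠ f → b' ≠ c →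
      b' ≠ d → b' ≠ e → b' ≠ f → ∀ v, ρ (swap a' b') v = -v →
      ρ (swap c d) v = -v → ρ (swap e f) v = -v := by
    intro a' b' c d e f hab' hD h1 h2 h3 h4 h5 h6 h7 h8 v hv hv2
    obtain ⟨g, g1, g2⟩ := exists_perm2 hab' hab
    have hD' : Dist (g c) (g d) (g e) (g f) := by
      unfold Dist at *; simpa [g.injective.eq_iff] using hD
    have := R0 (g c) (g d) (g e) (g f) hD' (by rw [← g1]; simpa) (by rw [← g1]; simpa)
      (by rw [← g1]; simpa) (by rw [← g1]; simpa) (by rw [← g2]; simpa) (by rw [← g2]; simpa)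
      (by rw [← g2]; simpa) (by rw [← g2]; simpa) (ρ g v)
      (by rw [← g1, ← g2, ← rho_swap, hv, map_neg])
    rw [← rho_swap, ← rho_swap] at this
    rw [← rho_inj ρ g this, hv2]
  -- negated by two disjoint ones implies zero
  have S1 : ∀ a b c d e f, Dist a b c d → e ≠ f → e ≠ a → e ≠ b → f ≠ a → f ≠ b →
      ∀ v, ρ (swap a b) v = -v → ρ (swap c d) v = -v → ρ (swap e f) v = -v := by
    intro a b c d e f hD hef h1 h2 h3 h4 v hv hv2
    by_cases hdis : e ≠ c ∧ e ≠ d ∧ f ≠ c ∧ f ≠ d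
    · unfold Dist at hD
      exact R a b c d e f (by grind) (by unfold Dist; grind) (by grind) (by grind) (by grind)
        (by grind) (by grind) (by grind) (by grind) (by grind) v hv hv2
    · -- one of `e, f` lies in `{c, d}`
      have hcl : ({a, b, c, d, e, f} : Finset α).card ≤ 5 := by
        have : ({a, b, c, d, e, f} : Finset α) = {a, b, c, d, e} ∨
            ({a, b, c, d, e, f} : Finset α) = {a, b, c, d, f} := by
          by_cases hf : f = c ∨ f = d
          · left; ext y; simp; grind
          · right; ext y; simp; grind
        rcases this with h | h <;> rw [h] <;> exact Finset.card_le_five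
      obtain ⟨x, hx⟩ := fresh ({a, b, c, d, e, f} : Finset α) (by omega)
      obtain ⟨y, hy⟩ := fresh (insert x ({a, b, c, d, e, f} : Finset α))
        (lt_of_le_of_lt (Finset.card_insert_le _ _) (by omega))
      simp only [Finset.mem_insert, Finset.mem_singleton, not_or] at hx hy
      unfold Dist at hD
      have hxy : ρ (swap x y) v = -v :=
        R a b c d x y (by grind) (by unfold Dist; grind) (by grind) (by grind) (by grind)
          (by grind) (by grind) (by grind) (by grind) (by grind) v hv hv2
      exact R a b x y e f (by grind) (by unfold Dist; grind) (by grind) (by grind) (by grind)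
        (by grind) (by grind) (by grind) (by grind) (by grind) v hv hxy
  have S2 : ∀ a b c d, Dist a b c d → ∀ v, ρ (swap a b) v = -v → ρ (swap c d) v = -v →
      ρ (swap a c) v = -v := by
    intro a b c d hD v hv hv2
    obtain ⟨x, hx⟩ := fresh ({a, b, c, d} : Finset α)
      (lt_of_le_of_lt Finset.card_le_four (by omega))
    obtain ⟨y, hy⟩ := fresh ({a, b, c, d, x} : Finset α)
      (lt_of_le_of_lt Finset.card_le_five (by omega))
    obtain ⟨z, hz⟩ := fresh ({a, b, c, d, x, y} : Finset α)
      (lt_of_le_of_lt Finset.card_le_six (by omega))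
    simp only [Finset.mem_insert, Finset.mem_singleton, not_or] at hx hy hz
    unfold Dist at hD
    have q1 : ρ (swap x y) v = -v := S1 a b c d x y (by unfold Dist; grind) (by grind) (by grind)
      (by grind) (by grind) (by grind) v hv hv2
    have q2 : ρ (swap b z) v = -v := S1 c d a b b z (by unfold Dist; grind) (by grind) (by grind)
      (by grind) (by grind) (by grind) v hv2 hv
    exact S1 x y b z a c (by unfold Dist; grind) (by grind) (by grind)
      (by grind) (by grind) (by grind) v q1 q2
  have Z : ∀ a b c d, Dist a b c d → ∀ v, ρ (swap a b) v = -v → ρ (swap c d) v = -v → v = 0 := by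
    intro a b c d hD v hv hv2
    by_contra hv0
    refine no_common ρ h hd hv0 (-1) ?_
    intro e f hef
    rw [neg_one_smul]
    have hD0 := hD
    have hvb : ρ (swap b a) v = -v := by rw [swap_comm]; exact hv
    have hvd : ρ (swap d c) v = -v := by rw [swap_comm]; exact hv2
    unfold Dist at hD
    have D1 : Dist a b d c := by unfold Dist; grind
    have D2 : Dist b a c d := by unfold Dist; grind
    have D3 : Dist b a d c := by unfold Dist; grind
    have t1 := S2 a b c d hD0 v hv hv2
    have t2 := S2 a b d c D1 v hv hvd
    have t3 := S2 b a c d D2 v hvb hv2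
    have t4 := S2 b a d c D3 v hvb hvd
    by_cases u1 : e ≠ a ∧ e ≠ b ∧ f ≠ a ∧ f ≠ b
    · exact S1 a b c d e f hD0 hef u1.1 u1.2.1 u1.2.2.1 u1.2.2.2 v hv hv2
    by_cases u2 : e ≠ c ∧ e ≠ d ∧ f ≠ c ∧ f ≠ d
    · exact S1 c d a b e f (by unfold Dist; grind) hef u2.1 u2.2.1 u2.2.2.1 u2.2.2.2 v hv2 hv
    have hcases : (e = a ∧ f = c) ∨ (e = a ∧ f = d) ∨ (e = b ∧ f = c) ∨ (e = b ∧ f = d) ∨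
        (f = a ∧ e = c) ∨ (f = a ∧ e = d) ∨ (f = b ∧ e = c) ∨ (f = b ∧ e = d) := by grind
    rcases hcases with ⟨rfl, rfl⟩ | ⟨rfl, rfl⟩ | ⟨rfl, rfl⟩ | ⟨rfl, rfl⟩ | ⟨rfl, rfl⟩ |
      ⟨rfl, rfl⟩ | ⟨rfl, rfl⟩ | ⟨rfl, rfl⟩ <;> first | assumption | (rw [swap_comm]; assumption)
  have H : HH ρ := by
    intro a b c d hD v hv
    have := Z a b c d hD (v - ρ (swap c d) v) (by rw [map_sub, rho_comm ρ hD, hv, map_neg]; abel)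
      (by rw [map_sub, rho_ss]; abel)
    exact (sub_eq_zero.1 this).symm
  -- there is a negated vector
  have : ∃ x : V, x ≠ 0 ∧ ρ (swap a b) x = -x := by
    by_contra hc
    push Not at hc
    have htriv : ∀ v, ρ (swap a b) v = v := by
      intro v
      by_contra hv
      exact hc (v - ρ (swap a b) v) (fun e => hv (sub_eq_zero.1 e).symm)
        (by rw [map_sub, rho_ss]; abel)
    have : Nontrivial V := Module.nontrivial_of_finrank_pos (R := ℂ) (by omega)
    obtain ⟨v, hv⟩ := exists_ne (0 : V)
    refine no_common ρ h hd hv 1 ?_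
    intro c d hcd
    obtain ⟨g, g1, g2⟩ := exists_perm2 hab hcd
    have e := rho_swap ρ g a b (ρ g⁻¹ v)
    rw [g1, g2, rho_inv', htriv, rho_inv'] at e
    rw [← e, one_smul]
  obtain ⟨x, hx0, hx⟩ := this
  exact key ρ (by omega) H hab hx0 hx

theorem exists_Y [FiniteDimensional ℂ V] (hk : 7 ≤ Fintype.card α) (h : Irr ρ)
    (hd : Module.finrank ℂ V + 1 = Fintype.card α) :
    (∃ Y : α → V, (∀ g i, ρ g (Y i) = Y (g i)) ∧ ∀ i j, i ≠ j → Y i ≠ Y j) ∨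
    (∃ Y : α → V, (∀ g i, twist ρ g (Y i) = Y (g i)) ∧ ∀ i j, i ≠ j → Y i ≠ Y j) := by
  obtain ⟨a, b, hab⟩ := Fintype.exists_pair_of_one_lt_card (α := α) (by omega)
  have hsum := eig_finrank ρ a b
  by_cases hc : Module.finrank ℂ (eig ρ a b (-1)) + 4 ≤ Fintype.card α
  · exact Or.inl (half ρ hk h (by omega) hab hc)
  · exact Or.inr (half (twist ρ) hk (twist_irr ρ h) (by omega) hab
      (by rw [twist_eig ρ hab]; omega))

theorem surj_ker [FiniteDimensional ℂ V] (hk : 7 ≤ Fintype.card α) (h : Irr ρ)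
    (hd : Module.finrank ℂ V + 1 = Fintype.card α) {Y : α → V}
    (hY : ∀ g i, ρ g (Y i) = Y (g i)) (hne : ∀ i j, i ≠ j → Y i ≠ Y j) :
    Function.Surjective (fmap Y) ∧
      LinearMap.ker (fmap Y) = Submodule.span ℂ {(fun _ => 1 : α → ℂ)} := by
  have hs : LinearMap.range (fmap Y) = ⊤ := by
    rcases h (LinearMap.range (fmap Y)) (by
      rintro g _ ⟨c, rfl⟩
      exact ⟨_, (fmap_equiv ρ hY g c).symm⟩) with h | h
    · exfalso
      obtain ⟨a, b, hab⟩ := Fintype.exists_pair_of_one_lt_card (α := α) (by omega)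
      have h0 : ∀ i, Y i = 0 := by
        intro i
        have : fmap Y (Pi.single i 1) ∈ LinearMap.range (fmap Y) := ⟨_, rfl⟩
        rw [h] at this
        simpa [fmap] using this
      exact hne a b hab (by rw [h0, h0])
    · exact h
  refine ⟨LinearMap.range_eq_top.1 hs, Submodule.eq_of_le_of_finrank_le (ker_le ρ hY hne) ?_⟩
  have h1 := LinearMap.finrank_range_add_finrank_ker (fmap Y)
  have h3 : Module.finrank ℂ (Submodule.span ℂ {(fun _ => 1 : α → ℂ)}) ≤ 1 := by
    simpa using finrank_span_le_card (R := ℂ) ({(fun _ => 1 : α → ℂ)} : Set (α → ℂ))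
  rw [Module.finrank_fintype_fun_eq_card, hs, finrank_top] at h1
  omega

end

theorem iso {α : Type} [Fintype α] [DecidableEq α] {V : Type*} {W : Type*} [AddCommGroup V]
    [Module ℂ V] [AddCommGroup W] [Module ℂ W] [FiniteDimensional ℂ V] [FiniteDimensional ℂ W]
    (ρ : Perm α →* Module.End ℂ V) (σ : Perm α →* Module.End ℂ W)
    (hk : 7 ≤ Fintype.card α) (h : Irr ρ) (h' : Irr σ)
    (hd : Module.finrank ℂ V + 1 = Fintype.card α) (hd' : Module.finrank ℂ W + 1 = Fintype.card α)
    (hY : ∃ Y : α → V, (∀ g i, ρ g (Y i) = Y (g i)) ∧ ∀ i j, i ≠ j → Y i ≠ Y j)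
    (hY' : ∃ Y : α → W, (∀ g i, σ g (Y i) = Y (g i)) ∧ ∀ i j, i ≠ j → Y i ≠ Y j) :
    ∃ T : V ≃ₗ[ℂ] W, ∀ g v, T (ρ g v) = σ g (T v) := by
  obtain ⟨Y, hY, hne⟩ := hY
  obtain ⟨Y', hY', hne'⟩ := hY'
  obtain ⟨s, k⟩ := surj_ker ρ hk h hd hY hne
  obtain ⟨s', k'⟩ := surj_ker σ hk h' hd' hY' hne'
  let T : V ≃ₗ[ℂ] W := (LinearMap.quotKerEquivOfSurjective (fmap Y) s).symm ≪≫ₗ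
    Submodule.quotEquivOfEq _ _ (k.trans k'.symm) ≪≫ₗ
    LinearMap.quotKerEquivOfSurjective (fmap Y') s'
  have hT : ∀ c, T (fmap Y c) = fmap Y' c := by
    intro c
    have e : (LinearMap.quotKerEquivOfSurjective (fmap Y) s).symm (fmap Y c) =
        Submodule.Quotient.mk c := by
      rw [LinearEquiv.symm_apply_eq]; rfl
    simp only [T, LinearEquiv.trans_apply, e]
    rfl
  refine ⟨T, fun g v => ?_⟩
  obtain ⟨c, rfl⟩ := s v
  rw [fmap_equiv ρ hY, hT, hT, fmap_equiv σ hY']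

end SymSmall

/-- For `k ≥ 7`, any two irreducible complex representations of `S_k` of
dimension `k - 1` are isomorphic either directly or after twisting by the sign
character. -/
theorem stmt_2 (k : ℕ) (hk : 7 ≤ k)
    (V W : Type*) [AddCommGroup V] [Module ℂ V] [AddCommGroup W] [Module ℂ W]
    (hV : Module.finrank ℂ V = k - 1) (hW : Module.finrank ℂ W = k - 1)
    (ρ : Equiv.Perm (Fin k) →* LinearMap.GeneralLinearGroup ℂ V)
    (σ : Equiv.Perm (Fin k) →* LinearMap.GeneralLinearGroup ℂ W)
    (hρ : ∀ p : Submodule ℂ V,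
      (∀ g : Equiv.Perm (Fin k), ∀ v ∈ p, (ρ g : V →ₗ[ℂ] V) v ∈ p) → p = ⊥ ∨ p = ⊤)
    (hσ : ∀ p : Submodule ℂ W,
      (∀ g : Equiv.Perm (Fin k), ∀ w ∈ p, (σ g : W →ₗ[ℂ] W) w ∈ p) → p = ⊥ ∨ p = ⊤) :
    ∃ T : V ≃ₗ[ℂ] W,
      (∀ (g : Equiv.Perm (Fin k)) (v : V),
        T ((ρ g : V →ₗ[ℂ] V) v) = (σ g : W →ₗ[ℂ] W) (T v)) ∨
      (∀ (g : Equiv.Perm (Fin k)) (v : V),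
        T ((ρ g : V →ₗ[ℂ] V) v) = (Equiv.Perm.sign g : ℤ) • (σ g : W →ₗ[ℂ] W) (T v)) := by
  have fV : FiniteDimensional ℂ V := Module.finite_of_finrank_pos (by omega)
  have fW : FiniteDimensional ℂ W := Module.finite_of_finrank_pos (by omega)
  let r : Equiv.Perm (Fin k) →* Module.End ℂ V := (Units.coeHom _).comp ρ
  let s : Equiv.Perm (Fin k) →* Module.End ℂ W := (Units.coeHom _).comp σ
  have ir : SymSmall.Irr r := hρ
  have is : SymSmall.Irr s := hσ
  have ck : 7 ≤ Fintype.card (Fin k) := by simpa using hk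
  have dr : Module.finrank ℂ V + 1 = Fintype.card (Fin k) := by simp; omega
  have ds : Module.finrank ℂ W + 1 = Fintype.card (Fin k) := by simp; omega
  have sq : ∀ g : Equiv.Perm (Fin k),
      (((Equiv.Perm.sign g : ℤ) : ℂ)) * ((Equiv.Perm.sign g : ℤ) : ℂ) = 1 := by
    intro g
    rw [← Int.cast_mul, Int.units_coe_mul_self]; simp
  have zs : ∀ (g : Equiv.Perm (Fin k)) (w : W),
      (Equiv.Perm.sign g : ℤ) • w = ((Equiv.Perm.sign g : ℤ) : ℂ) • w := by
    intro g w
    rw [Int.cast_smul_eq_zsmul]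
  rcases SymSmall.exists_Y r ck ir dr with h1 | h1 <;>
    rcases SymSmall.exists_Y s ck is ds with h2 | h2
  · obtain ⟨T, hT⟩ := SymSmall.iso _ _ ck ir is dr ds h1 h2
    exact ⟨T, Or.inl hT⟩
  · obtain ⟨T, hT⟩ := SymSmall.iso _ _ ck ir (SymSmall.twist_irr s is) dr ds h1 h2
    refine ⟨T, Or.inr fun g v => ?_⟩
    rw [zs]
    exact hT g v
  · obtain ⟨T, hT⟩ := SymSmall.iso _ _ ck (SymSmall.twist_irr r ir) is dr ds h1 h2
    refine ⟨T, Or.inr fun g v => ?_⟩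
    rw [zs]
    have e := hT g v
    rw [SymSmall.twist_apply, map_smul] at e
    change _ = _ • s g (T v)
    rw [← e, smul_smul, sq, one_smul]
    rfl
  · obtain ⟨T, hT⟩ := SymSmall.iso _ _ ck (SymSmall.twist_irr r ir) (SymSmall.twist_irr s is)
      dr ds h1 h2
    refine ⟨T, Or.inl fun g v => ?_⟩
    have e := congrArg (fun w => ((Equiv.Perm.sign g : ℤ) : ℂ) • w) (hT g v)
    simp only [SymSmall.twist_apply, map_smul, smul_smul, sq, one_smul] at e
    exact e
end

section
/- Let k ≥ 5 and let m be an integer with 1 ≤ m ≤ k − 2. Then the image of every group homomorphism f : S_k → GL(m, ℂ) is an abelian group. -/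
namespace SymRep

open Equiv

lemma eq_zero_of_eq_neg {V : Type} [AddCommGroup V] [Module ℂ V] {x : V} (h : x = -x) : x = 0 := by
  have h2 : (2 : ℂ) • x = 0 := by
    rw [two_smul]
    nth_rewrite 1 [h]
    exact neg_add_cancel x
  exact (smul_eq_zero.mp h2).resolve_left two_ne_zero

section
variable {α : Type} [DecidableEq α] {V : Type} [AddCommGroup V] [Module ℂ V]

lemma conj_apply (ρ : Perm α →* Module.End ℂ V) (g : Perm α) (a b : α) (x : V) :
    ρ g (ρ (swap a b) x) = ρ (swap (g a) (g b)) (ρ g x) := by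
  rw [← Module.End.mul_apply, ← Module.End.mul_apply, ← map_mul, ← map_mul, mul_swap_eq_swap_mul]

lemma swap_invol (ρ : Perm α →* Module.End ℂ V) (a b : α) (x : V) :
    ρ (swap a b) (ρ (swap a b) x) = x := by
  rw [← Module.End.mul_apply, ← map_mul, swap_mul_self, map_one, Module.End.one_apply]

lemma inv_app (ρ : Perm α →* Module.End ℂ V) (g : Perm α) (x : V) :
    ρ g (ρ g⁻¹ x) = x := by
  rw [← Module.End.mul_apply, ← map_mul, mul_inv_cancel, map_one, Module.End.one_apply]

lemma inj_app (ρ : Perm α →* Module.End ℂ V) (g : Perm α) {x : V} (h : ρ g x = 0) : x = 0 := by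
  have : ρ g⁻¹ (ρ g x) = x := by
    rw [← Module.End.mul_apply, ← map_mul, inv_mul_cancel, map_one, Module.End.one_apply]
  rw [← this, h, map_zero]

lemma exists_perm (a b c d : α) (hab : a ≠ b) (hcd : c ≠ d) :
    ∃ g : Perm α, g a = c ∧ g b = d ∧
      ∀ x, x ≠ a → x ≠ b → x ≠ c → x ≠ d → g x = x := by
  have h1 : swap a c b ≠ c := by
    intro h
    apply hab
    apply (swap a c).injective
    rw [h, swap_apply_left]
  refine ⟨swap (swap a c b) d * swap a c, ?_, ?_, ?_⟩
  · rw [Perm.mul_apply, swap_apply_left, swap_apply_of_ne_of_ne h1.symm hcd]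
  · rw [Perm.mul_apply, swap_apply_left]
  · intro x hxa hxb hxc hxd
    rw [Perm.mul_apply, swap_apply_of_ne_of_ne hxa hxc, swap_apply_of_ne_of_ne _ hxd]
    intro h
    apply hxb
    apply (swap a c).injective
    rw [← h, swap_apply_of_ne_of_ne hxa hxc]

/-- transpositions act as reflections (or trivially) -/
def Refl (ρ : Perm α →* Module.End ℂ V) (p q : α) : Prop :=
  ∀ x y : V, ρ (swap p q) x = -x → ρ (swap p q) y = -y → x ≠ 0 → ∃ s : ℂ, y = s • x

lemma refl_all (ρ : Perm α →* Module.End ℂ V) {p q : α} (hpq : p ≠ q) (h : Refl ρ p q)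
    (a b : α) (hab : a ≠ b) : Refl ρ a b := by
  obtain ⟨g, ha, hb, -⟩ := exists_perm a b p q hab hpq
  intro x y hx hy hx0
  obtain ⟨s, hs⟩ := h (ρ g x) (ρ g y)
    (by rw [← ha, ← hb, ← conj_apply, hx, map_neg]) (by rw [← ha, ← hb, ← conj_apply, hy, map_neg])
    (fun h0 => hx0 (inj_app ρ g h0))
  refine ⟨s, ?_⟩
  rw [← sub_eq_zero]
  apply inj_app ρ g
  rw [map_sub, map_smul, hs, sub_self]

lemma sub_minus (ρ : Perm α →* Module.End ℂ V) (p q : α) (x : V) :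
    ρ (swap p q) (ρ (swap p q) x - x) = -(ρ (swap p q) x - x) := by
  rw [map_sub, swap_invol, neg_sub]

lemma refl_case [Fintype α] [FiniteDimensional ℂ V] (ρ : Perm α →* Module.End ℂ V)
    (hd : Module.finrank ℂ V + 2 ≤ Fintype.card α)
    (H : ∀ p q : α, p ≠ q → Refl ρ p q)
    (a b c d : α) (hab : a ≠ b) (hac : a ≠ c) (had : a ≠ d) (hbc : b ≠ c) (hbd : b ≠ d)
    (hcd : c ≠ d) : ρ (swap a b * swap c d) = 1 := by
  by_contra hne
  -- nonzero vector
  have hv : ∃ v : V, v ≠ 0 ∧ ρ (swap a b) v = -v := by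
    by_contra hcon
    push Not at hcon
    have key : ∀ x, ρ (swap a b) x = x := by
      intro x
      by_contra hx
      exact hcon _ (sub_ne_zero.mpr hx) (sub_minus ρ a b x)
    obtain ⟨g, ha, hb, -⟩ := exists_perm a b c d hab hcd
    apply hne
    ext x
    rw [map_mul, Module.End.mul_apply, key, Module.End.one_apply]
    have := conj_apply ρ g a b (ρ g⁻¹ x)
    rw [key, inv_app, ha, hb] at this
    exact this.symm
  obtain ⟨v, hv0, hv⟩ := hv
  have two : ∀ x : V, x = -x → x = 0 := fun x hx => eq_zero_of_eq_neg hx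
  -- disjoint transpositions fix v
  have F1 : ∀ j l, j ≠ l → j ≠ a → j ≠ b → l ≠ a → l ≠ b → ρ (swap j l) v = v := by
    intro j l hjl hja hjb hla hlb
    have hc : ∀ x, ρ (swap j l) (ρ (swap a b) x) = ρ (swap a b) (ρ (swap j l) x) := by
      intro x
      rw [conj_apply, swap_apply_of_ne_of_ne hja.symm hla.symm,
        swap_apply_of_ne_of_ne hjb.symm hlb.symm]
    obtain ⟨s, hs⟩ := H a b hab v (ρ (swap j l) v) hv (by rw [← hc, hv, map_neg]) hv0
    have h2 : (s * s) • v = (1 : ℂ) • v := by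
      rw [one_smul, mul_smul, ← hs, ← map_smul, ← hs, swap_invol]
    have h3 : s * s = 1 := smul_left_injective ℂ hv0 h2
    rcases mul_self_eq_one_iff.mp h3 with h | h
    · rw [hs, h, one_smul]
    exfalso
    have hs' : ρ (swap j l) v = -v := by rw [hs, h, neg_one_smul]
    have hu : ∀ x, ρ (swap a b) (ρ (swap j l) x) = x := by
      intro x
      obtain ⟨s1, h1⟩ := H j l hjl v _ hs' (sub_minus ρ j l x) hv0
      obtain ⟨s2, h2⟩ := H a b hab v _ hv (sub_minus ρ a b x) hv0
      have h1' : ρ (swap j l) x = x + s1 • v := by rw [← h1]; abel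
      have h2' : ρ (swap a b) x = x + s2 • v := by rw [← h2]; abel
      have e1 : ρ (swap a b) (ρ (swap j l) x) = x + (s2 - s1) • v := by
        rw [h1', map_add, map_smul, hv, h2']; module
      have e2 : ρ (swap j l) (ρ (swap a b) x) = x + (s1 - s2) • v := by
        rw [h2', map_add, map_smul, hs', h1']; module
      have e3 := hc x
      rw [e1, e2] at e3
      have e4 : (s2 - s1) • v = 0 := by
        apply two
        have := add_left_cancel e3
        rw [← neg_smul, neg_sub]; exact this.symm
      rw [e1, e4, add_zero]
    obtain ⟨g, hj, hl, hg⟩ := exists_perm j l c d hjl hcd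
    apply hne
    ext x
    rw [map_mul, Module.End.mul_apply, Module.End.one_apply]
    have := congrArg (ρ g) (hu (ρ g⁻¹ x))
    rw [conj_apply, conj_apply, inv_app, hj, hl, hg a hja.symm hla.symm hac had,
      hg b hjb.symm hlb.symm hbc hbd] at this
    exact this
  obtain ⟨e, he⟩ : ∃ e : α → V, ∀ j, e j = ρ (swap b j) v := ⟨_, fun _ => rfl⟩
  have e0 : ∀ j, e j ≠ 0 := fun j h => hv0 (inj_app ρ (swap b j) (by rw [← he, h]))
  have F2 : ∀ j, j ≠ a → ρ (swap a j) (e j) = - e j := by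
    intro j hj
    have := conj_apply ρ (swap b j) a b v
    rw [hv, map_neg, swap_apply_left, swap_apply_of_ne_of_ne hab hj.symm] at this
    rw [he, this]
  have F4 : ∀ j l p, j ≠ l → j ≠ a → l ≠ a → p ≠ a → p ≠ j → p ≠ l →
      ρ (swap j l) (e p) = e p := by
    intro j l p hjl hj hl hp hpj hpl
    have key : ∀ x, x ≠ a → x ≠ p → swap b p x ≠ a ∧ swap b p x ≠ b := by
      intro x hx hxp
      constructor
      · intro h
        apply hx
        apply (swap b p).injective
        rw [h, swap_apply_of_ne_of_ne hab hp.symm]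
      · intro h
        apply hxp
        apply (swap b p).injective
        rw [h, swap_apply_right]
    have := conj_apply ρ (swap b p) (swap b p j) (swap b p l) v
    rw [F1 _ _ (fun h => hjl ((swap b p).injective h)) (key j hj hpj.symm).1 (key j hj hpj.symm).2
      (key l hl hpl.symm).1 (key l hl hpl.symm).2] at this
    simp only [swap_apply_self] at this
    rw [he, ← this]
  have F3 : ∀ j l, j ≠ l → j ≠ a → l ≠ a → ρ (swap j l) (e j) = e l := by
    intro j l hjl hj hl
    by_cases hjb : j = b
    · subst hjb
      rw [he, he, swap_self]
      congr 1
      exact congrFun (congrArg DFunLike.coe (map_one ρ)) v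
    by_cases hlb : l = b
    · subst hlb
      have : ρ (swap l l) v = v := by
        rw [swap_self]; exact congrFun (congrArg DFunLike.coe (map_one ρ)) v
      rw [he, he, this, swap_comm j l, swap_invol]
    · have := conj_apply ρ (swap j l) b j v
      rw [swap_apply_left, swap_apply_of_ne_of_ne (Ne.symm hjb) (Ne.symm hlb),
        F1 j l hjl hj hjb hl hlb] at this
      rw [he, he, this]
  have G : ∀ j l, j ≠ l → j ≠ a → l ≠ a → ∃ s : ℂ, ρ (swap a j) (e l) = e l - s • e j := by
    intro j l hjl hj hl
    obtain ⟨s, hs⟩ := H a j hj.symm (e j) _ (F2 j hj) (sub_minus ρ a j (e l)) (e0 j)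
    refine ⟨-s, ?_⟩
    rw [neg_smul, ← hs]; abel
  have G1 : ∀ j l, j ≠ l → j ≠ a → l ≠ a → ρ (swap a j) (e l) = e l - e j := by
    intro j l hjl hj hl
    obtain ⟨s, hs⟩ := G j l hjl hj hl
    have hs2 : ρ (swap a l) (e j) = e j - s • e l := by
      have := conj_apply ρ (swap j l) a j (e l)
      rw [swap_apply_of_ne_of_ne hj.symm hl.symm, swap_apply_left, hs, map_sub, map_smul,
        F3 j l hjl hj hl, swap_comm j l, F3 l j hjl.symm hl hj] at this
      exact this.symm
    have br : e l = (1 - s * s) • e j + s • e l := by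
      have := conj_apply ρ (swap a j) a l (ρ (swap a j) (e j))
      rw [swap_invol, swap_apply_left, swap_apply_of_ne_of_ne hl hjl.symm, F3 j l hjl hj hl,
        F2 j hj, map_neg, map_neg, hs2, map_sub, map_smul, hs, F2 j hj] at this
      refine this.symm.trans ?_
      module
    by_cases h1 : s = 1
    · rw [hs, h1, one_smul]
    exfalso
    have h2 : e l = (1 + s) • e j := by
      have h3 : (1 - s) • e l = (1 - s) • ((1 + s) • e j) := by
        have : (1 - s) • e l = e l - s • e l := by module
        rw [this, sub_eq_iff_eq_add]
        nth_rewrite 1 [br]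
        module
      exact smul_right_injective V (sub_ne_zero.mpr (Ne.symm h1)) h3
    -- a third index
    have hp : ∃ p, p ≠ a ∧ p ≠ j ∧ p ≠ l := by
      have : ({a, j, l} : Finset α).card < ({a, b, c, d} : Finset α).card := by
        have h4 : ({a, b, c, d} : Finset α).card = 4 := by
          simp [*]
        rw [h4]
        exact lt_of_le_of_lt Finset.card_le_three (by norm_num)
      obtain ⟨p, -, hp⟩ := Finset.exists_mem_notMem_of_card_lt_card this
      simp at hp
      exact ⟨p, hp.1, hp.2.1, hp.2.2⟩
    obtain ⟨p, hpa, hpj, hpl⟩ := hp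
    have h5 := congrArg (ρ (swap l p)) h2
    rw [map_smul, F3 l p hpl.symm hl hpa, F4 l p j hpl.symm hl hpa hj hjl hpj.symm, ← h2] at h5
    have h6 := congrArg (ρ (swap j p)) h2
    rw [map_smul, F3 j p hpj.symm hj hpa, F4 j p l hpj.symm hj hpa hl hjl.symm hpl.symm, h5] at h6
    have h7 : (1 : ℂ) • e l = (1 + s) • e l := by rw [one_smul]; exact h6
    have h8 : 1 = 1 + s := smul_left_injective ℂ (e0 l) h7
    have h9 : s = 0 := by linear_combination -h8
    rw [h9] at h2 hs
    rw [add_zero, one_smul] at h2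
    rw [zero_smul, sub_zero, h2, F2 j hj] at hs
    exact e0 j (two _ hs.symm)
  have LI : LinearIndependent ℂ (fun j : {x : α // x ≠ a} => e j) := by
    rw [Fintype.linearIndependent_iff]
    intro w hw
    have key : ∀ j : {x : α // x ≠ a}, (∑ l, w l) + w j = 0 := by
      intro j
      have h1 := congrArg (ρ (swap a j)) hw
      rw [map_zero, map_sum] at h1
      have h2 : ∀ l : {x : α // x ≠ a}, ρ (swap a (j : α)) (w l • e l) =
          w l • e l - (w l + if l = j then w l else 0) • e (j : α) := by
        intro l
        rw [map_smul]
        by_cases hlj : l = j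
        · subst hlj
          rw [F2 _ l.2, if_pos rfl]; module
        · rw [G1 _ _ (fun h => hlj (Subtype.ext h.symm)) j.2 l.2, if_neg hlj]; module
      rw [Finset.sum_congr rfl (fun l _ => h2 l), Finset.sum_sub_distrib, hw, zero_sub, neg_eq_zero,
        ← Finset.sum_smul, Finset.sum_add_distrib] at h1
      rw [Finset.sum_ite_eq' Finset.univ j w, if_pos (Finset.mem_univ _)] at h1
      exact (smul_eq_zero.mp h1).resolve_right (e0 _)
    have hS : (∑ l, w l) = 0 := by
      have h1 : ∑ j : {x : α // x ≠ a}, ((∑ l, w l) + w j) = 0 :=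
        Finset.sum_eq_zero (fun j _ => key j)
      rw [Finset.sum_add_distrib, Finset.sum_const, nsmul_eq_mul, ← add_one_mul] at h1
      exact (mul_eq_zero.mp h1).resolve_left (Nat.cast_add_one_ne_zero _)
    intro i
    have := key i
    rwa [hS, zero_add] at this
  have hcard := LI.fintype_card_le_finrank
  have : Fintype.card {x : α // x ≠ a} = Fintype.card α - 1 := by
    simp
  omega

end

/-- restriction of a representation to a commuting eigenspace. -/
def eig {α V : Type} [DecidableEq α] [AddCommGroup V] [Module ℂ V]
    (ρ : Perm α →* Module.End ℂ V) (p q : α) (ε : ℂ) : Submodule ℂ V :=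
  LinearMap.ker (ρ (swap p q) - ε • (1 : Module.End ℂ V))

lemma mem_eig {α V : Type} [DecidableEq α] [AddCommGroup V] [Module ℂ V]
    (ρ : Perm α →* Module.End ℂ V) (p q : α) (ε : ℂ) (x : V) :
    x ∈ eig ρ p q ε ↔ ρ (swap p q) x = ε • x := by
  simp [eig, sub_eq_zero]

lemma stab {α V : Type} [DecidableEq α] [AddCommGroup V] [Module ℂ V]
    (ρ : Perm α →* Module.End ℂ V) (p q : α) (ε : ℂ)
    (g : Perm {x : α // x ≠ p ∧ x ≠ q}) (x : V) (hx : x ∈ eig ρ p q ε) :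
    ρ (Perm.ofSubtype g) x ∈ eig ρ p q ε := by
  rw [mem_eig] at *
  have h := conj_apply ρ (Perm.ofSubtype g) p q x
  rw [Perm.ofSubtype_apply_of_not_mem g (by simp), Perm.ofSubtype_apply_of_not_mem g (by simp)] at h
  rw [← h, hx, map_smul]

def resRep {α V : Type} [DecidableEq α] [AddCommGroup V] [Module ℂ V]
    (ρ : Perm α →* Module.End ℂ V) (p q : α) (ε : ℂ) :
    Perm {x : α // x ≠ p ∧ x ≠ q} →* Module.End ℂ (eig ρ p q ε) where
  toFun g := (ρ (Perm.ofSubtype g)).restrict (stab ρ p q ε g)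
  map_one' := by ext; simp
  map_mul' g h := by ext; simp

lemma eig_sum {α V : Type} [DecidableEq α] [Fintype α] [AddCommGroup V] [Module ℂ V]
    [FiniteDimensional ℂ V] (ρ : Perm α →* Module.End ℂ V) (p q : α) :
    Module.finrank ℂ (eig ρ p q 1) + Module.finrank ℂ (eig ρ p q (-1)) ≤ Module.finrank ℂ V := by
  have h := Submodule.finrank_sup_add_finrank_inf_eq (eig ρ p q 1) (eig ρ p q (-1))
  have h2 : eig ρ p q 1 ⊓ eig ρ p q (-1) = ⊥ := by
    rw [eq_bot_iff]
    rintro x ⟨h1, h2⟩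
    have h1' := (mem_eig ρ p q 1 x).mp h1
    have h2' := (mem_eig ρ p q (-1) x).mp h2
    rw [h1', one_smul, neg_one_smul] at h2'
    exact (Submodule.mem_bot ℂ).mpr (eq_zero_of_eq_neg h2')
  rw [h2, finrank_bot] at h
  have := Submodule.finrank_le (eig ρ p q 1 ⊔ eig ρ p q (-1))
  omega

lemma refl_of_finrank {α V : Type} [DecidableEq α] [Fintype α] [AddCommGroup V] [Module ℂ V]
    [FiniteDimensional ℂ V] (ρ : Perm α →* Module.End ℂ V) (p q : α)
    (h : Module.finrank ℂ (eig ρ p q (-1)) ≤ 1) : Refl ρ p q := by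
  intro x y hx hy hx0
  obtain ⟨v, hv⟩ := finrank_le_one_iff.mp h
  obtain ⟨s, hs⟩ := hv ⟨x, (mem_eig ρ p q (-1) x).mpr (by rw [hx, neg_one_smul])⟩
  obtain ⟨t, ht⟩ := hv ⟨y, (mem_eig ρ p q (-1) y).mpr (by rw [hy, neg_one_smul])⟩
  have hs' : s • (v : V) = x := congrArg Subtype.val hs
  have ht' : t • (v : V) = y := congrArg Subtype.val ht
  have hs0 : s ≠ 0 := by
    rintro rfl
    exact hx0 (by rw [← hs', zero_smul])
  refine ⟨t / s, ?_⟩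
  rw [← hs', ← ht', smul_smul, div_mul_cancel₀ _ hs0]

/-- twist by sign -/
def twist {α V : Type} [DecidableEq α] [Fintype α] [AddCommGroup V] [Module ℂ V]
    (ρ : Perm α →* Module.End ℂ V) : Perm α →* Module.End ℂ V where
  toFun g := (((Perm.sign g : ℤˣ) : ℤ) : ℂ) • ρ g
  map_one' := by simp
  map_mul' g h := by
    simp only [map_mul, Units.val_mul, Int.cast_mul]
    rw [smul_mul_smul_comm]

lemma twist_apply {α V : Type} [DecidableEq α] [Fintype α] [AddCommGroup V] [Module ℂ V]
    (ρ : Perm α →* Module.End ℂ V) (g : Perm α) :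
    twist ρ g = (((Perm.sign g : ℤˣ) : ℤ) : ℂ) • ρ g := rfl

lemma main_rep (n : ℕ) : ∀ (α V : Type) [DecidableEq α] [Fintype α] [AddCommGroup V] [Module ℂ V]
    [FiniteDimensional ℂ V] (ρ : Perm α →* Module.End ℂ V), Fintype.card α = n →
    Module.finrank ℂ V + 2 ≤ n →
    ∀ a b c d : α, a ≠ b → a ≠ c → a ≠ d → b ≠ c → b ≠ d → c ≠ d →
      ρ (swap a b * swap c d) = 1 := by
  induction n using Nat.strong_induction_on with
  | _ n ih =>
  intro α V _ _ _ _ _ ρ hn hd a b c d hab hac had hbc hbd hcd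
  -- reflection case
  have R : ∀ p q : α, p ≠ q → (Module.finrank ℂ (eig ρ p q 1) ≤ 1 ∨
      Module.finrank ℂ (eig ρ p q (-1)) ≤ 1) → ρ (swap a b * swap c d) = 1 := by
    rintro p q hpq (h | h)
    · have h1 : eig (twist ρ) p q (-1) = eig ρ p q 1 := by
        ext x
        rw [mem_eig, mem_eig, twist_apply, Perm.sign_swap hpq]
        simp
      have := refl_case (twist ρ) (hn ▸ hd)
        (refl_all (twist ρ) hpq (refl_of_finrank _ p q (by rw [h1]; exact h)))
        a b c d hab hac had hbc hbd hcd
      rw [twist_apply, Perm.sign_mul, Perm.sign_swap hab, Perm.sign_swap hcd] at this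
      simpa using this
    · exact refl_case ρ (hn ▸ hd) (refl_all ρ hpq (refl_of_finrank _ p q h))
        a b c d hab hac had hbc hbd hcd
  have h4 : ({a, b, c, d} : Finset α).card = 4 := by simp [*]
  by_cases h6 : n < 6
  · apply R a b hab
    have := eig_sum ρ a b
    omega
  have hpq : ∃ p q : α, p ≠ q ∧ p ∉ ({a, b, c, d} : Finset α) ∧ q ∉ ({a, b, c, d} : Finset α) := by
    have : 1 < (({a, b, c, d} : Finset α)ᶜ).card := by
      rw [Finset.card_compl, h4]; omega
    obtain ⟨p, hp, q, hq, h⟩ := Finset.one_lt_card.mp this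
    exact ⟨p, q, h, Finset.mem_compl.mp hp, Finset.mem_compl.mp hq⟩
  obtain ⟨p, q, hpq, hp, hq⟩ := hpq
  simp only [Finset.mem_insert, Finset.mem_singleton, not_or] at hp hq
  obtain ⟨hpa, hpb, hpc, hpd⟩ := hp
  obtain ⟨hqa, hqb, hqc, hqd⟩ := hq
  by_cases hR : Module.finrank ℂ (eig ρ p q 1) ≤ 1 ∨ Module.finrank ℂ (eig ρ p q (-1)) ≤ 1
  · exact R p q hpq hR
  push Not at hR
  have hsum := eig_sum ρ p q
  have hcard : Fintype.card {x : α // x ≠ p ∧ x ≠ q} = n - 2 := by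
    have h1 : Finset.univ.filter (fun x : α => x ≠ p ∧ x ≠ q) = ({p, q} : Finset α)ᶜ := by
      ext x; simp
    rw [Fintype.card_subtype, h1, Finset.card_compl, Finset.card_pair hpq, hn]
  have K : ∀ ε : ℂ, Module.finrank ℂ (eig ρ p q ε) + 4 ≤ n → ∀ x ∈ eig ρ p q ε,
      ρ (swap a b * swap c d) x = x := by
    intro ε hε x hx
    have := ih (n - 2) (by omega) {x : α // x ≠ p ∧ x ≠ q} (eig ρ p q ε) (resRep ρ p q ε)
      hcard (by omega) ⟨a, Ne.symm hpa, Ne.symm hqa⟩ ⟨b, Ne.symm hpb, Ne.symm hqb⟩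
      ⟨c, Ne.symm hpc, Ne.symm hqc⟩ ⟨d, Ne.symm hpd, Ne.symm hqd⟩
      (by simpa using hab) (by simpa using hac) (by simpa using had) (by simpa using hbc)
      (by simpa using hbd) (by simpa using hcd)
    have h2 := congrArg Subtype.val (LinearMap.congr_fun this ⟨x, hx⟩)
    have h3 : ρ (Perm.ofSubtype (swap (⟨a, Ne.symm hpa, Ne.symm hqa⟩ : {x : α // x ≠ p ∧ x ≠ q})
      ⟨b, Ne.symm hpb, Ne.symm hqb⟩ * swap (⟨c, Ne.symm hpc, Ne.symm hqc⟩ : {x : α // x ≠ p ∧ x ≠ q})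
      ⟨d, Ne.symm hpd, Ne.symm hqd⟩)) x = x := h2
    rw [map_mul, Perm.ofSubtype_swap_eq, Perm.ofSubtype_swap_eq] at h3
    exact h3
  ext x
  rw [Module.End.one_apply]
  have hx : x = (2⁻¹ : ℂ) • (x + ρ (swap p q) x) + (2⁻¹ : ℂ) • (x - ρ (swap p q) x) := by
    module
  have k1 := K 1 (by omega) (x + ρ (swap p q) x) (by
    rw [mem_eig, map_add, swap_invol, one_smul, add_comm])
  have k2 := K (-1) (by omega) (x - ρ (swap p q) x) (by
    rw [mem_eig, map_sub, swap_invol, neg_one_smul, neg_sub])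
  rw [hx, map_add, map_smul, map_smul, k1, k2]

end SymRep

/-- For `k ≥ 5` and `1 ≤ m ≤ k - 2`, the image of every homomorphism
`S_k → GL(m, ℂ)` is abelian. -/
theorem stmt_3 (k m : ℕ) (hk : 5 ≤ k) (hm1 : 1 ≤ m) (hm2 : m ≤ k - 2)
    (f : Equiv.Perm (Fin k) →* GL (Fin m) ℂ) :
    ∀ a b : Equiv.Perm (Fin k), f a * f b = f b * f a := by
  let φ : GL (Fin m) ℂ →* Module.End ℂ (Fin m → ℂ) :=
    (Matrix.toLinAlgEquiv' (R := ℂ) (n := Fin m)).toAlgHom.toMonoidHom.comp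
      (Units.coeHom (Matrix (Fin m) (Fin m) ℂ))
  have hφ : Function.Injective φ := by
    intro x y h
    exact Units.ext ((Matrix.toLinAlgEquiv' (R := ℂ) (n := Fin m)).injective h)
  have D : ∀ a b c d : Fin k, a ≠ b → a ≠ c → a ≠ d → b ≠ c → b ≠ d → c ≠ d →
      f (Equiv.swap a b) = f (Equiv.swap c d) := by
    intro a b c d h1 h2 h3 h4 h5 h6
    have := SymRep.main_rep k (Fin k) (Fin m → ℂ) (φ.comp f) (by simp) (by simp; omega)
      a b c d h1 h2 h3 h4 h5 h6
    have h7 : f (Equiv.swap a b * Equiv.swap c d) = 1 := hφ (by rw [map_one]; exact this)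
    rw [map_mul] at h7
    have h8 : f (Equiv.swap c d) * f (Equiv.swap c d) = 1 := by
      rw [← map_mul, Equiv.swap_mul_self, map_one]
    exact mul_right_cancel (h7.trans h8.symm)
  -- all transpositions commute in the image
  have C : ∀ a b c d : Fin k, a ≠ b → c ≠ d →
      Commute (f (Equiv.swap a b)) (f (Equiv.swap c d)) := by
    have E : ∀ a b c : Fin k, a ≠ b → a ≠ c →
        f (Equiv.swap a b) = f (Equiv.swap a c) := by
      intro a b c hab hac
      have : 1 < (({a, b, c} : Finset (Fin k))ᶜ).card := by
        rw [Finset.card_compl, Fintype.card_fin]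
        have : ({a, b, c} : Finset (Fin k)).card ≤ 3 := Finset.card_le_three
        omega
      obtain ⟨p, hp, q, hq, h⟩ := Finset.one_lt_card.mp this
      simp only [Finset.mem_compl, Finset.mem_insert, Finset.mem_singleton, not_or] at hp hq
      rw [D a b p q hab (Ne.symm hp.1) (Ne.symm hq.1) (Ne.symm hp.2.1) (Ne.symm hq.2.1) h,
        D a c p q hac (Ne.symm hp.1) (Ne.symm hq.1) (Ne.symm hp.2.2) (Ne.symm hq.2.2) h]
    intro a b c d hab hcd
    have : f (Equiv.swap a b) = f (Equiv.swap c d) := by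
      by_cases hac : a = c
      · subst hac; exact E a b d hab hcd
      · rw [E a b c hab hac, Equiv.swap_comm a c, E c a d (Ne.symm hac) hcd]
    rw [this]
  have C2 : ∀ (x : Equiv.Perm (Fin k)) (c d : Fin k), c ≠ d → Commute (f x) (f (Equiv.swap c d)) := by
    intro x c d hcd
    induction x using Equiv.Perm.swap_induction_on with
    | one => rw [map_one]; exact Commute.one_left _
    | swap_mul g a b hab ih => rw [map_mul]; exact (C a b c d hab hcd).mul_left ih
  intro x y
  change Commute (f x) (f y)
  induction y using Equiv.Perm.swap_induction_on with
  | one => rw [map_one]; exact Commute.one_right _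
  | swap_mul g a b hab ih => rw [map_mul]; exact (C2 x a b hab).mul_right ih
end

section
/- Let L₁, L₂, L₃, U ∈ GL(2, ℂ) satisfy: L₁L₂L₁ = L₂L₁L₂, L₂L₃L₂ = L₃L₂L₃, L₁L₃ = L₃L₁, L₁U = UL₁, L₃UL₃ = U, and L₁ is conjugate in GL(2, ℂ) to L₁⁻¹. Then L₁² = I, and moreover there exists P ∈ GL(2, ℂ) such that one of the following holds for the conjugates L'_i = P⁻¹L_iP: (1) L'₁ = L'₂ = L'₃ = λI with λ ∈ {1, −1}; (2) L'₁ = L'₂ = L'₃ = diag(1, −1); (3) L'₁ = L'₃ = [[1,1],[0,−1]] and L'₂ = [[−1,0],[1,1]]. -/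
def scal (A : Matrix (Fin 2) (Fin 2) ℂ) : Prop := A 0 1 = 0 ∧ A 1 0 = 0 ∧ A 0 0 = A 1 1

theorem scal_eq {A : Matrix (Fin 2) (Fin 2) ℂ} (h : scal A) : A = (A 0 0) • 1 := by
  obtain ⟨h1, h2, h3⟩ := h
  ext i j
  fin_cases i <;> fin_cases j <;> simp [h1, h2, h3]

theorem comm_entries {A X : Matrix (Fin 2) (Fin 2) ℂ} (h : A * X = X * A) :
    A 0 1 * X 1 0 = X 0 1 * A 1 0 ∧ A 0 1 * (X 0 0 - X 1 1) = X 0 1 * (A 0 0 - A 1 1) ∧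
    A 1 0 * (X 0 0 - X 1 1) = X 1 0 * (A 0 0 - A 1 1) := by
  have h00 := congrFun (congrFun h 0) 0
  have h01 := congrFun (congrFun h 0) 1
  have h10 := congrFun (congrFun h 1) 0
  simp only [Matrix.mul_apply, Fin.sum_univ_two] at h00 h01 h10
  refine ⟨by linear_combination h00, by linear_combination -h01, by linear_combination h10⟩

theorem comm_of_entries {A X : Matrix (Fin 2) (Fin 2) ℂ} (h :
    A 0 1 * X 1 0 = X 0 1 * A 1 0 ∧ A 0 1 * (X 0 0 - X 1 1) = X 0 1 * (A 0 0 - A 1 1) ∧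
    A 1 0 * (X 0 0 - X 1 1) = X 1 0 * (A 0 0 - A 1 1)) : A * X = X * A := by
  obtain ⟨h1, h2, h3⟩ := h
  ext i j
  fin_cases i <;> fin_cases j <;> simp [Matrix.mul_apply, Fin.sum_univ_two]
  · linear_combination h1
  · linear_combination -h2
  · linear_combination h3
  · linear_combination -h1

theorem comm_trans {A X Y : Matrix (Fin 2) (Fin 2) ℂ} (hA : ¬ scal A)
    (hX : A * X = X * A) (hY : A * Y = Y * A) : X * Y = Y * X := by
  obtain ⟨x1, x2, x3⟩ := comm_entries hX
  obtain ⟨y1, y2, y3⟩ := comm_entries hY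
  apply comm_of_entries
  unfold scal at hA
  have hA' : A 0 1 ≠ 0 ∨ A 1 0 ≠ 0 ∨ A 0 0 - A 1 1 ≠ 0 := by
    by_contra hh
    push Not at hh
    exact hA ⟨hh.1, hh.2.1, sub_eq_zero.1 hh.2.2⟩
  generalize A 0 0 - A 1 1 = a at *
  generalize X 0 0 - X 1 1 = x at *
  generalize Y 0 0 - Y 1 1 = y at *
  rcases hA' with h | h | h
  · refine ⟨?_, ?_, ?_⟩ <;> grind
  · refine ⟨?_, ?_, ?_⟩ <;> grind
  · refine ⟨?_, ?_, ?_⟩ <;> grind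

/-- A nonscalar involution can be diagonalised. -/
theorem diag_inv {L : GL (Fin 2) ℂ} (hL : ¬ scal L.1) (h2 : L * L = 1) :
    ∃ P : GL (Fin 2) ℂ, (L * P).1 = P.1 * !![1, 0; 0, -1] := by
  have h := congrArg Units.val h2
  simp only [Units.val_mul, Units.val_one] at h
  have h00 := congrFun (congrFun h 0) 0
  have h01 := congrFun (congrFun h 0) 1
  have h10 := congrFun (congrFun h 1) 0
  have h11 := congrFun (congrFun h 1) 1
  simp [Matrix.mul_apply, Fin.sum_univ_two] at h00 h01 h10 h11
  have ht : L.1 1 1 = - L.1 0 0 := by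
    unfold scal at hL
    by_contra hne
    have hne' : L.1 0 0 + L.1 1 1 ≠ 0 := fun h => hne (by linear_combination h)
    apply hL
    refine ⟨?_, ?_, ?_⟩
    · apply mul_left_cancel₀ hne'
      linear_combination h01
    · apply mul_left_cancel₀ hne'
      linear_combination h10
    · apply mul_left_cancel₀ hne'
      linear_combination h00 - h11
  have key : ∀ M : Matrix (Fin 2) (Fin 2) ℂ, M.det ≠ 0 → L.1 * M = M * !![1, 0; 0, -1] →
      ∃ P : GL (Fin 2) ℂ, (L * P).1 = P.1 * !![1, 0; 0, -1] := fun M hM hh =>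
    ⟨Matrix.GeneralLinearGroup.mkOfDetNeZero M hM, hh⟩
  have hE : L.1 = !![L.1 0 0, L.1 0 1; L.1 1 0, - L.1 0 0] := by
    rw [← ht]; exact Matrix.eta_fin_two _
  generalize L.1 0 0 = p at *
  generalize L.1 0 1 = q at *
  generalize L.1 1 0 = r at *
  rw [hE] at key
  by_cases hp : 1 + p = 0
  · have hp' : p = -1 := by linear_combination hp
    have : q * r = 0 := by rw [hp'] at h00; linear_combination h00
    rcases mul_eq_zero.1 this with h | h
    · apply key !![0, 2; 1, -r]
      · simp [Matrix.det_fin_two]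
      · subst h hp'
        ext i j; fin_cases i <;> fin_cases j <;> simp [Matrix.mul_apply, Fin.sum_univ_two] <;> ring
    · apply key !![q, 1; 2, 0]
      · simp [Matrix.det_fin_two]
      · subst h hp'
        ext i j; fin_cases i <;> fin_cases j <;> simp [Matrix.mul_apply, Fin.sum_univ_two] <;> ring
  · apply key !![1 + p, -q; r, 1 + p]
    · simp [Matrix.det_fin_two]
      intro h
      apply hp
      linear_combination (h - h00) / 2
    · ext i j; fin_cases i <;> fin_cases j <;> simp [Matrix.mul_apply, Fin.sum_univ_two]
      · linear_combination h00
      · ring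
      · ring
      · linear_combination -h00

theorem braid_diag {M : Matrix (Fin 2) (Fin 2) ℂ} (h2 : M * M = 1)
    (hb : !![1, 0; 0, -1] * M * !![1, 0; 0, -1] = M * !![1, 0; 0, -1] * M) :
    M = !![1, 0; 0, -1] ∨ ∃ b c : ℂ, b * c = 3 / 4 ∧ M = !![-1 / 2, b; c, 1 / 2] := by
  have hE := Matrix.eta_fin_two M
  generalize M 0 0 = p at *
  generalize M 0 1 = q at *
  generalize M 1 0 = r at *
  generalize M 1 1 = s at *
  subst hE
  have a00 := congrFun (congrFun h2 0) 0
  have a01 := congrFun (congrFun h2 0) 1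
  have a10 := congrFun (congrFun h2 1) 0
  have a11 := congrFun (congrFun h2 1) 1
  have b00 := congrFun (congrFun hb 0) 0
  have b01 := congrFun (congrFun hb 0) 1
  have b10 := congrFun (congrFun hb 1) 0
  have b11 := congrFun (congrFun hb 1) 1
  simp [Matrix.mul_apply, Fin.sum_univ_two] at a00 a01 a10 a11 b00 b01 b10 b11
  -- 2 p ^ 2 - p - 1 = 0
  have hp : (p - 1) * (2 * p + 1) = 0 := by linear_combination a00 - b00
  have hs : (s + 1) * (2 * s - 1) = 0 := by linear_combination a11 + b11
  rcases mul_eq_zero.1 hp with hp | hp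
  · left
    have hp : p = 1 := by linear_combination hp
    subst hp
    have : q * r = 0 := by linear_combination a00
    have hs : s = -1 := by grind
    subst hs
    have hq : q = 0 := by linear_combination (-b01)/3
    have hr : r = 0 := by linear_combination (-b10)/3
    rw [hq, hr]
  · right
    have hp : p = -1/2 := by linear_combination hp/2
    subst hp
    have h34 : q * r = 3 / 4 := by linear_combination a00
    have hq : q ≠ 0 := by rintro rfl; norm_num at h34
    have hs : s = 1 / 2 := by
      apply mul_left_cancel₀ hq
      linear_combination a01
    exact ⟨q, r, h34, by rw [hs]⟩

theorem conj_val {L P : GL (Fin 2) ℂ} {D : Matrix (Fin 2) (Fin 2) ℂ}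
    (h : L.1 * P.1 = P.1 * D) : (P⁻¹ * L * P).1 = D := by
  rw [mul_assoc, Units.val_mul, Units.val_mul, h, ← mul_assoc, ← Units.val_mul]
  simp

/-- Lemma 5.1: if `L₁, L₂, L₃, U ∈ GL(2, ℂ)` satisfy the braid relations
`L₁L₂L₁ = L₂L₁L₂`, `L₂L₃L₂ = L₃L₂L₃`, the commutations `L₁L₃ = L₃L₁`,
`L₁U = UL₁`, the relation `L₃UL₃ = U`, and `L₁` is conjugate to `L₁⁻¹`, then
`L₁² = 1` and, up to a simultaneous conjugation, `(L₁, L₂, L₃)` is one of the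
three explicit triples. -/
theorem stmt_5 (L₁ L₂ L₃ U : GL (Fin 2) ℂ)
    (h12 : L₁ * L₂ * L₁ = L₂ * L₁ * L₂)
    (h23 : L₂ * L₃ * L₂ = L₃ * L₂ * L₃)
    (h13 : L₁ * L₃ = L₃ * L₁)
    (h1U : L₁ * U = U * L₁)
    (h3U : L₃ * U * L₃ = U)
    (hconj : ∃ R : GL (Fin 2) ℂ, R * L₁ * R⁻¹ = L₁⁻¹) :
    L₁ ^ 2 = 1 ∧
    ∃ P : GL (Fin 2) ℂ,
      ((∃ l : ℂ, (l = 1 ∨ l = -1) ∧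
          ((P⁻¹ * L₁ * P : GL (Fin 2) ℂ) : Matrix (Fin 2) (Fin 2) ℂ) = l • 1 ∧
          ((P⁻¹ * L₂ * P : GL (Fin 2) ℂ) : Matrix (Fin 2) (Fin 2) ℂ) = l • 1 ∧
          ((P⁻¹ * L₃ * P : GL (Fin 2) ℂ) : Matrix (Fin 2) (Fin 2) ℂ) = l • 1) ∨
      (((P⁻¹ * L₁ * P : GL (Fin 2) ℂ) : Matrix (Fin 2) (Fin 2) ℂ) = !![1, 0; 0, -1] ∧
        ((P⁻¹ * L₂ * P : GL (Fin 2) ℂ) : Matrix (Fin 2) (Fin 2) ℂ) = !![1, 0; 0, -1] ∧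
        ((P⁻¹ * L₃ * P : GL (Fin 2) ℂ) : Matrix (Fin 2) (Fin 2) ℂ) = !![1, 0; 0, -1]) ∨
      (((P⁻¹ * L₁ * P : GL (Fin 2) ℂ) : Matrix (Fin 2) (Fin 2) ℂ) = !![1, 1; 0, -1] ∧
        ((P⁻¹ * L₂ * P : GL (Fin 2) ℂ) : Matrix (Fin 2) (Fin 2) ℂ) = !![-1, 0; 1, 1] ∧
        ((P⁻¹ * L₃ * P : GL (Fin 2) ℂ) : Matrix (Fin 2) (Fin 2) ℂ) = !![1, 1; 0, -1])) := by
  -- `L₂` and `L₃` are conjugate to `L₁`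
  have c12 : (L₁ * L₂) * L₁ * (L₁ * L₂)⁻¹ = L₂ := by
    rw [mul_inv_eq_iff_eq_mul, h12, mul_assoc]
  have c23 : (L₂ * L₃) * L₂ * (L₂ * L₃)⁻¹ = L₃ := by
    rw [mul_inv_eq_iff_eq_mul, h23, mul_assoc]
  by_cases hs : scal L₁.1
  · have hA := scal_eq hs
    have hcen : ∀ X : GL (Fin 2) ℂ, X * L₁ = L₁ * X := by
      intro X
      apply Units.ext
      rw [Units.val_mul, Units.val_mul, hA]
      simp
    have e12 : L₂ = L₁ := by
      rw [← c12, hcen]; group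
    have e23 : L₃ = L₁ := by
      rw [← c23, e12, hcen]; group
    obtain ⟨R, hR⟩ := hconj
    rw [hcen, mul_inv_cancel_right] at hR
    have hsq : L₁ ^ 2 = 1 := by
      rw [pow_two]; nth_rewrite 2 [hR]; simp
    refine ⟨hsq, 1, Or.inl ⟨L₁.1 0 0, ?_, ?_, ?_, ?_⟩⟩
    · have h := congrArg Units.val hsq
      have h00 := congrFun (congrFun h 0) 0
      simp [pow_two, Matrix.mul_apply, Fin.sum_univ_two, hs.1] at h00
      exact mul_self_eq_one_iff.1 h00
    · simpa using hA
    · rw [e12]; simpa using hA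
    · rw [e23]; simpa using hA
  · have hU3 : L₃ * U = U * L₃ := by
      apply Units.ext
      exact comm_trans hs (congrArg Units.val h13) (congrArg Units.val h1U)
    have s3 : L₃ * L₃ = 1 := by
      rw [hU3, mul_assoc] at h3U
      simpa using h3U
    have s2 : L₂ * L₂ = 1 := by
      have : L₂ = (L₂ * L₃)⁻¹ * L₃ * (L₂ * L₃) := by
        rw [mul_assoc, eq_inv_mul_iff_mul_eq, h23, mul_assoc]
      rw [this]
      calc _ = (L₂ * L₃)⁻¹ * (L₃ * L₃) * (L₂ * L₃) := by group
        _ = 1 := by rw [s3]; group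
    have s1 : L₁ * L₁ = 1 := by
      have : L₁ = (L₁ * L₂)⁻¹ * L₂ * (L₁ * L₂) := by
        rw [mul_assoc, eq_inv_mul_iff_mul_eq, h12, mul_assoc]
      rw [this]
      calc _ = (L₁ * L₂)⁻¹ * (L₂ * L₂) * (L₁ * L₂) := by group
        _ = 1 := by rw [s2]; group
    refine ⟨by rw [pow_two, s1], ?_⟩
    obtain ⟨P, hP⟩ := diag_inv hs s1
    have d1 : (P⁻¹ * L₁ * P).1 = !![1, 0; 0, -1] := conj_val hP
    have b12 : (P⁻¹ * L₁ * P) * (P⁻¹ * L₂ * P) * (P⁻¹ * L₁ * P) =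
        (P⁻¹ * L₂ * P) * (P⁻¹ * L₁ * P) * (P⁻¹ * L₂ * P) := by
      calc _ = P⁻¹ * (L₁ * L₂ * L₁) * P := by group
        _ = _ := by rw [h12]; group
    have b23 : (P⁻¹ * L₃ * P) * (P⁻¹ * L₂ * P) * (P⁻¹ * L₃ * P) =
        (P⁻¹ * L₂ * P) * (P⁻¹ * L₃ * P) * (P⁻¹ * L₂ * P) := by
      calc _ = P⁻¹ * (L₃ * L₂ * L₃) * P := by group
        _ = _ := by rw [← h23]; group
    have q2 : (P⁻¹ * L₂ * P) * (P⁻¹ * L₂ * P) = 1 := by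
      calc _ = P⁻¹ * (L₂ * L₂) * P := by group
        _ = _ := by rw [s2]; group
    have q3 : (P⁻¹ * L₃ * P) * (P⁻¹ * L₃ * P) = 1 := by
      calc _ = P⁻¹ * (L₃ * L₃) * P := by group
        _ = _ := by rw [s3]; group
    have c13 : (P⁻¹ * L₁ * P) * (P⁻¹ * L₃ * P) = (P⁻¹ * L₃ * P) * (P⁻¹ * L₁ * P) := by
      calc _ = P⁻¹ * (L₁ * L₃) * P := by group
        _ = _ := by rw [h13]; group
    have B12 := congrArg Units.val b12
    have Q2 := congrArg Units.val q2
    have Q3 := congrArg Units.val q3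
    have C13 := congrArg Units.val c13
    have B23 := congrArg Units.val b23
    simp only [Units.val_mul _ (P⁻¹ * L₁ * P), Units.val_mul _ (P⁻¹ * L₂ * P),
      Units.val_mul _ (P⁻¹ * L₃ * P), Units.val_one] at B12 Q2 Q3 C13 B23
    rw [d1] at B12 C13
    have d2 := braid_diag Q2 B12
    have d3 : (P⁻¹ * L₃ * P).1 = !![1, 0; 0, -1] := by
      clear B12 b12 b23 q2 q3 c13
      generalize (P⁻¹ * L₃ * P).1 = X at *
      generalize (P⁻¹ * L₂ * P).1 = Y at *
      have hE := Matrix.eta_fin_two X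
      generalize X 0 0 = p at *
      generalize X 0 1 = q at *
      generalize X 1 0 = r at *
      generalize X 1 1 = s at *
      subst hE
      have a00 := congrFun (congrFun Q3 0) 0
      have a11 := congrFun (congrFun Q3 1) 1
      have e01 := congrFun (congrFun C13 0) 1
      have e10 := congrFun (congrFun C13 1) 0
      have f00 := congrFun (congrFun B23 0) 0
      have f11 := congrFun (congrFun B23 1) 1
      have f01 := congrFun (congrFun B23 0) 1
      simp [Matrix.mul_apply, Fin.sum_univ_two] at a00 a11 e01 e10
      have hq : q = 0 := by linear_combination e01 / 2
      have hr : r = 0 := by linear_combination -e10 / 2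
      subst hq hr
      have ap := mul_self_eq_one_iff.1 (show p * p = 1 by linear_combination a00)
      have as := mul_self_eq_one_iff.1 (show s * s = 1 by linear_combination a11)
      rcases d2 with rfl | ⟨b, c, hbc, rfl⟩
      · simp [Matrix.mul_apply, Fin.sum_univ_two] at f00 f11
        rcases ap with rfl | rfl <;> rcases as with rfl | rfl <;>
          first | rfl | (exfalso; grind)
      · simp [Matrix.mul_apply, Fin.sum_univ_two] at f00 f11 f01
        rcases ap with rfl | rfl <;> rcases as with rfl | rfl
        · exfalso; grind
        · rfl
        · exfalso; grind
        · exfalso; grind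
    rcases d2 with d2 | ⟨b, c, hbc, d2⟩
    · exact ⟨P, Or.inr (Or.inl ⟨d1, d2, d3⟩)⟩
    · have hc : c ≠ 0 := by rintro rfl; norm_num at hbc
      let M : Matrix (Fin 2) (Fin 2) ℂ := !![1, 1 / 2; 0, c]
      have hM : M.det ≠ 0 := by simpa [M, Matrix.det_fin_two] using hc
      let T : GL (Fin 2) ℂ := Matrix.GeneralLinearGroup.mkOfDetNeZero M hM
      have hT : T.1 = !![1, 1 / 2; 0, c] := rfl
      have conv : ∀ L : GL (Fin 2) ℂ, (P * T)⁻¹ * L * (P * T) = T⁻¹ * (P⁻¹ * L * P) * T := by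
        intro L; group
      refine ⟨P * T, Or.inr (Or.inr ⟨?_, ?_, ?_⟩)⟩
      · rw [conv]
        apply conj_val
        rw [d1, hT]
        ext i j; fin_cases i <;> fin_cases j <;> simp [Matrix.mul_apply, Fin.sum_univ_two] <;> ring
      · rw [conv]
        apply conj_val
        rw [d2, hT]
        ext i j; fin_cases i <;> fin_cases j <;> simp [Matrix.mul_apply, Fin.sum_univ_two] <;>
          first | (ring; done) | linear_combination hbc | grind
      · rw [conv]
        apply conj_val
        rw [d3, hT]
        ext i j; fin_cases i <;> fin_cases j <;> simp [Matrix.mul_apply, Fin.sum_univ_two] <;> ring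
end

section
/- Let r ≥ 1, n = 2r + 2, and let Iso(V_n) be the group of linear isometries of V_n = (ℤ/2)ⁿ with its standard bilinear form. Then Iso(V_n) is isomorphic to a semidirect product Sp(2r, ℤ/2) ⋉ (ℤ/2)^{2r+1}; precisely, there exist a normal subgroup N of Iso(V_n) and a subgroup H of Iso(V_n) such that N is isomorphic to the elementary abelian group (ℤ/2)^{2r+1}, H is isomorphic to the symplectic group Sp(2r, ℤ/2), N ∩ H is trivial, and every element of Iso(V_n) is a product of an element of N and an element of H. -/
open Matrix

namespace IsoSplit

/-- Index set of the symplectic part. -/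
abbrev W (r : ℕ) := Fin r ⊕ Fin r
/-- Index set of the adapted basis: symplectic part, then `u`, `e`. -/
abbrev I (r : ℕ) := W r ⊕ Fin 2

abbrev F := ZMod 2

/-- Gram matrix of the adapted basis. -/
def G (r : ℕ) : Matrix (I r) (I r) F := fromBlocks (J (Fin r) F) 0 0 !![0,1;1,1]

def G' (r : ℕ) : Matrix (I r) (I r) F := fromBlocks (J (Fin r) F) 0 0 !![1,1;1,0]

lemma G_mul (r : ℕ) : G r * G' r = 1 := by
  have h : (-1 : Matrix (W r) (W r) F) = 1 := by
    ext i j; simp [CharTwo.neg_eq]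
  have h2 : (!![0,1;1,1] * !![1,1;1,0] : Matrix (Fin 2) (Fin 2) F) = 1 := by decide
  simp [G, G', fromBlocks_multiply, J_squared, h, h2]

/-- General element of the stabilizer. -/
def M {r : ℕ} (A : Matrix (W r) (W r) F) (b c : W r → F) (a : F) : Matrix (I r) (I r) F :=
  fromBlocks A (of fun w => ![b w, 0]) (of ![0, c]) !![1,0;a,1]

lemma M_mul {r : ℕ} (A A' : Matrix (W r) (W r) F) (b c b' c' : W r → F) (a a' : F) :
    M A b c a * M A' b' c' a' = M (A * A') (A *ᵥ b' + b) (c ᵥ* A' + c') (c ⬝ᵥ b' + a + a') := by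
  rw [M, M, M, fromBlocks_multiply]
  congr 1
  · ext i j; simp [mul_apply, Fin.sum_univ_two]
  · ext i j; fin_cases j <;> simp [mul_apply, Fin.sum_univ_two, mulVec, dotProduct]
  · ext i j; fin_cases i <;> simp [vecMul, dotProduct]
  · ext i j; fin_cases i <;> fin_cases j <;>
      simp [vecMul, dotProduct, add_assoc]

lemma M_one {r : ℕ} : M (1 : Matrix (W r) (W r) F) 0 0 0 = 1 := by
  rw [M, ← fromBlocks_one (l := W r) (m := Fin 2), fromBlocks_inj]
  refine ⟨rfl, ?_, ?_, ?_⟩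
  · ext i j; fin_cases j <;> simp
  · ext i j; fin_cases i <;> simp
  · ext i j; fin_cases i <;> fin_cases j <;> simp

lemma J_symm (r : ℕ) : (J (Fin r) F)ᵀ = J (Fin r) F := by
  rw [J_transpose]; ext i j; simp [CharTwo.neg_eq]

/-- The quadratic form refining `J`. -/
def q {r : ℕ} (c : W r → F) : F := ∑ i, c (Sum.inl i) * c (Sum.inr i)

lemma q_add {r : ℕ} (c d : W r → F) :
    q (c + d) = q c + q d + c ⬝ᵥ (J (Fin r) F *ᵥ d) := by
  simp only [q, dotProduct, mulVec, J, Fintype.sum_sum_type, Pi.add_apply, fromBlocks_apply₁₁,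
    fromBlocks_apply₁₂, fromBlocks_apply₂₁, fromBlocks_apply₂₂, Matrix.zero_apply,
    Matrix.neg_apply, one_apply, CharTwo.neg_eq]
  simp only [zero_mul, Finset.sum_const_zero, ite_mul, one_mul, Finset.sum_ite_eq,
    Finset.mem_univ, if_true, zero_add, add_zero, ← Finset.sum_add_distrib]
  exact Finset.sum_congr rfl fun i _ => by ring

lemma dot_J_self {r : ℕ} (c : W r → F) : c ⬝ᵥ (J (Fin r) F *ᵥ c) = 0 := by
  have h := q_add c c
  rw [CharTwo.add_self_eq_zero (q c), zero_add] at h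
  rw [← h]
  have : c + c = 0 := by ext i; exact CharTwo.add_self_eq_zero (c i)
  rw [this]; simp [q]

lemma M_gram {r : ℕ} (A : Matrix (W r) (W r) F) (b c : W r → F) (a : F) :
    M A b c a * G r * (M A b c a)ᵀ = fromBlocks (A * J (Fin r) F * Aᵀ)
      (of fun w => ![0, (A *ᵥ (J (Fin r) F *ᵥ c) + b) w])
      (of ![0, (A *ᵥ (J (Fin r) F *ᵥ c) + b)]) !![0,1;1,1] := by
  rw [M, G, fromBlocks_transpose, fromBlocks_multiply, fromBlocks_multiply]
  have e1 : (of ![0, c] : Matrix (Fin 2) (W r) F) * J (Fin r) F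
      = of ![0, J (Fin r) F *ᵥ c] := by
    rw [← vecMul_transpose, J_symm]
    ext i j; fin_cases i <;> simp [mul_apply, vecMul, dotProduct]
  have e2 : (of fun w => ![b w, 0] : Matrix (W r) (Fin 2) F) * (!![0,1;1,1] : Matrix (Fin 2) (Fin 2) F)
      = of fun w => ![0, b w] := by
    ext i j; fin_cases j <;> simp [mul_apply, Fin.sum_univ_two]
  have e3 : (!![1,0;a,1] * !![0,1;1,1] : Matrix (Fin 2) (Fin 2) F) = !![0,1;1,a+1] := by
    simp
  have e4 : (of fun w => ![0, b w] : Matrix (W r) (Fin 2) F) *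
     (of fun w => ![b w, 0] : Matrix (W r) (Fin 2) F)ᵀ = 0 := by
    ext i j; simp [mul_apply, Fin.sum_univ_two]
  simp only [Matrix.mul_zero, add_zero, zero_add, e1, e2, e3]
  congr 1
  · rw [e4, add_zero]
  · ext i j
    have : A *ᵥ (J (Fin r) F *ᵥ c) = (A * J (Fin r) F) *ᵥ c := by simp
    rw [this]
    fin_cases j <;> simp [mul_apply, Fin.sum_univ_two, mulVec, dotProduct]
  · ext i j
    generalize J (Fin r) F *ᵥ c = d
    rw [Matrix.add_apply, mul_apply, mul_apply]
    fin_cases i <;> simp [Fin.sum_univ_two, mulVec, dotProduct, mul_comm]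
  · have := dot_J_self c
    rw [dotProduct_comm] at this
    have h2 : ∑ x, (J (Fin r) F *ᵥ c) x * c x = 0 := this
    generalize J (Fin r) F *ᵥ c = d at *
    ext i j
    rw [Matrix.add_apply, mul_apply, mul_apply]
    fin_cases i <;> fin_cases j
    · simp [Fin.sum_univ_two]
    · simp [Fin.sum_univ_two]
    · simp [Fin.sum_univ_two]
    · simp only [Fin.mk_one, of_apply, cons_val_one, cons_val_fin_one, transpose_apply, h2]
      simp [Fin.sum_univ_two, ← add_assoc, CharTwo.add_self_eq_zero]

lemma M_mem {r : ℕ} (A : Matrix (W r) (W r) F) (hA : A ∈ symplecticGroup (Fin r) F)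
    (c : W r → F) (a : F) :
    M A (A *ᵥ (J (Fin r) F *ᵥ c)) c a * G r * (M A (A *ᵥ (J (Fin r) F *ᵥ c)) c a)ᵀ = G r := by
  have h : A *ᵥ (J (Fin r) F *ᵥ c) + A *ᵥ (J (Fin r) F *ᵥ c) = 0 := by
    ext i; exact CharTwo.add_self_eq_zero _
  rw [M_gram, h, SymplecticGroup.mem_iff.1 hA, G]
  congr 1
  · ext i j; fin_cases j <;> simp
  · ext i j; fin_cases i <;> simp

lemma of_gram {r : ℕ} (X : Matrix (I r) (I r) F) (hX : X * G r * Xᵀ = G r)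
    (hu : ∀ j, X (Sum.inr 0) j = (1 : Matrix (I r) (I r) F) (Sum.inr 0) j) :
    X.toBlocks₁₁ ∈ symplecticGroup (Fin r) F ∧ ∃ c a,
      X = M X.toBlocks₁₁ (X.toBlocks₁₁ *ᵥ (J (Fin r) F *ᵥ c)) c a := by
  have he : ∀ i, X i (Sum.inr 1) = G r i (Sum.inr 0) := by
    intro i
    rw [← hX, mul_apply]
    simp only [transpose_apply, hu, one_apply]
    simp [mul_apply, G, Fin.sum_univ_two]
  have hM : X = M X.toBlocks₁₁ (fun w => X (Sum.inl w) (Sum.inr 0))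
      (fun w => X (Sum.inr 1) (Sum.inl w)) (X (Sum.inr 1) (Sum.inr 0)) := by
    ext i j
    rcases i with i | i <;> rcases j with j | j
    · simp [M, toBlocks₁₁]
    · fin_cases j <;> simp [M, he, G]
    · fin_cases i <;> simp [M, hu]
    · fin_cases i <;> fin_cases j <;> simp [M, hu, he, G]
  have h := hX
  rw [hM, M_gram, G, fromBlocks_inj] at h
  refine ⟨SymplecticGroup.mem_iff.2 h.1, fun w => X (Sum.inr 1) (Sum.inl w),
    X (Sum.inr 1) (Sum.inr 0), ?_⟩
  convert hM using 2
  ext w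
  have := congrFun (congrFun h.2.1 w) 1
  simp only [of_apply, cons_val_one, cons_val_fin_one, Pi.add_apply, Matrix.zero_apply] at this
  exact CharTwo.add_eq_zero.1 this

/-- strict upper triangular matrix of ones -/
def T (r : ℕ) : Matrix (Fin r) (Fin r) F := of fun i k => if i < k then 1 else 0

lemma T_add (r : ℕ) : (1 + T r) + (T r)ᵀ = of fun _ _ => 1 := by
  ext i j
  rcases lt_trichotomy i j with h | h | h
  · simp [T, one_apply, h, h.ne, h.not_gt]
  · simp [T, one_apply, h]
  · simp [T, one_apply, h, h.ne', h.not_gt]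

def P0 (r : ℕ) : Matrix (I r) (I r) F :=
  fromBlocks (fromBlocks 1 1 (T r) (1 + T r))
    (of (Sum.elim (fun _ => ![0,0]) (fun _ => ![1,0]))) (of ![fun _ => 1, 0]) !![1,1;0,1]

lemma two_mat {m n : Type*} (X : Matrix m n F) : X + X = 0 := by
  ext i j; exact CharTwo.add_self_eq_zero _

lemma P0_gram (r : ℕ) : P0 r * (P0 r)ᵀ = G r := by
  have hJ : J (Fin r) F = fromBlocks 0 1 1 0 := by
    rw [J]; congr 1; ext i j; simp [CharTwo.neg_eq]
  rw [P0, G, fromBlocks_transpose, fromBlocks_multiply]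
  have hoff : ((fromBlocks 1 1 (T r) (1 + T r) : Matrix (W r) (W r) F) *
      (of ![fun _ => 1, 0] : Matrix (Fin 2) (W r) F)ᵀ +
      (of (Sum.elim (fun _ => ![0,0]) (fun _ => ![1,0])) : Matrix (W r) (Fin 2) F) *
        (!![1,1;0,1] : Matrix (Fin 2) (Fin 2) F)ᵀ) = 0 := by
    ext i j
    fin_cases j
    · rcases i with i | i
      · simp [mul_apply, Fin.sum_univ_two, one_apply]
        exact CharTwo.add_self_eq_zero _
      · simp [mul_apply, Fin.sum_univ_two, one_apply, Finset.sum_add_distrib]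
        generalize ∑ x, T r i x = s
        revert s; decide
    · rcases i with i | i <;> simp [mul_apply, Fin.sum_univ_two]
  congr 1
  · rw [hJ, fromBlocks_transpose, fromBlocks_multiply]
    ext i j
    rcases i with i | i <;> rcases j with j | j
    · simp [mul_apply, Fin.sum_univ_two, two_mat]
    · simp [Fin.sum_univ_two, mul_apply (M := of _)]
      generalize T r j i = s
      generalize (1 : Matrix (Fin r) (Fin r) F) i j = t
      revert s t; decide
    · simp [Fin.sum_univ_two, mul_apply (M := of _)]
      generalize T r i j = s
      generalize (1 : Matrix (Fin r) (Fin r) F) i j = t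
      revert s t; decide
    · have h1 : T r * (T r)ᵀ + (1 + T r) * (1 + T r)ᵀ = 1 + T r + (T r)ᵀ := by
        rw [transpose_add, transpose_one, Matrix.mul_add, Matrix.add_mul, Matrix.add_mul]
        simp only [Matrix.one_mul, Matrix.mul_one]
        have := two_mat (T r * (T r)ᵀ)
        rw [show T r * (T r)ᵀ + (1 + T r + ((T r)ᵀ + T r * (T r)ᵀ)) = 
          (T r * (T r)ᵀ + T r * (T r)ᵀ) + (1 + T r + (T r)ᵀ) by abel, this, zero_add]
      rw [Matrix.add_apply, fromBlocks_apply₂₂, h1, T_add]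
      simp [Fin.sum_univ_two, mul_apply]
      decide
  · have := congrArg transpose hoff
    simpa [transpose_add, transpose_mul] using this
  · ext i j
    rw [Matrix.add_apply, mul_apply, mul_apply]
    fin_cases i <;> fin_cases j <;> simp [Fin.sum_univ_two]
    generalize (r : F) = s
    revert s; decide

lemma exists_PQ (r : ℕ) : ∃ (P : Matrix (I r) (Fin (2 * r + 2)) F)
    (Q : Matrix (Fin (2 * r + 2)) (I r) F),
    P * Pᵀ = G r ∧ P * Q = 1 ∧ Q * P = 1 ∧ ∀ j, P (Sum.inr 0) j = 1 := by
  have hc : Fintype.card (Fin (2 * r + 2)) = Fintype.card (I r) := by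
    simp; ring
  let e : Fin (2 * r + 2) ≃ I r := Fintype.equivOfCardEq hc
  have h1 : P0 r * ((P0 r)ᵀ * G' r) = 1 := by
    rw [← Matrix.mul_assoc, P0_gram, G_mul]
  have h2 := mul_eq_one_comm.1 h1
  refine ⟨(P0 r).submatrix id e, ((P0 r)ᵀ * G' r).submatrix e id, ?_, ?_, ?_, ?_⟩
  · rw [transpose_submatrix, submatrix_mul_equiv, P0_gram, submatrix_id_id]
  · rw [submatrix_mul_equiv, h1, submatrix_id_id]
  · rw [← submatrix_mul _ _ e id e Function.bijective_id, h2, submatrix_one_equiv]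
  · intro j
    simp only [submatrix_apply, id]
    rcases e j with k | k
    · simp [P0]
    · fin_cases k <;> simp [P0]

/-- column sums of an orthogonal matrix over `F₂` are one -/
lemma col_sum {m : ℕ} (g : Matrix (Fin m) (Fin m) F) (hg : gᵀ * g = 1) (j : Fin m) :
    ∑ i, g i j = 1 := by
  have h := congrFun (congrFun hg j) j
  rw [mul_apply, one_apply_eq] at h
  rw [← h]
  refine Finset.sum_congr rfl fun i _ => ?_
  rw [transpose_apply]
  generalize g i j = s
  revert s; decide

lemma group_part {Γ S A : Type*} [Group Γ] [Group S] [Group A] (π : Γ →* S) (φ : S →* Γ)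
    (ψ : A →* Γ) (hφ : ∀ s, π (φ s) = s) (hψ : Function.Injective ψ)
    (h1 : ∀ a, π (ψ a) = 1) (h2 : ∀ g, π g = 1 → ∃ a, ψ a = g) :
    ∃ (N H : Subgroup Γ), N.Normal ∧ Nonempty (N ≃* A) ∧ Nonempty (H ≃* S) ∧ N ⊓ H = ⊥ ∧
      ∀ g : Γ, ∃ a ∈ N, ∃ b ∈ H, g = a * b := by
  have hN : ψ.range = π.ker := by
    ext g
    rw [MonoidHom.mem_range, MonoidHom.mem_ker]
    exact ⟨by rintro ⟨a, rfl⟩; exact h1 a, h2 g⟩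
  refine ⟨ψ.range, φ.range, ?_, ⟨(MonoidHom.ofInjective hψ).symm⟩,
    ⟨(MonoidHom.ofInjective (Function.LeftInverse.injective hφ)).symm⟩, ?_, ?_⟩
  · rw [hN]; infer_instance
  · rw [eq_bot_iff]
    rintro g ⟨ha, s, rfl⟩
    have ha' : φ s ∈ π.ker := hN ▸ ha
    rw [MonoidHom.mem_ker, hφ] at ha'
    subst ha'
    simp
  · intro g
    refine ⟨g * (φ (π g))⁻¹, ?_, φ (π g), ⟨_, rfl⟩, by group⟩
    rw [hN, MonoidHom.mem_ker, map_mul, map_inv, hφ, mul_inv_cancel]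

lemma M_inj {r : ℕ} {A A' : Matrix (W r) (W r) F} {b c b' c' : W r → F} {a a' : F}
    (h : M A b c a = M A' b' c' a') : A = A' ∧ c = c' ∧ a = a' := by
  rw [M, M, fromBlocks_inj] at h
  refine ⟨h.1, ?_, ?_⟩
  · ext w; simpa using congrFun (congrFun h.2.2.1 1) w
  · simpa using congrFun (congrFun h.2.2.2 1) 0

theorem main (r : ℕ) :
    ∃ (N H : Subgroup (Matrix.orthogonalGroup (Fin (2 * r + 2)) (ZMod 2))),
      N.Normal ∧
      Nonempty (N ≃* Multiplicative ((W r → F) × F)) ∧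
      Nonempty (H ≃* Matrix.symplecticGroup (Fin r) (ZMod 2)) ∧
      N ⊓ H = ⊥ ∧
      ∀ g : Matrix.orthogonalGroup (Fin (2 * r + 2)) (ZMod 2),
        ∃ a ∈ N, ∃ b ∈ H, g = a * b := by
  obtain ⟨P, Q, hG, hPQ, hQP, hu⟩ := exists_PQ r
  have hQG : Q * G r * Qᵀ = 1 := by
    rw [← hG, ← Matrix.mul_assoc, hQP, Matrix.one_mul, ← transpose_mul, hQP, transpose_one]
  have toO : ∀ X : Matrix (I r) (I r) F, X * G r * Xᵀ = G r →
      Q * X * P ∈ orthogonalGroup (Fin (2 * r + 2)) F := by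
    intro X hX
    rw [mem_orthogonalGroup_iff]
    calc Q * X * P * (Q * X * P)ᵀ = Q * (X * (P * Pᵀ) * Xᵀ) * Qᵀ := by
          simp only [transpose_mul, Matrix.mul_assoc]
      _ = 1 := by rw [hG, hX, hQG]
  have conj_mul : ∀ X Y : Matrix (I r) (I r) F, Q * (X * Y) * P = (Q * X * P) * (Q * Y * P) := by
    intro X Y
    calc Q * (X * Y) * P = Q * X * (1 : Matrix (I r) (I r) F) * Y * P := by simp only [Matrix.mul_assoc, Matrix.one_mul]
      _ = _ := by rw [← hPQ]; simp only [Matrix.mul_assoc]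
  have back : ∀ X : Matrix (I r) (I r) F, P * (Q * X * P) * Q = X := by
    intro X
    calc P * (Q * X * P) * Q = (P * Q) * X * (P * Q) := by simp only [Matrix.mul_assoc]
      _ = X := by rw [hPQ, Matrix.one_mul, Matrix.mul_one]
  have back' : ∀ g : Matrix (Fin (2 * r + 2)) (Fin (2 * r + 2)) F, Q * (P * g * Q) * P = g := by
    intro X
    calc Q * (P * X * Q) * P = (Q * P) * X * (Q * P) := by simp only [Matrix.mul_assoc]
      _ = X := by rw [hQP, Matrix.one_mul, Matrix.mul_one]
  have key : ∀ g : orthogonalGroup (Fin (2 * r + 2)) F,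
      (P * g.1 * Q).toBlocks₁₁ ∈ symplecticGroup (Fin r) F ∧ ∃ c a,
      P * g.1 * Q = M (P * g.1 * Q).toBlocks₁₁
        ((P * g.1 * Q).toBlocks₁₁ *ᵥ (J (Fin r) F *ᵥ c)) c a := by
    intro g
    apply of_gram
    · have h1 : Q * G r * Qᵀ = 1 := hQG
      have h2 := (mem_orthogonalGroup_iff _ _).1 g.2
      calc P * g.1 * Q * G r * (P * g.1 * Q)ᵀ = P * (g.1 * (Q * G r * Qᵀ) * g.1ᵀ) * Pᵀ := by
            simp only [transpose_mul, Matrix.mul_assoc]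
        _ = G r := by rw [h1, Matrix.mul_one, h2, Matrix.mul_one, hG]
    · intro j
      have h2 := (mem_orthogonalGroup_iff' _ _).1 g.2
      have h3 : ∀ j, (P * g.1) (Sum.inr 0) j = P (Sum.inr 0) j := by
        intro j
        rw [mul_apply]
        simp only [hu, one_mul]
        exact col_sum _ h2 j
      rw [← hPQ, mul_apply, mul_apply]
      simp only [h3]
  let π : orthogonalGroup (Fin (2 * r + 2)) F →* symplecticGroup (Fin r) F :=
    { toFun := fun g => ⟨(P * g.1 * Q).toBlocks₁₁, (key g).1⟩
      map_one' := by
        apply Subtype.ext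
        change (P * (1 : Matrix (Fin (2 * r + 2)) (Fin (2 * r + 2)) F) * Q).toBlocks₁₁ = 1
        rw [Matrix.mul_one, hPQ, ← fromBlocks_one, toBlocks_fromBlocks₁₁]
      map_mul' := by
        intro g h
        apply Subtype.ext
        change (P * (g.1 * h.1) * Q).toBlocks₁₁ =
          (P * g.1 * Q).toBlocks₁₁ * (P * h.1 * Q).toBlocks₁₁
        have : P * (g.1 * h.1) * Q = (P * g.1 * Q) * (P * h.1 * Q) := by
          calc P * (g.1 * h.1) * Q = P * g.1 * (1 : Matrix (Fin (2 * r + 2)) (Fin (2 * r + 2)) F) * h.1 * Q := by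
                simp only [Matrix.mul_assoc, Matrix.one_mul]
            _ = _ := by rw [← hQP]; simp only [Matrix.mul_assoc]
        rw [this]
        obtain ⟨c, a, h1⟩ := (key g).2
        obtain ⟨d, b, h2⟩ := (key h).2
        generalize (P * g.1 * Q).toBlocks₁₁ = A at *
        generalize (P * h.1 * Q).toBlocks₁₁ = B at *
        rw [h1, h2, M_mul, M, toBlocks_fromBlocks₁₁] }
  have hM0 : ∀ A : symplecticGroup (Fin r) F, M A.1 0 0 0 * G r * (M A.1 0 0 0)ᵀ = G r := by
    intro A
    simpa using M_mem A.1 A.2 0 0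
  have hM1 : ∀ (c : W r → F) (a : F), M 1 (J (Fin r) F *ᵥ c) c a * G r *
      (M 1 (J (Fin r) F *ᵥ c) c a)ᵀ = G r := by
    intro c a
    simpa using M_mem 1 (one_mem _) c a
  let φ : symplecticGroup (Fin r) F →* orthogonalGroup (Fin (2 * r + 2)) F :=
    { toFun := fun A => ⟨Q * M A.1 0 0 0 * P, toO _ (hM0 A)⟩
      map_one' := by
        apply Subtype.ext
        change Q * M 1 0 0 0 * P = 1
        rw [M_one, Matrix.mul_one, hQP]
      map_mul' := by
        intro A B
        apply Subtype.ext
        change Q * M (A.1 * B.1) 0 0 0 * P = (Q * M A.1 0 0 0 * P) * (Q * M B.1 0 0 0 * P)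
        rw [← conj_mul, M_mul]
        simp }
  let ψ : Multiplicative ((W r → F) × F) →* orthogonalGroup (Fin (2 * r + 2)) F :=
    { toFun := fun x => ⟨Q * M 1 (J (Fin r) F *ᵥ x.toAdd.1) x.toAdd.1
          (x.toAdd.2 + q x.toAdd.1) * P, toO _ (hM1 _ _)⟩
      map_one' := by
        apply Subtype.ext
        change Q * M 1 (J (Fin r) F *ᵥ 0) 0 (0 + q 0) * P = 1
        have : q (0 : W r → F) = 0 := by simp [q]
        rw [mulVec_zero, this, add_zero, M_one, Matrix.mul_one, hQP]
      map_mul' := by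
        rintro ⟨c, a⟩ ⟨d, b⟩
        apply Subtype.ext
        change Q * M 1 (J (Fin r) F *ᵥ (c + d)) (c + d) (a + b + q (c + d)) * P =
          (Q * M 1 (J (Fin r) F *ᵥ c) c (a + q c) * P) *
          (Q * M 1 (J (Fin r) F *ᵥ d) d (b + q d) * P)
        rw [← conj_mul, M_mul, q_add, mulVec_add, Matrix.one_mul, one_mulVec, vecMul_one,
          add_comm (J (Fin r) F *ᵥ c)]
        congr 3
        ring }
  refine group_part π φ ψ ?_ ?_ ?_ ?_
  · intro A
    apply Subtype.ext
    change (P * (Q * M A.1 0 0 0 * P) * Q).toBlocks₁₁ = A.1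
    rw [back, M, toBlocks_fromBlocks₁₁]
  · rintro ⟨c, a⟩ ⟨d, b⟩ h
    have h' := congrArg Subtype.val h
    change Q * M 1 (J (Fin r) F *ᵥ c) c (a + q c) * P =
          Q * M 1 (J (Fin r) F *ᵥ d) d (b + q d) * P at h'
    have h2 := congrArg (fun X => P * X * Q) h'
    simp only [back] at h2
    obtain ⟨-, rfl, h3⟩ := M_inj h2
    have := add_right_cancel h3
    subst this
    rfl
  · rintro ⟨c, a⟩
    apply Subtype.ext
    change (P * (Q * M 1 (J (Fin r) F *ᵥ c) c (a + q c) * P) * Q).toBlocks₁₁ = 1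
    rw [back, M, toBlocks_fromBlocks₁₁]
  · intro g hg
    have h1 : (P * g.1 * Q).toBlocks₁₁ = 1 := congrArg Subtype.val hg
    obtain ⟨c, a, h2⟩ := (key g).2
    rw [h1, one_mulVec] at h2
    refine ⟨Multiplicative.ofAdd (c, a + q c), ?_⟩
    apply Subtype.ext
    change Q * M 1 (J (Fin r) F *ᵥ c) c (a + q c + q c) * P = g.1
    rw [add_assoc, CharTwo.add_self_eq_zero, add_zero, ← h2, back']

/-- `F^{2r} × F ≃ F^{2r+1}` -/
lemma exists_equiv (r : ℕ) :
    Nonempty (Multiplicative ((W r → F) × F) ≃* Multiplicative (Fin (2 * r + 1) → F)) := by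
  have h : Module.finrank F ((W r → F) × F) = Module.finrank F (Fin (2 * r + 1) → F) := by
    simp; ring
  exact ⟨AddEquiv.toMultiplicative (LinearEquiv.ofFinrankEq _ _ h).toAddEquiv⟩

end IsoSplit

/-- Lemma 8.1: for `n = 2r + 2`, the isometry group `Iso(V_n)` of
`V_n = (ℤ/2)ⁿ` with its standard bilinear form (i.e. the orthogonal group of
`n × n` matrices over `ℤ/2`) is a semidirect product
`Sp(2r, ℤ/2) ⋉ (ℤ/2)^{2r+1}`: there are a normal subgroup `N ≅ (ℤ/2)^{2r+1}`
and a subgroup `H ≅ Sp(2r, ℤ/2)` with `N ∩ H = 1` and `Iso(V_n) = N H`. -/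
theorem stmt_6 (r : ℕ) (hr : 1 ≤ r) :
    ∃ (N H : Subgroup (Matrix.orthogonalGroup (Fin (2 * r + 2)) (ZMod 2))),
      N.Normal ∧
      Nonempty (N ≃* Multiplicative (Fin (2 * r + 1) → ZMod 2)) ∧
      Nonempty (H ≃* Matrix.symplecticGroup (Fin r) (ZMod 2)) ∧
      N ⊓ H = ⊥ ∧
      ∀ g : Matrix.orthogonalGroup (Fin (2 * r + 2)) (ZMod 2),
        ∃ a ∈ N, ∃ b ∈ H, g = a * b := by
  obtain ⟨N, H, h1, ⟨h2⟩, h3, h4, h5⟩ := IsoSplit.main r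
  obtain ⟨e⟩ := IsoSplit.exists_equiv r
  exact ⟨N, H, h1, ⟨h2.trans e⟩, h3, h4, h5⟩
end

section
/- Let r ≥ 1, n = 2r + 2, let c ∈ V_n be the last standard basis vector (c = e_n). Then the stabilizer of c in Iso(V_n), i.e., the subgroup {L ∈ Iso(V_n) : L(c) = c}, is isomorphic as a group to the symplectic group Sp(2r, ℤ/2). -/
open Matrix

namespace Stab8

abbrev Idx (r : ℕ) := (Fin r ⊕ Fin r) ⊕ (Unit ⊕ Unit)

/-- strictly lower triangular matrix of ones -/
def T (r : ℕ) : Matrix (Fin r) (Fin r) (ZMod 2) := fun i j => if j < i then 1 else 0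

def G (r : ℕ) : Matrix (Idx r) (Idx r) (ZMod 2) := fromBlocks (J (Fin r) (ZMod 2)) 0 0 1

/-- the base change matrix -/
def P (r : ℕ) : Matrix (Idx r) (Idx r) (ZMod 2) :=
  fromBlocks (fromBlocks 1 (T r) 1 (T r + 1))
    (Matrix.of fun _ j => Sum.elim (fun _ => 1) (fun _ => 0) j)
    (Matrix.of fun i j => Sum.elim (fun _ => Sum.elim (fun _ => 0) (fun _ => 1) j) (fun _ => 0) i) 1

def uvec (r : ℕ) : Idx r → ZMod 2 := Sum.elim (fun _ => 0) (fun _ => 1)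

lemma two_mul' (x : ZMod 2) : x + x = 0 := CharTwo.add_self_eq_zero x

lemma sq' (x : ZMod 2) : x * x = x := by revert x; decide

lemma PtP (r : ℕ) : (P r)ᵀ * P r = G r := by
  ext i j
  rw [Matrix.mul_apply]
  simp only [Fintype.sum_sum_type, transpose_apply]
  rcases i with (i | i) | (i | i) <;> rcases j with (j | j) | (j | j) <;>
    simp [P, G, J, Matrix.one_apply, add_mul, mul_add, Finset.sum_add_distrib, two_mul',
      CharTwo.neg_eq, sq']
  · rw [← add_assoc, two_mul', zero_add]; simp only [eq_comm]
  · rw [← add_assoc, two_mul', zero_add]; simp only [eq_comm]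
  · have hT : T r i j + (T r j i + if j = i then 1 else 0) = 1 := by
      rcases lt_trichotomy i j with h | h | h
      · simp [T, h, h.ne', h.le, not_lt.mpr h.le]
      · simp [T, h]
      · simp [T, h, h.ne, h.le, not_lt.mpr h.le]
    linear_combination hT + two_mul' (∑ a₁, T r a₁ i * T r a₁ j) + two_mul' 1
  · rw [← add_assoc, two_mul', zero_add, two_mul']
  · rw [← add_assoc, two_mul', zero_add, two_mul']

lemma GG (r : ℕ) : G r * G r = 1 := by
  have : (-1 : Matrix (Fin r ⊕ Fin r) (Fin r ⊕ Fin r) (ZMod 2)) = 1 := by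
    ext i j; simp [CharTwo.neg_eq]
  simp [G, fromBlocks_multiply, J_squared, this]

lemma Gt (r : ℕ) : (G r)ᵀ = G r := by
  have : -J (Fin r) (ZMod 2) = J (Fin r) (ZMod 2) := by
    ext i j; simp [CharTwo.neg_eq]
  simp [G, fromBlocks_transpose, this]


lemma orth_ones {n : Type*} [Fintype n] [DecidableEq n] (L : Matrix n n (ZMod 2))
    (h : L * Lᵀ = 1) : L *ᵥ (fun _ => 1) = fun _ => 1 := by
  have h' : Lᵀ * L = 1 := mul_eq_one_comm.mp h
  have h1 : Lᵀ *ᵥ (fun _ => 1) = fun _ => 1 := by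
    ext j
    have := congrFun (congrFun h' j) j
    rw [Matrix.mul_apply] at this
    simpa [Matrix.mulVec, dotProduct, sq'] using this
  calc L *ᵥ (fun _ => 1) = L *ᵥ (Lᵀ *ᵥ (fun _ => 1)) := by rw [h1]
    _ = _ := by rw [mulVec_mulVec, h, one_mulVec]

section
variable {r : ℕ} {n : Type*} [Fintype n] [DecidableEq n] (e : Idx r ≃ n)

def Q : Matrix n (Idx r) (ZMod 2) := (P r).submatrix e.symm id
def W : Matrix (Idx r) n (ZMod 2) := G r * (Q e)ᵀ

lemma QtQ : (Q e)ᵀ * Q e = G r := by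
  rw [← PtP, Q, transpose_submatrix]
  exact submatrix_mul_equiv _ _ _ e.symm _

lemma WQ : W e * Q e = 1 := by rw [W, Matrix.mul_assoc, QtQ, GG]

lemma QW : Q e * W e = 1 := (mul_eq_one_comm_of_equiv e).mp (WQ e)

lemma WWt : W e * (W e)ᵀ = G r := by
  rw [W, transpose_mul, transpose_transpose, Matrix.mul_assoc, ← Matrix.mul_assoc (Q e)ᵀ, QtQ, Gt,
    GG, Matrix.mul_one]

def D (S : Matrix (Fin r ⊕ Fin r) (Fin r ⊕ Fin r) (ZMod 2)) : Matrix (Idx r) (Idx r) (ZMod 2) :=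
  fromBlocks S 0 0 1

lemma Q_c : Q e *ᵥ Pi.single (Sum.inr (Sum.inr ())) 1 = Pi.single (e (Sum.inr (Sum.inr ()))) 1 := by
  ext i
  obtain ⟨i, rfl⟩ := e.surjective i
  rcases i with (i | i) | (i | i) <;> simp [Q, P, Pi.single_apply, Matrix.one_apply]

lemma Q_u : Q e *ᵥ uvec r = fun _ => 1 := by
  ext i
  obtain ⟨i, rfl⟩ := e.surjective i
  rcases i with (i | i) | (i | i) <;>
    simp [uvec, Q, P, Matrix.mulVec, dotProduct, Matrix.one_apply, Fintype.sum_sum_type]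

def F (S : Matrix (Fin r ⊕ Fin r) (Fin r ⊕ Fin r) (ZMod 2)) : Matrix n n (ZMod 2) :=
  Q e * D S * W e

lemma WFQ (S) : W e * F e S * Q e = D S := by
  rw [F, ← Matrix.mul_assoc, ← Matrix.mul_assoc, WQ, Matrix.mul_assoc, WQ]; simp

lemma F_mul (S S') : F e (S * S') = F e S * F e S' := by
  have : D (S * S') = D S * D S' := by simp [D, fromBlocks_multiply]
  rw [F, this, F, F]
  simp only [Matrix.mul_assoc]
  rw [← Matrix.mul_assoc (W e), WQ, Matrix.one_mul]

lemma F_one : F e 1 = 1 := by simp [F, D, QW]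

lemma F_orth (S) (h : S * J (Fin r) (ZMod 2) * Sᵀ = J (Fin r) (ZMod 2)) :
    F e S * (F e S)ᵀ = 1 := by
  have h2 : D S * G r * (D S)ᵀ = G r := by
    simp [D, G, fromBlocks_transpose, fromBlocks_multiply, h]
  calc F e S * (F e S)ᵀ = Q e * (D S * (W e * (W e)ᵀ) * (D S)ᵀ) * (Q e)ᵀ := by
        simp [F, transpose_mul, Matrix.mul_assoc]
    _ = 1 := by rw [WWt, h2, Matrix.mul_assoc]; exact QW e

lemma F_c (S) : F e S *ᵥ Pi.single (e (Sum.inr (Sum.inr ()))) 1 =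
    Pi.single (e (Sum.inr (Sum.inr ()))) 1 := by
  rw [← Q_c, mulVec_mulVec, F, Matrix.mul_assoc, WQ, Matrix.mul_one, ← mulVec_mulVec]
  congr 1
  ext i
  rcases i with (i | i) | (i | i) <;> simp [D, Matrix.one_apply, Pi.single_apply]

lemma F_surj (L : Matrix n n (ZMod 2)) (h : L * Lᵀ = 1)
    (hc : L *ᵥ Pi.single (e (Sum.inr (Sum.inr ()))) 1 = Pi.single (e (Sum.inr (Sum.inr ()))) 1) :
    ∃ S, S * J (Fin r) (ZMod 2) * Sᵀ = J (Fin r) (ZMod 2) ∧ F e S = L := by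
  set M := W e * L * Q e with hM
  have hL : Q e * M * W e = L := by
    rw [hM, ← Matrix.mul_assoc, ← Matrix.mul_assoc, QW, Matrix.mul_assoc, QW]; simp
  have hMc : M *ᵥ Pi.single (Sum.inr (Sum.inr ())) 1 = Pi.single (Sum.inr (Sum.inr ())) 1 := by
    rw [hM, ← mulVec_mulVec, Q_c, ← mulVec_mulVec, hc, ← Q_c, mulVec_mulVec, WQ, one_mulVec]
  have hMu : M *ᵥ uvec r = uvec r := by
    rw [hM, ← mulVec_mulVec, Q_u, ← mulVec_mulVec, orth_ones L h, ← Q_u e, mulVec_mulVec, WQ,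
      one_mulVec]
  have hG : M * G r * Mᵀ = G r := by
    have : M * G r * Mᵀ = W e * (L * (Q e * G r * (Q e)ᵀ) * Lᵀ) * (W e)ᵀ := by
      simp [hM, transpose_mul, Matrix.mul_assoc]
    rw [this, Matrix.mul_assoc (Q e)]
    change W e * (L * (Q e * W e) * Lᵀ) * (W e)ᵀ = _
    rw [QW, Matrix.mul_one, h, Matrix.mul_one, WWt]
  have hG' : Mᵀ * G r * M = G r := by
    have h1 : M * (G r * Mᵀ * G r) = 1 := by
      rw [← Matrix.mul_assoc, ← Matrix.mul_assoc, hG, GG]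
    have h2 := mul_eq_one_comm.mp h1
    calc Mᵀ * G r * M = G r * (G r * Mᵀ * G r * M) := by
          simp only [← Matrix.mul_assoc]; rw [GG, Matrix.one_mul]
      _ = G r := by rw [h2, Matrix.mul_one]
  obtain ⟨A, B, C, E, hB⟩ : ∃ A B C E, M = fromBlocks A B C E :=
    ⟨_, _, _, _, (fromBlocks_toBlocks M).symm⟩
  have e1 : ∀ i, M i (Sum.inr (Sum.inr ())) =
      (Pi.single (Sum.inr (Sum.inr ())) 1 : Idx r → ZMod 2) i := by
    intro i; rw [← congrFun hMc i]; simp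
  have e2 : ∀ i, M i (Sum.inr (Sum.inl ())) + M i (Sum.inr (Sum.inr ())) =
      uvec r i := by
    intro i
    have := congrFun hMu i
    simpa [uvec, Matrix.mulVec, dotProduct, Fintype.sum_sum_type] using this
  have e3 : ∀ i, M i (Sum.inr (Sum.inl ())) = (Pi.single (Sum.inr (Sum.inl ())) 1 : Idx r → ZMod 2) i := by
    intro i
    have := e2 i
    rw [e1] at this
    rcases i with (i | i) | (i | i) <;> simpa [uvec, Pi.single_apply] using this
  have hB0 : B = 0 := by
    ext i j
    rcases j with j | j
    · simpa [hB, Pi.single_apply] using e3 (Sum.inl i)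
    · simpa [hB, Pi.single_apply] using e1 (Sum.inl i)
  have hE1 : E = 1 := by
    ext i j
    rcases j with j | j
    · simpa [hB, Pi.single_apply, Matrix.one_apply] using e3 (Sum.inr i)
    · simpa [hB, Pi.single_apply, Matrix.one_apply] using e1 (Sum.inr i)
  subst hB0 hE1
  have hC0 : C = 0 := by
    rw [hB, G, fromBlocks_transpose, fromBlocks_multiply, fromBlocks_multiply, fromBlocks_inj] at hG'
    simpa using hG'.2.2.1
  subst hC0
  refine ⟨A, ?_, ?_⟩
  · rw [hB, G, fromBlocks_transpose, fromBlocks_multiply, fromBlocks_multiply, fromBlocks_inj] at hG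
    simpa using hG.1
  · rw [← hL, hB]; rfl

end

end Stab8

/-- For `n = 2r + 2`, the stabilizer of the last standard basis vector
`c = e_n` in the isometry group `Iso(V_n)` of `V_n = (ℤ/2)ⁿ` with its standard
bilinear form (the orthogonal group of `n × n` matrices over `ℤ/2`) is
isomorphic to the symplectic group `Sp(2r, ℤ/2)`. -/
theorem stmt_8 (r : ℕ) (hr : 1 ≤ r)
    (c : Fin (2 * r + 2) → ZMod 2)
    (hc : c = fun i : Fin (2 * r + 2) => if (i : ℕ) = 2 * r + 1 then (1 : ZMod 2) else 0) :
    ∃ H : Subgroup (Matrix.orthogonalGroup (Fin (2 * r + 2)) (ZMod 2)),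
      (H : Set (Matrix.orthogonalGroup (Fin (2 * r + 2)) (ZMod 2))) =
        {L : Matrix.orthogonalGroup (Fin (2 * r + 2)) (ZMod 2) |
          (L : Matrix (Fin (2 * r + 2)) (Fin (2 * r + 2)) (ZMod 2)).mulVec c = c} ∧
      Nonempty (H ≃* Matrix.symplecticGroup (Fin r) (ZMod 2)) := by
  obtain ⟨e, he⟩ : ∃ e : Stab8.Idx r ≃ Fin (2 * r + 2), e (Sum.inr (Sum.inr ())) = Fin.last _ := by
    have e0 : Stab8.Idx r ≃ Fin (2 * r + 2) := Fintype.equivOfCardEq (by simp; ring)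
    exact ⟨e0.trans (Equiv.swap (e0 (Sum.inr (Sum.inr ()))) (Fin.last _)), by simp⟩
  have hc' : c = Pi.single (e (Sum.inr (Sum.inr ()))) 1 := by
    rw [hc, he]
    ext i
    simp [Pi.single_apply, Fin.ext_iff]
  let f : Matrix.symplecticGroup (Fin r) (ZMod 2) →*
      Matrix.orthogonalGroup (Fin (2 * r + 2)) (ZMod 2) :=
    { toFun := fun S => ⟨Stab8.F e S.1, (Matrix.mem_orthogonalGroup_iff _ _).mpr
        (Stab8.F_orth e S.1 (SymplecticGroup.mem_iff.mp S.2))⟩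
      map_one' := Subtype.ext (Stab8.F_one e)
      map_mul' := fun S S' => Subtype.ext (Stab8.F_mul e S.1 S'.1) }
  have hf : Function.Injective f := by
    intro S S' h
    have h1 : Stab8.F e S.1 = Stab8.F e S'.1 := congrArg Subtype.val h
    have h2 : Stab8.D S.1 = Stab8.D S'.1 := by
      rw [← Stab8.WFQ e, ← Stab8.WFQ e, h1]
    exact Subtype.ext (Matrix.fromBlocks_inj.mp h2).1
  refine ⟨f.range, ?_, ⟨(MonoidHom.ofInjective hf).symm⟩⟩
  ext L
  constructor
  · rintro ⟨S, rfl⟩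
    change Stab8.F e S.1 *ᵥ c = c
    rw [hc']
    exact Stab8.F_c e S.1
  · intro hL
    change L.1 *ᵥ c = c at hL
    rw [hc'] at hL
    obtain ⟨S, hS, hSL⟩ := Stab8.F_surj e L.1 ((Matrix.mem_orthogonalGroup_iff _ _).mp L.2) hL
    exact ⟨⟨S, SymplecticGroup.mem_iff.mpr hS⟩, Subtype.ext hSL⟩
end

section
/- Let r ≥ 1 and m = 2r. Let U₁ = diag(I_{2r−2}, [[1,0],[1,−1]]) and U₂ = diag(I_{2r−2}, [[−1,0],[−1,1]]) in GL(2r, ℂ). Then there is no M ∈ GL(2r, ℂ) such that M commutes with A_i and B_i for all 1 ≤ i ≤ r, M commutes with C_j for all 1 ≤ j ≤ r − 1, and M U₂ M⁻¹ = U₁. -/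
/-- `U₁ = diag(I_{2r-2}, [[1,0],[1,-1]])` as a `2r × 2r` complex matrix. -/
def U1mat (r : ℕ) : Matrix (Fin (2 * r)) (Fin (2 * r)) ℂ :=
  Matrix.of fun p q =>
    if p = q then (if (p : ℕ) = 2 * r - 1 then -1 else 1)
    else if (p : ℕ) = 2 * r - 1 ∧ (q : ℕ) = 2 * r - 2 then 1 else 0

/-- `U₂ = diag(I_{2r-2}, [[-1,0],[-1,1]])` as a `2r × 2r` complex matrix. -/
def U2mat (r : ℕ) : Matrix (Fin (2 * r)) (Fin (2 * r)) ℂ :=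
  Matrix.of fun p q =>
    if p = q then (if (p : ℕ) = 2 * r - 2 then -1 else 1)
    else if (p : ℕ) = 2 * r - 1 ∧ (q : ℕ) = 2 * r - 2 then -1 else 0

/-- There is no invertible `M` commuting with all `A_i, B_i` (`1 ≤ i ≤ r`) and
`C_j` (`1 ≤ j ≤ r-1`) with `M U₂ M⁻¹ = U₁`. -/
theorem stmt_10 (r : ℕ) (hr : 1 ≤ r) :
    ¬ ∃ M : Matrix (Fin (2 * r)) (Fin (2 * r)) ℂ, IsUnit M ∧
      (∀ i, 1 ≤ i → i ≤ r →
        M * Amat (2 * r) i = Amat (2 * r) i * M ∧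
        M * Bmat (2 * r) i = Bmat (2 * r) i * M) ∧
      (∀ j, 1 ≤ j → j ≤ r - 1 → M * Cmat (2 * r) j = Cmat (2 * r) j * M) ∧
      M * U2mat r * M⁻¹ = U1mat r := by
  rintro ⟨M, hM, hAB, -, hU⟩
  obtain ⟨hA, hB⟩ := hAB r hr le_rfl
  have hdet : IsUnit M.det := (Matrix.isUnit_iff_isUnit_det M).1 hM
  have hU' : M * U2mat r = U1mat r * M := by
    rw [← hU, Matrix.mul_assoc, Matrix.nonsing_inv_mul M hdet, Matrix.mul_one]
  let a : Fin (2 * r) := ⟨2 * r - 2, by omega⟩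
  let b : Fin (2 * r) := ⟨2 * r - 1, by omega⟩
  have hab : a ≠ b := by
    intro h
    have := congrArg Fin.val h
    simp only [a, b] at this
    omega
  have ea : ∀ p : Fin (2 * r), (p : ℕ) = 2 * r - 2 ↔ a = p := by
    intro p; rw [Fin.ext_iff]; exact eq_comm
  have eb : ∀ p : Fin (2 * r), (p : ℕ) = 2 * r - 1 ↔ b = p := by
    intro p; rw [Fin.ext_iff]; exact eq_comm
  have eA : Amat (2 * r) r = 1 + Matrix.single a b 1 := by
    ext p q
    simp only [Amat, Matrix.of_apply, ea, eb, Matrix.add_apply, Matrix.one_apply, Matrix.single_apply]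
    split_ifs <;> grind
  have eB : Bmat (2 * r) r = 1 + Matrix.single b a (-1) := by
    ext p q
    simp only [Bmat, Matrix.of_apply, ea, eb, Matrix.add_apply, Matrix.one_apply, Matrix.single_apply]
    split_ifs <;> grind
  have eU2 : U2mat r = 1 + Matrix.single a a (-2) + Matrix.single b a (-1) := by
    ext p q
    simp only [U2mat, Matrix.of_apply, ea, eb, Matrix.add_apply, Matrix.one_apply, Matrix.single_apply]
    split_ifs <;> grind
  have eU1 : U1mat r = 1 + Matrix.single b b (-2) + Matrix.single b a 1 := by
    ext p q
    simp only [U1mat, Matrix.of_apply, ea, eb, Matrix.add_apply, Matrix.one_apply, Matrix.single_apply]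
    split_ifs <;> grind
  rw [eA, mul_add, add_mul, mul_one, one_mul, add_right_inj] at hA
  rw [eB, mul_add, add_mul, mul_one, one_mul, add_right_inj] at hB
  rw [eU2, eU1] at hU'
  have h1 : ∀ p, p ≠ a → M p a = 0 := by
    intro p hp
    have := congrFun (congrFun hA p) b
    simpa [hp] using this
  have h2 : M a b = 0 := by
    have := congrFun (congrFun hB b) b
    simpa [hab, hab.symm] using this.symm
  have h3 : M a a = 0 := by
    have := congrFun (congrFun hU' a) a
    simp [mul_add, add_mul, hab, hab.symm, h2] at this
    exact this
  refine hdet.ne_zero (Matrix.det_eq_zero_of_column_eq_zero a fun p => ?_)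
  by_cases hp : p = a
  · rw [hp, h3]
  · exact h1 p hp
end

section
/- Let r ≥ 4. Then every group homomorphism from the symplectic group Sp(2r, ℤ/2) to GL(2r + 1, ℂ) is trivial, i.e., sends every element to the identity matrix. -/
namespace SpTriv

open Matrix

/-- The space on which the symplectic group acts. -/
abbrev W (r : ℕ) := Fin r ⊕ Fin r → ZMod 2

abbrev Sp (r : ℕ) := Matrix.symplecticGroup (Fin r) (ZMod 2)

/-- The symplectic form. -/
def om {r : ℕ} (x y : W r) : ZMod 2 := x ⬝ᵥ (Matrix.J (Fin r) (ZMod 2) *ᵥ y)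

variable {r : ℕ}

lemma om_eq (x y : W r) :
    om x y = ∑ i, (x (Sum.inl i) * y (Sum.inr i) + x (Sum.inr i) * y (Sum.inl i)) := by
  have hneg : (-1 : Matrix (Fin r) (Fin r) (ZMod 2)) = 1 := by
    ext i j
    simp
  unfold om
  rw [Matrix.J, hneg, Matrix.fromBlocks_mulVec]
  simp [dotProduct, Finset.sum_add_distrib]

lemma om_add_left (x y z : W r) : om (x + y) z = om x z + om y z := by
  simp [om]

lemma om_add_right (x y z : W r) : om x (y + z) = om x y + om x z := by
  simp [om, Matrix.mulVec_add]

lemma om_smul_left (c : ZMod 2) (x y : W r) : om (c • x) y = c * om x y := by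
  simp [om]

lemma om_smul_right (c : ZMod 2) (x y : W r) : om x (c • y) = c * om x y := by
  simp [om, Matrix.mulVec_smul]

lemma om_self (x : W r) : om x x = 0 := by
  rw [om_eq]
  apply Finset.sum_eq_zero
  intro i _
  rw [mul_comm (x (Sum.inr i))]
  exact CharTwo.add_self_eq_zero _

lemma om_comm (x y : W r) : om x y = om y x := by
  rw [om_eq, om_eq]
  apply Finset.sum_congr rfl
  intro i _
  ring

lemma om_zero_right (x : W r) : om x 0 = 0 := by simp [om]
lemma om_zero_left (x : W r) : om 0 x = 0 := by simp [om]

lemma om_single_inl (i : Fin r) (x : W r) : om (Pi.single (Sum.inl i) 1) x = x (Sum.inr i) := by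
  rw [om_eq]; simp [Pi.single_apply]

lemma om_single_inr (i : Fin r) (x : W r) : om (Pi.single (Sum.inr i) 1) x = x (Sum.inl i) := by
  rw [om_eq]; simp [Pi.single_apply]

lemma z2 (c : ZMod 2) : c = 0 ∨ c = 1 := by
  revert c; decide

lemma om_nondeg (x : W r) (hx : x ≠ 0) : ∃ y, om y x = 1 := by
  by_contra! h
  apply hx
  have h' : ∀ y, om y x = 0 := fun y => (z2 _).resolve_right (h y)
  ext i
  rcases i with i | i
  · rw [← om_single_inr i x, h']; rfl
  · rw [← om_single_inl i x, h']; rfl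

lemma add_self (x : W r) : x + x = 0 := by
  ext i
  exact CharTwo.add_self_eq_zero _

lemma om_ext {A B : Matrix (Fin r ⊕ Fin r) (Fin r ⊕ Fin r) (ZMod 2)}
    (h : ∀ x y, x ⬝ᵥ (A *ᵥ y) = x ⬝ᵥ (B *ᵥ y)) : A = B := by
  ext i j
  simpa using h (Pi.single i 1) (Pi.single j 1)

lemma om_mulVec (A : Matrix (Fin r ⊕ Fin r) (Fin r ⊕ Fin r) (ZMod 2)) (x y : W r) :
    om (A *ᵥ x) (A *ᵥ y) = x ⬝ᵥ ((Aᵀ * Matrix.J (Fin r) (ZMod 2) * A) *ᵥ y) := by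
  unfold om
  rw [← Matrix.mulVec_mulVec, ← Matrix.mulVec_mulVec, Matrix.dotProduct_mulVec x Aᵀ,
    Matrix.vecMul_transpose]

lemma mem_of_om (A : Matrix (Fin r ⊕ Fin r) (Fin r ⊕ Fin r) (ZMod 2))
    (h : ∀ x y, om (A *ᵥ x) (A *ᵥ y) = om x y) : A ∈ Matrix.symplecticGroup (Fin r) (ZMod 2) := by
  rw [SymplecticGroup.mem_iff']
  apply om_ext
  intro x y
  rw [← om_mulVec, h]; rfl

lemma om_act (g : Sp r) (x y : W r) : om (g.1 *ᵥ x) (g.1 *ᵥ y) = om x y := by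
  rw [om_mulVec, SymplecticGroup.mem_iff'.1 g.2]; rfl

lemma Sp_ext {g h : Sp r} (H : ∀ x : W r, g.1 *ᵥ x = h.1 *ᵥ x) : g = h := by
  apply Subtype.ext
  apply om_ext
  intro x y
  rw [H]

lemma mul_act (g h : Sp r) (x : W r) : (g * h).1 *ᵥ x = g.1 *ᵥ (h.1 *ᵥ x) := by
  simp

/-- The transvection matrix. -/
def tm (v : W r) : Matrix (Fin r ⊕ Fin r) (Fin r ⊕ Fin r) (ZMod 2) :=
  1 + Matrix.vecMulVec v (Matrix.J (Fin r) (ZMod 2) *ᵥ v)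

lemma tm_mulVec (v x : W r) : tm v *ᵥ x = x + om x v • v := by
  unfold tm om
  rw [Matrix.add_mulVec, Matrix.one_mulVec, Matrix.vecMulVec_mulVec, dotProduct_comm]
  simp

/-- The transvection. -/
def T (v : W r) : Sp r := ⟨tm v, mem_of_om _ (by
  intro x y
  simp only [tm_mulVec, om_add_left, om_add_right, om_smul_left, om_smul_right, om_self]
  rw [om_comm v y]
  have := CharTwo.add_self_eq_zero (om x v * om y v)
  linear_combination this)⟩

lemma T_act (v x : W r) : (T v).1 *ᵥ x = x + om x v • v := tm_mulVec v x

lemma T_zero : T (0 : W r) = 1 := by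
  apply Sp_ext; intro x; rw [T_act]; simp

lemma T_sq (v : W r) : T v * T v = 1 := by
  apply Sp_ext; intro x
  rw [mul_act, T_act, T_act]
  simp only [om_add_left, om_smul_left, om_self]
  rcases z2 (om x v) with h | h <;> simp [h, add_assoc, add_self]

lemma mul_T (g : Sp r) (v : W r) : g * T v = T (g.1 *ᵥ v) * g := by
  apply Sp_ext; intro x
  rw [mul_act, mul_act, T_act, T_act, om_act, Matrix.mulVec_add, Matrix.mulVec_smul]

/-- A homomorphism killing all transvections is trivial. -/
lemma generation {G : Type*} [Group G] (f : Sp r →* G) (hf : ∀ v, f (T v) = 1) :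
    ∀ g, f g = 1 := by
  classical
  have main : ∀ n : ℕ, ∀ g : Sp r,
      (Finset.univ.filter (fun x : W r => g.1 *ᵥ x ≠ x)).card = n → f g = 1 := by
    intro n
    induction n using Nat.strong_induction_on with
    | _ n ih =>
      intro g hn
      by_cases h1 : ∀ x : W r, g.1 *ᵥ x = x
      · have : g = 1 := by
          apply Sp_ext; intro x; rw [h1]; simp
        rw [this, map_one]
      push Not at h1
      -- a general reduction step
      have step : ∀ k : Sp r, f k = f g → (∀ x : W r, g.1 *ᵥ x = x → k.1 *ᵥ x = x) →
          (∃ x : W r, g.1 *ᵥ x ≠ x ∧ om x (k.1 *ᵥ x) = 1) → f g = 1 := by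
        rintro k hk hfix ⟨x, hx, hxk⟩
        set u := k.1 *ᵥ x + x with hu
        have e1 : f (T u * k) = f g := by rw [map_mul, hf, one_mul, hk]
        rw [← e1]
        apply ih _ _ _ rfl
        rw [← hn]
        apply Finset.card_lt_card
        rw [Finset.ssubset_iff_of_subset]
        · refine ⟨x, by simpa using hx, ?_⟩
          simp only [Finset.mem_filter, Finset.mem_univ, true_and, not_not]
          rw [mul_act, T_act, hu, om_add_right, om_self, om_comm, hxk, zero_add, one_smul,
            ← add_assoc, add_self, zero_add]
        · intro y
          simp only [Finset.mem_filter, Finset.mem_univ, true_and]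
          contrapose!
          intro hy
          have hy' := hfix y hy
          rw [mul_act, T_act, hy']
          have : om y u = 0 := by
            rw [hu, om_add_right]
            have : om y (k.1 *ᵥ x) = om y x := by
              conv_lhs => rw [← hy']
              rw [om_act]
            rw [this]; exact CharTwo.add_self_eq_zero _
          rw [this]; simp
      by_cases h2 : ∃ x : W r, g.1 *ᵥ x ≠ x ∧ om x (g.1 *ᵥ x) = 1
      · exact step g rfl (fun _ h => h) h2
      have h3 : ∀ x : W r, om x (g.1 *ᵥ x) = 0 := by
        intro x
        rcases z2 (om x (g.1 *ᵥ x)) with h | h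
        · exact h
        · exfalso
          apply h2
          refine ⟨x, ?_, h⟩
          intro h'
          rw [h', om_self] at h
          exact absurd h (by decide)
      obtain ⟨x, hx⟩ := h1
      obtain ⟨y, hy⟩ := om_nondeg (g.1 *ᵥ x + x) (by
        intro h
        apply hx
        have := congrArg (· + x) h
        simpa [add_assoc, add_self] using this)
      have pol : om x (g.1 *ᵥ y) = om y (g.1 *ᵥ x) := by
        have := h3 (x + y)
        rw [Matrix.mulVec_add, om_add_left, om_add_right, om_add_right, h3, h3, zero_add,
          add_zero] at this
        exact CharTwo.add_eq_zero.1 this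
      set u := g.1 *ᵥ y + y with hu
      rw [om_add_right] at hy
      apply step (T u * g)
      · rw [map_mul, hf, one_mul]
      · intro z hz
        rw [mul_act, T_act, hz]
        have : om z u = 0 := by
          rw [hu, om_add_right]
          have : om z (g.1 *ᵥ y) = om z y := by
            conv_lhs => rw [← hz]
            rw [om_act]
          rw [this]; exact CharTwo.add_self_eq_zero _
        rw [this]; simp
      · refine ⟨x, hx, ?_⟩
        have a1 : om x u = 1 := by
          rw [hu, om_add_right, pol, om_comm x y, hy]
        have a2 : om (g.1 *ᵥ x) u = 1 := by
          rw [hu, om_add_right, om_act, om_comm x y, om_comm _ y, add_comm, hy]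
        rw [mul_act, T_act, om_add_right, h3, om_smul_right, a1, a2]
        simp
  intro g
  exact main _ g rfl

lemma T_of_om_one {G : Type*} [Group G] (f : Sp r →* G) {u w : W r} (h : om u w = 1)
    (hu : f (T u) = 1) : f (T w) = 1 := by
  have h1 := mul_T (T (u + w)) u
  have h2 : (T (u + w)).1 *ᵥ u = w := by
    rw [T_act, om_add_right, om_self, h, zero_add, one_smul, ← add_assoc, add_self, zero_add]
  rw [h2] at h1
  have h3 := congrArg f h1
  rw [map_mul, map_mul, hu, mul_one] at h3
  exact (right_eq_mul.1 h3)

lemma T_all {G : Type*} [Group G] (f : Sp r →* G) {u : W r} (hu0 : u ≠ 0)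
    (hu : f (T u) = 1) (w : W r) : f (T w) = 1 := by
  by_cases hw : w = 0
  · rw [hw, T_zero, map_one]
  obtain ⟨a, ha⟩ := om_nondeg u hu0
  obtain ⟨b, hb⟩ := om_nondeg w hw
  have : ∃ z, om u z = 1 ∧ om z w = 1 := by
    rcases z2 (om a w) with h1 | h1
    · rcases z2 (om b u) with h2 | h2
      · refine ⟨a + b, ?_, ?_⟩
        · rw [om_comm, om_add_left, ha, h2, add_zero]
        · rw [om_add_left, h1, hb, zero_add]
      · exact ⟨b, by rw [om_comm, h2], hb⟩
    · exact ⟨a, by rw [om_comm, ha], h1⟩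
  obtain ⟨z, hz1, hz2⟩ := this
  exact T_of_om_one f hz2 (T_of_om_one f hz1 hu)

/-- elements of the unipotent radical of the stabilizer of `e`. -/
def hh (e y : W r) : Sp r := T y * T (y + e)

lemma hh_act {e y : W r} (hy : om y e = 0) (x : W r) :
    (hh e y).1 *ᵥ x = x + om x y • e + om x e • (y + e) := by
  unfold hh
  rw [mul_act, T_act, T_act]
  simp only [om_add_left, om_smul_left, om_add_right, om_self, om_comm e y, hy]
  rcases z2 (om x y) with h | h <;> rcases z2 (om x e) with h' | h' <;> simp [h, h']
  · abel_nf
    simp [two_smul, add_self]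
  · have : (1 : ZMod 2) + 1 = 0 := by decide
    have h2 := add_self y
    have h3 := add_self e
    rw [this]
    simp only [zero_smul, add_zero, zero_add]
    calc x + y = x + y + 0 := by rw [add_zero]
      _ = x + y + (e + e) := by rw [h3]
      _ = x + e + (y + e) := by abel

/-- sign cocycle -/
def s (c : ZMod 2) : ℂ := if c = 0 then -1 else 1

lemma hh_mul_zero {e y z : W r} (hy : om y e = 0) (hz : om z e = 0) (h : om y z = 0) :
    hh e y * hh e z = T e * hh e (y + z) := by
  have hyz : om (y + z) e = 0 := by rw [om_add_left, hy, hz, add_zero]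
  apply Sp_ext; intro x
  rw [mul_act, mul_act, hh_act hy, hh_act hz, hh_act hyz, T_act]
  simp only [om_add_left, om_smul_left, om_add_right, om_self, om_comm e y, hy, hz, om_comm z y, h]
  rcases z2 (om x y) with h1 | h1 <;> rcases z2 (om x e) with h' | h' <;>
    rcases z2 (om x z) with h2 | h2 <;> simp [h1, h', h2] <;> (ext i; simp; grind)

lemma hh_mul_one {e y z : W r} (hy : om y e = 0) (hz : om z e = 0) (h : om y z = 1) :
    hh e y * hh e z = hh e (y + z) := by
  have hyz : om (y + z) e = 0 := by rw [om_add_left, hy, hz, add_zero]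
  apply Sp_ext; intro x
  rw [mul_act, hh_act hy, hh_act hz, hh_act hyz]
  simp only [om_add_left, om_smul_left, om_add_right, om_self, om_comm e y, hy, hz, om_comm z y, h]
  rcases z2 (om x y) with h1 | h1 <;> rcases z2 (om x e) with h' | h' <;>
    rcases z2 (om x z) with h2 | h2 <;> simp [h1, h', h2] <;> (ext i; simp; grind)

lemma hh_comm {e y z : W r} (hy : om y e = 0) (hz : om z e = 0) :
    hh e y * hh e z = hh e z * hh e y := by
  rcases z2 (om y z) with h | h
  · rw [hh_mul_zero hy hz h, hh_mul_zero hz hy (by rw [om_comm, h]), add_comm y z]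
  · rw [hh_mul_one hy hz h, hh_mul_one hz hy (by rw [om_comm, h]), add_comm y z]

lemma hh_zero (e : W r) : hh e 0 = T e := by
  unfold hh; rw [T_zero, one_mul, zero_add]

lemma hh_sq {e y : W r} (hy : om y e = 0) : hh e y * hh e y = 1 := by
  rw [hh_mul_zero hy hy (om_self y), add_self, hh_zero, T_sq]

lemma T_hh {e a y : W r} (ha : om a e = 0) :
    hh e y * T a = T a * hh e (y + om y a • a) := by
  have h1 : ∀ y, T y * T a = T a * T (y + om y a • a) := by
    intro y
    rw [mul_T (T a), T_act]
    congr 2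
    rw [om_add_left, om_smul_left, om_self, mul_zero, add_zero, add_assoc, add_self, add_zero]
  unfold hh
  rw [mul_assoc, h1, ← mul_assoc, h1, mul_assoc, om_add_left, om_comm e a, ha, add_zero]
  congr 3
  abel

section rep

variable {V : Type*} [AddCommGroup V] [Module ℂ V] (R : Sp r →* Module.End ℂ V)

lemma exists_weight (e : W r) (hne : R (T e) ≠ 1) :
    ∃ v : V, v ≠ 0 ∧ R (T e) v = -v ∧
      ∃ χ : W r → ℂ, ∀ y, om y e = 0 → (χ y = 1 ∨ χ y = -1) ∧ R (hh e y) v = χ y • v := by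
  classical
  have base : ∃ v : V, v ≠ 0 ∧ R (T e) v = -v := by
    by_contra! h
    apply hne
    ext w
    have h1 := h (R (T e) w - w)
    by_contra hw
    apply h1
    · intro h0
      exact hw (by simpa using sub_eq_zero.1 h0)
    · rw [map_sub, ← Module.End.mul_apply, ← map_mul, T_sq, map_one, Module.End.one_apply, neg_sub]
  have main : ∀ S : Finset (W r), (∀ y ∈ S, om y e = 0) → ∃ v : V, v ≠ 0 ∧ R (T e) v = -v ∧
      ∀ y ∈ S, ∃ c : ℂ, (c = 1 ∨ c = -1) ∧ R (hh e y) v = c • v := by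
    intro S
    induction S using Finset.induction_on with
    | empty =>
      intro _
      obtain ⟨v, h1, h2⟩ := base
      exact ⟨v, h1, h2, by simp⟩
    | insert z S hz ih =>
      intro hS
      have hze : om z e = 0 := hS z (by simp)
      obtain ⟨v, h1, h2, h3⟩ := ih (fun y hy => hS y (by simp [hy]))
      by_cases hv : v + R (hh e z) v = 0
      · refine ⟨v, h1, h2, ?_⟩
        intro y hy
        rcases Finset.mem_insert.1 hy with rfl | hy
        · refine ⟨-1, Or.inr rfl, ?_⟩
          rw [neg_one_smul]
          exact (neg_eq_of_add_eq_zero_right hv).symm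
        · exact h3 y hy
      · have comm : ∀ y, om y e = 0 → ∀ w, R (hh e y) (R (hh e z) w) = R (hh e z) (R (hh e y) w) := by
          intro y hy w
          rw [← Module.End.mul_apply, ← map_mul, hh_comm hy hze, map_mul, Module.End.mul_apply]
        refine ⟨v + R (hh e z) v, hv, ?_, ?_⟩
        · have := comm 0 (om_zero_left e) v
          rw [hh_zero] at this
          rw [map_add, this, h2, map_neg]
          abel
        · intro y hy
          rcases Finset.mem_insert.1 hy with rfl | hy
          · refine ⟨1, Or.inl rfl, ?_⟩
            rw [map_add, ← Module.End.mul_apply, ← map_mul, hh_sq hze, map_one,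
              Module.End.one_apply, one_smul, add_comm]
          · obtain ⟨c, hc, hcv⟩ := h3 y hy
            refine ⟨c, hc, ?_⟩
            rw [map_add, comm y (hS y (by simp [hy])), hcv, map_smul, smul_add]
  obtain ⟨v, h1, h2, h3⟩ := main (Finset.univ.filter (fun y => om y e = 0)) (by simp)
  refine ⟨v, h1, h2, ?_⟩
  have h4 : ∀ y : W r, ∃ c : ℂ, om y e = 0 → (c = 1 ∨ c = -1) ∧ R (hh e y) v = c • v := by
    intro y
    by_cases hy : om y e = 0
    · obtain ⟨c, hc⟩ := h3 y (by simp [hy])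
      exact ⟨c, fun _ => hc⟩
    · exact ⟨0, fun h => absurd h hy⟩
  choose χ hχ using h4
  exact ⟨χ, hχ⟩

lemma key [FiniteDimensional ℂ V] (e a b : W r) (hae : om a e = 0) (hbe : om b e = 0)
    (hab : om a b = 1) {Y : Type*} [Fintype Y] (u : Y → W r) (hu : ∀ y, om (u y) e = 0)
    (hsep : ∀ y y', y ≠ y' → ∃ z, om z e = 0 ∧ om z a = 0 ∧ om z b = 0 ∧
      om z (u y) ≠ om z (u y')) (hcard : Module.finrank ℂ V < Fintype.card Y) :
    R (T e) = 1 := by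
  by_contra hne
  obtain ⟨v, hv0, hve, χ, hχ⟩ := exists_weight R e hne
  have rel : ∀ y z, om y e = 0 → om z e = 0 → χ y * χ z = s (om y z) * χ (y + z) := by
    intro y z hy hz
    have hyz : om (y + z) e = 0 := by rw [om_add_left, hy, hz, add_zero]
    have e1 : R (hh e y * hh e z) v = (χ y * χ z) • v := by
      rw [map_mul, Module.End.mul_apply, (hχ z hz).2, map_smul, (hχ y hy).2, smul_smul, mul_comm]
    have e2 : R (hh e y * hh e z) v = (s (om y z) * χ (y + z)) • v := by
      rcases z2 (om y z) with h | h
      · rw [hh_mul_zero hy hz h, h, map_mul, Module.End.mul_apply, (hχ _ hyz).2, map_smul, hve]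
        simp [s]
      · rw [hh_mul_one hy hz h, h, (hχ _ hyz).2]
        simp [s]
    exact smul_left_injective ℂ hv0 (e1.symm.trans e2)
  have zeros : ∀ y, om y e = 0 → ∃ α, om α e = 0 ∧ χ α = -1 ∧
      ∀ z, om z a = 0 → om z b = 0 → om z α = om z y := by
    intro y hy
    by_contra! hcon
    have P : ∀ α, om α e = 0 → (∀ z, om z a = 0 → om z b = 0 → om z α = om z y) → χ α = 1 := by
      intro α h1 h2
      rcases (hχ α h1).1 with h | h
      · exact h
      · obtain ⟨z, hz1, hz2, hz3⟩ := hcon α h1 h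
        exact absurd (h2 z hz1 hz2) hz3
    have hya : om (y + a) e = 0 := by rw [om_add_left, hy, hae, add_zero]
    have c1 := P y hy (fun _ _ _ => rfl)
    have c2 := P (y + a) hya (fun z h1 h2 => by rw [om_add_right, h1, add_zero])
    have c3 := P (y + b) (by rw [om_add_left, hy, hbe, add_zero])
      (fun z h1 h2 => by rw [om_add_right, h2, add_zero])
    have c4 := P (y + a + b) (by rw [om_add_left, hya, hbe, add_zero])
      (fun z h1 h2 => by rw [om_add_right, om_add_right, h1, h2, add_zero, add_zero])
    have r1 := rel y b hy hbe
    have r2 := rel (y + a) b hya hbe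
    rw [c1, c3] at r1
    rw [c2, c4, ← c1, c1, r1, om_add_left, hab] at r2
    rcases z2 (om y b) with h | h
    · rw [h] at r2
      simp [s] at r2
      norm_num at r2
    · rw [h] at r2
      have h11 : (1 : ZMod 2) + 1 = 0 := by decide
      rw [h11] at r2
      simp [s] at r2
      norm_num at r2
  choose α hα1 hα2 hα3 using fun y => zeros (u y) (hu y)
  -- weights
  let ι := {y : W r // om y e = 0}
  let F : ι → Module.End ℂ V := fun y => R (hh e y.1)
  let wt : Y → ι → ℂ := fun i y => - s (om y.1 (α i)) * χ y.1
  have hwt : ∀ i (y : ι), F y (R (T (α i)) v) = wt i y • R (T (α i)) v := by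
    rintro i ⟨y, hy⟩
    change R (hh e y) (R (T (α i)) v) = (- s (om y (α i)) * χ y) • R (T (α i)) v
    rw [← Module.End.mul_apply, ← map_mul, T_hh (hα1 i), map_mul, Module.End.mul_apply]
    rcases z2 (om y (α i)) with h | h
    · rw [h, zero_smul, add_zero, (hχ y hy).2, map_smul]
      simp [s]
    · have := rel y (α i) hy (hα1 i)
      rw [h, hα2] at this
      rw [h, one_smul, (hχ (y + α i) (by rw [om_add_left, hy, hα1, add_zero])).2, map_smul]
      congr 1
      simp only [s, one_ne_zero, if_false] at this ⊢
      linear_combination -this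
  have hinj : Function.Injective wt := by
    intro i j hij
    by_contra hne
    obtain ⟨z, hz, hza, hzb, hzz⟩ := hsep i j hne
    have h1 := congrFun hij ⟨z, hz⟩
    change - s (om z (α i)) * χ z = - s (om z (α j)) * χ z at h1
    rw [hα3 i z hza hzb, hα3 j z hza hzb] at h1
    have hχ0 : χ z ≠ 0 := by
      rcases (hχ z hz).1 with h | h <;> rw [h] <;> norm_num
    have h2 := neg_injective (mul_right_cancel₀ hχ0 h1)
    rcases z2 (om z (u i)) with h | h <;> rcases z2 (om z (u j)) with h' | h' <;>
      rw [h, h'] at h2 hzz <;> simp [s] at h2 hzz <;> norm_num at h2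
  have indep := Module.End.independent_iInf_maxGenEigenspace_of_forall_mapsTo F (by
    intro i j φ
    apply Module.End.mapsTo_maxGenEigenspace_of_comm
    change R _ * R _ = R _ * R _
    rw [← map_mul, ← map_mul, hh_comm j.2 i.2])
  have indep2 := indep.comp hinj
  have hT0 : ∀ i, R (T (α i)) v ≠ 0 := by
    intro i h
    apply hv0
    have := congrArg (R (T (α i))) h
    rwa [← Module.End.mul_apply, ← map_mul, T_sq, map_one, map_zero] at this
  have li : LinearIndependent ℂ (fun i => R (T (α i)) v) := by
    apply indep2.linearIndependent _ _ hT0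
    intro i
    simp only [Function.comp, Submodule.mem_iInf]
    intro y
    apply Module.End.mem_maxGenEigenspace _ _ _ |>.2
    refine ⟨1, ?_⟩
    rw [pow_one, LinearMap.sub_apply, hwt]
    simp
  have := li.fintype_card_le_finrank
  omega

end rep

lemma card_ineq (k : ℕ) (hk : 2 ≤ k) : 2 * (k + 2) + 1 < 2 ^ (k + k) := by
  induction k, hk using Nat.le_induction with
  | base => norm_num
  | succ n hn ih =>
    have : 2 ^ (n + 1 + (n + 1)) = 4 * 2 ^ (n + n) := by ring
    omega

end SpTriv

open SpTriv in
/-- Remark 8.4: for `r ≥ 4`, every homomorphism from the symplectic group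
`Sp(2r, ℤ/2)` to `GL(2r+1, ℂ)` is trivial. -/
theorem stmt_15 (r : ℕ) (hr : 4 ≤ r)
    (f : Matrix.symplecticGroup (Fin r) (ZMod 2) →* GL (Fin (2 * r + 1)) ℂ) :
    ∀ x, f x = 1 := by
  obtain ⟨k, rfl⟩ : ∃ k, r = k + 2 := ⟨r - 2, by omega⟩
  apply generation f
  have he0 : (Pi.single (Sum.inl 0) 1 : W (k + 2)) ≠ 0 := by simp
  apply T_all f he0
  let Φ : Matrix (Fin (2 * (k + 2) + 1)) (Fin (2 * (k + 2) + 1)) ℂ →*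
      Module.End ℂ (Fin (2 * (k + 2) + 1) → ℂ) :=
    (Matrix.toLinAlgEquiv' (R := ℂ) (n := Fin (2 * (k + 2) + 1))).toAlgHom
  let R : Sp (k + 2) →* Module.End ℂ (Fin (2 * (k + 2) + 1) → ℂ) :=
    Φ.comp ((Units.coeHom _).comp f)
  let u : (Fin k ⊕ Fin k → ZMod 2) → W (k + 2) := fun y =>
    Sum.elim (fun i => Fin.cases 0 (fun j => Fin.cases 0 (fun l => y (Sum.inl l)) j) i)
      (fun i => Fin.cases 0 (fun j => Fin.cases 0 (fun l => y (Sum.inr l)) j) i)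
  have hkey := key R (Pi.single (Sum.inl 0) 1) (Pi.single (Sum.inl 1) 1) (Pi.single (Sum.inr 1) 1)
    (by rw [om_single_inl]; simp) (by rw [om_single_inr]; simp)
    (by rw [om_single_inl]; simp) u
    (by intro y; rw [om_comm, om_single_inl]; rfl)
    (by
      intro y y' hne
      obtain ⟨i, hi⟩ := Function.ne_iff.1 hne
      rcases i with i | i
      · refine ⟨Pi.single (Sum.inr i.succ.succ) 1, ?_, ?_, ?_, ?_⟩
        · rw [om_single_inr]; simp [Pi.single_apply, Fin.ext_iff]
        · rw [om_single_inr]; simp [Pi.single_apply, Fin.ext_iff]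
        · rw [om_single_inr]; simp [Pi.single_apply]
        · rw [om_single_inr, om_single_inr]; exact hi
      · refine ⟨Pi.single (Sum.inl i.succ.succ) 1, ?_, ?_, ?_, ?_⟩
        · rw [om_single_inl]; simp [Pi.single_apply]
        · rw [om_single_inl]; simp [Pi.single_apply]
        · rw [om_single_inl]; simp [Pi.single_apply, Fin.ext_iff]
        · rw [om_single_inl, om_single_inl]; exact hi)
    (by
      have := card_ineq k (by omega)
      simpa using this)
  apply Units.ext
  apply (Matrix.toLinAlgEquiv' (R := ℂ) (n := Fin (2 * (k + 2) + 1))).injective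
  rw [Units.val_one, map_one]
  exact hkey
end
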